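/- There exist positive numerical constants ρ_r′, ρ_s′, and c′ such that the following holds. Under the observation model with incoherence parameter ν, if r ≤ ρ_r′ · n2 · ν⁻¹ · (log n1)⁻² and m ≤ ρ_s′ · n1 · n2, then with probability at least 1 − c′·n1^{−10} over the random support Ω and the random signs, the following event occurs: for every δ ≥ 0 and every noise matrix Z0 with ‖Z0‖_F ≥ δ, every minimizer (L̂, Ŝ) of StablePCP_c(δ) with λ = 1/√n1 and data D = L0 + S0 + Z0 satisfies ‖(L̂, Ŝ) − (L0, S0)‖_F ≤ √(720·n1·n2 + 2) · ‖Z0‖_F. -/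

import Mathlib

open Matrix
open scoped BigOperators

/-- Frobenius norm of a real matrix. -/
noncomputable def frob {n1 n2 : ℕ} (A : Matrix (Fin n1) (Fin n2) ℝ) : ℝ :=
  Real.sqrt (∑ i, ∑ j, A i j ^ 2)

/-- Entrywise ℓ¹ norm. -/
noncomputable def l1norm {n1 n2 : ℕ} (A : Matrix (Fin n1) (Fin n2) ℝ) : ℝ :=
  ∑ i, ∑ j, |A i j|

/-- Trace inner product ⟨A,B⟩ = trace(AᵀB). -/
noncomputable def minner {n1 n2 : ℕ} (A B : Matrix (Fin n1) (Fin n2) ℝ) : ℝ :=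
  ∑ i, ∑ j, A i j * B i j

/-- Spectral norm (largest singular value), as the ℓ²→ℓ² operator norm. -/
noncomputable def spec {n1 n2 : ℕ} (A : Matrix (Fin n1) (Fin n2) ℝ) : ℝ :=
  sSup {c : ℝ | ∃ x : Fin n2 → ℝ, (∑ j, x j ^ 2) ≤ 1 ∧
    c = Real.sqrt (∑ i, (∑ j, A i j * x j) ^ 2)}

/-- Nuclear norm (sum of singular values), via duality with the spectral norm. -/
noncomputable def nuc {n1 n2 : ℕ} (A : Matrix (Fin n1) (Fin n2) ℝ) : ℝ :=
  sSup {c : ℝ | ∃ B : Matrix (Fin n1) (Fin n2) ℝ, spec B ≤ 1 ∧ c = minner A B}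

/-- P_Ω: the matrix agreeing with `M` on `Ω` and zero off `Ω`. -/
noncomputable def projS {n1 n2 : ℕ} (Ω : Finset (Fin n1 × Fin n2))
    (M : Matrix (Fin n1) (Fin n2) ℝ) : Matrix (Fin n1) (Fin n2) ℝ :=
  Matrix.of fun i j => if (i, j) ∈ Ω then M i j else 0

/-- Entrywise sign matrix. -/
noncomputable def signM {n1 n2 : ℕ} (A : Matrix (Fin n1) (Fin n2) ℝ) :
    Matrix (Fin n1) (Fin n2) ℝ :=
  Matrix.of fun i j => Real.sign (A i j)

/-- The tangent space T = {UQᵀ + RVᵀ}. -/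
def memT {n1 n2 r : ℕ} (U : Matrix (Fin n1) (Fin r) ℝ) (V : Matrix (Fin n2) (Fin r) ℝ)
    (M : Matrix (Fin n1) (Fin n2) ℝ) : Prop :=
  ∃ (Q : Matrix (Fin n2) (Fin r) ℝ) (R : Matrix (Fin n1) (Fin r) ℝ), M = U * Qᵀ + R * Vᵀ

/-- Membership in T⊥, the orthogonal complement of the tangent space. -/
def memTperp {n1 n2 r : ℕ} (U : Matrix (Fin n1) (Fin r) ℝ) (V : Matrix (Fin n2) (Fin r) ℝ)
    (W : Matrix (Fin n1) (Fin n2) ℝ) : Prop :=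
  ∀ M, memT U V M → minner W M = 0

/-- (L̂, Ŝ) is a global minimizer of the √PCP objective
`‖L‖_* + λ‖S‖₁ + μ‖L + S − D‖_F`. -/
def IsRootPCPMin {n1 n2 : ℕ} (D : Matrix (Fin n1) (Fin n2) ℝ) (lam mu : ℝ)
    (Lh Sh : Matrix (Fin n1) (Fin n2) ℝ) : Prop :=
  ∀ L S : Matrix (Fin n1) (Fin n2) ℝ,
    nuc Lh + lam * l1norm Sh + mu * frob (Lh + Sh - D) ≤
      nuc L + lam * l1norm S + mu * frob (L + S - D)

/-- (L̂, Ŝ) is a minimizer of StablePCP_c(δ):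
minimize `‖L‖_* + λ‖S‖₁` subject to `‖L + S − D‖_F ≤ δ`. -/
def IsStablePCPMin {n1 n2 : ℕ} (D : Matrix (Fin n1) (Fin n2) ℝ) (lam δ : ℝ)
    (Lh Sh : Matrix (Fin n1) (Fin n2) ℝ) : Prop :=
  frob (Lh + Sh - D) ≤ δ ∧
    ∀ L S : Matrix (Fin n1) (Fin n2) ℝ, frob (L + S - D) ≤ δ →
      nuc Lh + lam * l1norm Sh ≤ nuc L + lam * l1norm S

/-- Frobenius distance between pairs: ‖(L,S) − (L',S')‖_F. -/
noncomputable def pairDist {n1 n2 : ℕ} (L S L' S' : Matrix (Fin n1) (Fin n2) ℝ) : ℝ :=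
  Real.sqrt (frob (L - L') ^ 2 + frob (S - S') ^ 2)

/-- Sample space of the random sparsity model: a uniformly random support of
cardinality m together with iid uniform random signs. -/
abbrev SampleSpace (n1 n2 m : ℕ) : Type :=
  {Ω : Finset (Fin n1 × Fin n2) // Ω.card = m} × ((Fin n1 × Fin n2) → Bool)

/-- The sparse matrix S0 built from fixed magnitudes `a` and a random sample:
S0 vanishes off Ω and equals ±a on Ω according to the random signs. -/
noncomputable def sparseOf {n1 n2 m : ℕ} (a : Fin n1 × Fin n2 → ℝ) (ω : SampleSpace n1 n2 m) :
    Matrix (Fin n1) (Fin n2) ℝ :=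
  Matrix.of fun i j =>
    if (i, j) ∈ ω.1.1 then (if ω.2 (i, j) then a (i, j) else -a (i, j)) else 0

open Classical in
/-- Uniform probability of an event on a finite sample space. -/
noncomputable def unifProb {α : Type*} [Fintype α] (E : α → Prop) : ℝ :=
  ((Finset.univ.filter fun a => E a).card : ℝ) / (Fintype.card α : ℝ)

/-!
A pair of matrices that is optimal for `StablePCP_c(δ)` has a deviation from `(L0, S0)` that is
controlled by the noise as soon as there is an approximate dual certificate: a matrix close to a
subgradient of the nuclear norm at `L0` and to one of `λ ‖·‖₁` at `S0`, over a support transversal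
to the tangent space of the rank-`r` matrices at `L0`.

For a Bernoulli support, whose complement is the union of `⌈2 log n1⌉` independent sparse batches,
such a certificate is a sum of two parts. Golfing over the batches builds a matrix that vanishes on
the support and nearly reproduces `U Vᵀ` on the tangent space; a least-squares vector matches the
random signs on the support and is orthogonal to the tangent space. Sub-Gaussian tails over nets
bound the spectral norms, and the trace moments of the compressed projection give the
transversality. A certificate for a support also serves all smaller ones, so the estimate passes
to a uniformly random support of fixed size.
-/

namespace StablePCP

/-! ### Finite probability spaces -/

section FiniteProbability

variable {Ω Ω' κ : Type*} [Fintype Ω] [Fintype Ω'] {w : Ω → ℝ} {w' : Ω' → ℝ}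

/-- The expectation of `f` when the point `ω` of a finite space carries the mass `w ω`.
Probability distributions are the weights in `stdSimplex ℝ Ω`. -/
def expect (w f : Ω → ℝ) : ℝ := ∑ ω, w ω * f ω

open Classical in
/-- The probability of the event `E` under the weights `w`. -/
noncomputable def prob (w : Ω → ℝ) (E : Ω → Prop) : ℝ := expect w fun ω => if E ω then 1 else 0

lemma expect_const_mul (w : Ω → ℝ) (c : ℝ) (f : Ω → ℝ) :
    expect w (fun ω => c * f ω) = c * expect w f := by
  simp only [expect, Finset.mul_sum, mul_left_comm]

lemma expect_add (w f g : Ω → ℝ) : expect w (fun ω => f ω + g ω) = expect w f + expect w g := by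
  simp only [expect, mul_add, Finset.sum_add_distrib]

lemma expect_sum (w : Ω → ℝ) (s : Finset κ) (f : κ → Ω → ℝ) :
    expect w (fun ω => ∑ k ∈ s, f k ω) = ∑ k ∈ s, expect w (f k) := by
  simp only [expect, Finset.mul_sum]
  exact Finset.sum_comm

lemma expect_comm (w : Ω → ℝ) (w' : Ω' → ℝ) (f : Ω → Ω' → ℝ) :
    expect w (fun ω => expect w' (f ω)) = expect w' fun ω' => expect w fun ω => f ω ω' := by
  simp only [expect, Finset.mul_sum, mul_left_comm]
  exact Finset.sum_comm

/-- The joint law of two independent outcomes. -/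
def prodWeight (w : Ω → ℝ) (w' : Ω' → ℝ) (ω : Ω × Ω') : ℝ := w ω.1 * w' ω.2

lemma expect_prodWeight (w : Ω → ℝ) (w' : Ω' → ℝ) (f : Ω × Ω' → ℝ) :
    expect (prodWeight w w') f = expect w fun ω => expect w' fun ω' => f (ω, ω') := by
  simp only [expect, prodWeight, Fintype.sum_prod_type, Finset.mul_sum, mul_assoc]

lemma prodWeight_mem_stdSimplex (hw : w ∈ stdSimplex ℝ Ω) (hw' : w' ∈ stdSimplex ℝ Ω') :
    prodWeight w w' ∈ stdSimplex ℝ (Ω × Ω') :=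
  ⟨fun ω => mul_nonneg (hw.1 ω.1) (hw'.1 ω.2), by
    simp only [prodWeight, Fintype.sum_prod_type, ← Finset.mul_sum, hw'.2, mul_one, hw.2]⟩

lemma expect_mono (hw : w ∈ stdSimplex ℝ Ω) {f g : Ω → ℝ} (h : ∀ ω, f ω ≤ g ω) :
    expect w f ≤ expect w g :=
  Finset.sum_le_sum fun ω _ => mul_le_mul_of_nonneg_left (h ω) (hw.1 ω)

lemma expect_const (hw : w ∈ stdSimplex ℝ Ω) (c : ℝ) : expect w (fun _ => c) = c := by
  rw [expect, ← Finset.sum_mul, hw.2, one_mul]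

open Classical in
lemma prob_prodWeight_fst (w : Ω → ℝ) (hw' : w' ∈ stdSimplex ℝ Ω') (E : Ω → Prop) :
    prob (prodWeight w w') (fun ω => E ω.1) = prob w E := by
  rw [prob, expect_prodWeight]
  exact congrArg (expect w) (funext fun ω => expect_const hw' (if E ω then 1 else 0))

lemma prob_le_expect (hw : w ∈ stdSimplex ℝ Ω) {E : Ω → Prop} {f : Ω → ℝ} (hf : ∀ ω, 0 ≤ f ω)
    (hEf : ∀ ω, E ω → 1 ≤ f ω) : prob w E ≤ expect w f :=
  expect_mono hw fun ω => by split_ifs with h; exacts [hEf ω h, hf ω]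

lemma prob_mono (hw : w ∈ stdSimplex ℝ Ω) {E F : Ω → Prop} (h : ∀ ω, E ω → F ω) :
    prob w E ≤ prob w F :=
  prob_le_expect hw (fun _ => by positivity) fun ω hE => by rw [if_pos (h ω hE)]

lemma prob_le_one (hw : w ∈ stdSimplex ℝ Ω) (E : Ω → Prop) : prob w E ≤ 1 :=
  (prob_le_expect hw (fun _ => zero_le_one) fun _ _ => le_rfl).trans_eq (expect_const hw 1)

lemma prob_false (w : Ω → ℝ) : prob w (fun _ => False) = 0 := by
  simp [prob, expect]

lemma prob_exists_le (hw : w ∈ stdSimplex ℝ Ω) (s : Finset κ) (E : κ → Ω → Prop) :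
    prob w (fun ω => ∃ k ∈ s, E k ω) ≤ ∑ k ∈ s, prob w (E k) := by
  classical
  simp only [prob]
  rw [← expect_sum]
  refine prob_le_expect hw (fun _ => Finset.sum_nonneg fun _ _ => by positivity) ?_
  rintro ω ⟨k, hk, hE⟩
  exact (if_pos hE).ge.trans
    (Finset.single_le_sum (f := fun k => if E k ω then (1 : ℝ) else 0)
      (fun _ _ => by positivity) hk)

lemma prob_or_le (hw : w ∈ stdSimplex ℝ Ω) (E F : Ω → Prop) :
    prob w (fun ω => E ω ∨ F ω) ≤ prob w E + prob w F := by
  simp only [prob]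
  rw [← expect_add]
  refine prob_le_expect hw (fun _ => by positivity) ?_
  rintro ω (h | h) <;> rw [if_pos h] <;> simp only [le_add_iff_nonneg_left,
    le_add_iff_nonneg_right] <;> positivity

lemma expect_prob_le (hw : w ∈ stdSimplex ℝ Ω) (hw' : w' ∈ stdSimplex ℝ Ω') {bad : Ω → Prop}
    {E : Ω → Ω' → Prop} {c : ℝ} (hc : 0 ≤ c) (hE : ∀ ω, ¬ bad ω → prob w' (E ω) ≤ c) :
    expect w (fun ω => prob w' (E ω)) ≤ prob w bad + c := by
  classical
  calc expect w (fun ω => prob w' (E ω))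
      ≤ expect w fun ω => (if bad ω then 1 else 0) + c := expect_mono hw fun ω => by
        split_ifs with h
        · linarith [prob_le_one hw' (E ω)]
        · linarith [hE ω h]
    _ = prob w bad + c := by rw [expect_add, expect_const hw, prob]

lemma prob_lt_le_exp_mul_expect (hw : w ∈ stdSimplex ℝ Ω) (f : Ω → ℝ) (θ t : ℝ) (hθ : 0 ≤ θ) :
    prob w (fun ω => t < f ω) ≤ Real.exp (-(θ * t)) * expect w fun ω => Real.exp (θ * f ω) := by
  rw [← expect_const_mul]
  refine prob_le_expect hw (fun _ => by positivity) fun ω h => ?_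
  rw [← Real.exp_add, Real.one_le_exp_iff]
  linarith [mul_le_mul_of_nonneg_left h.le hθ]

end FiniteProbability

/-! ### Independent Bernoulli selections -/

section Bernoulli

variable {ι : Type*} [Fintype ι] {q : ℝ}

/-- The law of a random selection in which every index is chosen independently with
probability `q`; `z i` records whether `i` is chosen. With `q = 1 / 2` it also serves as the law
of independent random signs. -/
def bern (q : ℝ) (z : ι → Bool) : ℝ := ∏ i, if z i then q else 1 - q

lemma ite_eq_prod_ite {κ : ι → Type*} [DecidableEq (∀ i, κ i)] [∀ i, DecidableEq (κ i)]
    (f g : ∀ i, κ i) : (if f = g then (1 : ℝ) else 0) = ∏ i, if f i = g i then 1 else 0 := by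
  rw [Fintype.prod_ite_zero]
  simp [funext_iff]

variable [DecidableEq ι]

lemma expect_bern_prod (q : ℝ) (g : ι → Bool → ℝ) :
    expect (bern q) (fun z => ∏ i, g i (z i)) = ∏ i, (q * g i true + (1 - q) * g i false) := by
  simp only [expect, bern, ← Finset.prod_mul_distrib]
  rw [← Fintype.prod_sum fun (i : ι) (b : Bool) => (if b then q else 1 - q) * g i b]
  simp

lemma bern_mem_stdSimplex (hq : q ∈ unitInterval) :
    (bern q : (ι → Bool) → ℝ) ∈ stdSimplex ℝ (ι → Bool) := by
  refine ⟨fun z => Finset.prod_nonneg fun i _ => ?_, ?_⟩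
  · split_ifs
    exacts [hq.1, sub_nonneg.2 hq.2]
  · simpa [expect] using expect_bern_prod q fun (_ : ι) _ => (1 : ℝ)

lemma expect_bern_and_eq (p q : ℝ) (u : ι → Bool) :
    expect (bern p) (fun z => expect (bern q) fun w => if (fun i => z i && w i) = u then 1 else 0)
      = bern (p * q) u := by
  simp only [ite_eq_prod_ite]
  have inner (z : ι → Bool) :
      expect (bern q) (fun w => ∏ i, if (z i && w i) = u i then (1 : ℝ) else 0)
        = ∏ i, (q * (if z i = u i then 1 else 0) + (1 - q) * if false = u i then 1 else 0) := by
    simp [expect_bern_prod q fun i b => if (z i && b) = u i then (1 : ℝ) else 0]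
  simp only [inner]
  rw [expect_bern_prod p fun i b => q * (if b = u i then 1 else 0)
    + (1 - q) * if false = u i then 1 else 0]
  refine Finset.prod_congr rfl fun i _ => ?_
  cases u i <;> simp
  ring

lemma expect_bern_and (p q : ℝ) (f : (ι → Bool) → ℝ) :
    expect (bern p) (fun z => expect (bern q) fun w => f fun i => z i && w i)
      = expect (bern (p * q)) f := by
  have hf (v : ι → Bool) : f v = ∑ u, f u * if v = u then 1 else 0 := by simp
  calc expect (bern p) (fun z => expect (bern q) fun w => f fun i => z i && w i)
      = ∑ u, f u * expect (bern p) fun z => expect (bern q) fun w =>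
          if (fun i => z i && w i) = u then 1 else 0 := by
        simp_rw [hf fun _ => _ && _, expect_sum, expect_const_mul]
    _ = expect (bern (p * q)) f := by
        simp only [expect_bern_and_eq]
        exact Finset.sum_congr rfl fun _ _ => mul_comm _ _

lemma expect_bern_eq_split (q : ℝ) (i : ι) (f : (ι → Bool) → ℝ) :
    expect (bern q) f = expect (bern q) fun z : {j // j ≠ i} → Bool =>
      q * f ((Equiv.funSplitAt i Bool).symm (true, z))
        + (1 - q) * f ((Equiv.funSplitAt i Bool).symm (false, z)) := by
  have hbern (b : Bool) (z : {j // j ≠ i} → Bool) :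
      bern q ((Equiv.funSplitAt i Bool).symm (b, z)) = (if b then q else 1 - q) * bern q z := by
    rw [bern, Fintype.prod_eq_mul_prod_subtype_ne _ i]
    congr 1
    · simp
    · exact Finset.prod_congr rfl fun j _ => by simp [j.2]
  rw [expect, ← (Equiv.funSplitAt i Bool).symm.sum_comp, Fintype.sum_prod_type_right]
  refine Finset.sum_congr rfl fun z _ => ?_
  simp only [hbern, Fintype.sum_bool, if_true, Bool.false_eq_true, if_false]
  ring

lemma expect_bern_ite (q : ℝ) (i : ι) (g : (ι → Bool) → ℝ) :
    expect (bern q) (fun z => if z i then g z else 0)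
      = q * expect (bern q) fun z => g (Function.update z i true) := by
  have hupdate (b : Bool) (z : {j // j ≠ i} → Bool) :
      Function.update ((Equiv.funSplitAt i Bool).symm (b, z)) i true
        = (Equiv.funSplitAt i Bool).symm (true, z) := by
    ext j
    by_cases hj : j = i
    · subst hj; simp
    · simp [hj]
  rw [expect_bern_eq_split q i, expect_bern_eq_split q i, ← expect_const_mul]
  simp only [hupdate]
  refine congrArg _ (funext fun z => ?_)
  simp only [Equiv.funSplitAt_symm_apply, dif_pos, if_true, Bool.false_eq_true, if_false]
  ring

end Bernoulli

/-! ### Trace moments of a randomly compressed projection -/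

section SpectralMoments

open Polynomial

variable {ι : Type*}

lemma sum_mul_mul_sum_mul_le_of_monovary (s : Finset ι) {c f g : ι → ℝ} (hc : ∀ i ∈ s, 0 ≤ c i)
    (hfg : Monovary f g) :
    (∑ i ∈ s, c i * f i) * (∑ i ∈ s, c i * g i)
      ≤ (∑ i ∈ s, c i) * ∑ i ∈ s, c i * (f i * g i) := by
  have hpos : 0 ≤ ∑ i ∈ s, ∑ j ∈ s, c i * c j * ((f i - f j) * (g i - g j)) :=
    Finset.sum_nonneg fun i hi => Finset.sum_nonneg fun j hj =>
      mul_nonneg (mul_nonneg (hc i hi) (hc j hj)) (monovary_iff_forall_mul_nonneg.1 hfg j i)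
  have hexpand : ∑ i ∈ s, ∑ j ∈ s, c i * c j * ((f i - f j) * (g i - g j))
      = 2 * ((∑ i ∈ s, c i) * ∑ i ∈ s, c i * (f i * g i))
        - 2 * ((∑ i ∈ s, c i * f i) * ∑ i ∈ s, c i * g i) := by
    calc ∑ i ∈ s, ∑ j ∈ s, c i * c j * ((f i - f j) * (g i - g j))
        = ∑ i ∈ s, ∑ j ∈ s, (c i * (f i * g i) * c j + c i * (c j * (f j * g j))
            - c i * f i * (c j * g j) - c i * g i * (c j * f j)) :=
          Finset.sum_congr rfl fun i _ => Finset.sum_congr rfl fun j _ => by ring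
      _ = _ := by
          simp only [Finset.sum_sub_distrib, Finset.sum_add_distrib, ← Finset.sum_mul_sum]
          ring
  linarith

variable [Fintype ι] [DecidableEq ι] {A : Matrix ι ι ℝ}

lemma aeval_eq_conj_diagonal (hA : A.IsHermitian) (p : ℝ[X]) :
    aeval A p = Unitary.conjStarAlgAut ℝ _ hA.eigenvectorUnitary
      (diagonal fun i => p.eval (hA.eigenvalues i)) := by
  conv_lhs => rw [hA.spectral_theorem]
  rw [aeval_algHom_apply, ← diagonalAlgHom_apply ℝ, aeval_algHom_apply, aeval_pi_apply]
  rfl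

lemma exists_dotProduct_aeval_mulVec_eq (hA : A.IsHermitian) (u : ι → ℝ) :
    ∃ c : ι → ℝ, (∀ i, 0 ≤ c i) ∧ ∀ p : ℝ[X],
      u ⬝ᵥ aeval A p *ᵥ u = ∑ i, c i * p.eval (hA.eigenvalues i) := by
  let O : Matrix ι ι ℝ := hA.eigenvectorUnitary
  refine ⟨fun i => (Oᵀ *ᵥ u) i ^ 2, fun i => sq_nonneg _, fun p => ?_⟩
  rw [aeval_eq_conj_diagonal hA, Unitary.conjStarAlgAut_apply, star_eq_conjTranspose,
    conjTranspose_eq_transpose_of_trivial, ← mulVec_mulVec, ← mulVec_mulVec, dotProduct_mulVec,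
    ← mulVec_transpose]
  simp only [dotProduct, mulVec_diagonal]
  exact Finset.sum_congr rfl fun i _ => by ring

lemma trace_aeval (hA : A.IsHermitian) (p : ℝ[X]) :
    (aeval A p).trace = ∑ i, p.eval (hA.eigenvalues i) := by
  rw [aeval_eq_conj_diagonal hA, Unitary.conjStarAlgAut_apply, trace_mul_comm, ← Matrix.mul_assoc,
    Unitary.coe_star_mul_self, Matrix.one_mul, trace_diagonal]

lemma pow_le_trace_pow (hA : A.PosSemidef) {t : ℝ} (ht : 0 ≤ t) {x : ι → ℝ}
    (hx : t * (x ⬝ᵥ x) < x ⬝ᵥ A *ᵥ x) (k : ℕ) : t ^ k ≤ (A ^ k).trace := by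
  obtain ⟨c, hc, hquad⟩ := exists_dotProduct_aeval_mulVec_eq hA.isHermitian x
  obtain ⟨i, hi⟩ : ∃ i, t < hA.isHermitian.eigenvalues i := by
    by_contra! hle
    have hxx : x ⬝ᵥ x = ∑ i, c i := by simpa using hquad 1
    have hxA : x ⬝ᵥ A *ᵥ x = ∑ i, c i * hA.isHermitian.eigenvalues i := by simpa using hquad X
    rw [hxx, hxA, Finset.mul_sum] at hx
    exact hx.not_ge (Finset.sum_le_sum fun i _ => by
      rw [mul_comm t]; exact mul_le_mul_of_nonneg_left (hle i) (hc i))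
  have htrace : (A ^ k).trace = ∑ i, hA.isHermitian.eigenvalues i ^ k := by
    simpa using trace_aeval hA.isHermitian (X ^ k)
  rw [htrace]
  exact (pow_le_pow_left₀ ht hi.le k).trans
    (Finset.single_le_sum (f := fun i => hA.isHermitian.eigenvalues i ^ k)
      (fun j _ => pow_nonneg (hA.eigenvalues_nonneg j) k) (Finset.mem_univ i))

lemma dotProduct_pow_mul_rankOne_mulVec (A B : Matrix ι ι ℝ) (u v : ι → ℝ) (l : ℕ) :
    v ⬝ᵥ (A ^ l * ((A + vecMulVec u u) * B)) *ᵥ v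
      = v ⬝ᵥ (A ^ (l + 1) * B) *ᵥ v + (v ⬝ᵥ A ^ l *ᵥ u) * (u ⬝ᵥ B *ᵥ v) := by
  rw [Matrix.add_mul, Matrix.mul_add, ← Matrix.mul_assoc, ← pow_succ, add_mulVec, dotProduct_add]
  congr 1
  rw [← mulVec_mulVec, ← mulVec_mulVec, vecMulVec_mulVec, mulVec_smul, dotProduct_smul]
  simp [mul_comm]

lemma dotProduct_pow_mulVec_le_rankOne (hA : A.PosSemidef) (u : ι → ℝ) (n l : ℕ) :
    u ⬝ᵥ A ^ (l + n) *ᵥ u ≤ u ⬝ᵥ (A ^ l * (A + vecMulVec u u) ^ n) *ᵥ u := by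
  have hB : (A + vecMulVec u u).PosSemidef := by
    simpa using hA.add (posSemidef_vecMulVec_self_star u)
  induction n generalizing l with
  | zero => simp
  | succ n ih =>
    have hA_nonneg : 0 ≤ u ⬝ᵥ A ^ l *ᵥ u := by simpa using (hA.pow l).dotProduct_mulVec_nonneg u
    have hB_nonneg : 0 ≤ u ⬝ᵥ (A + vecMulVec u u) ^ n *ᵥ u := by
      simpa using (hB.pow n).dotProduct_mulVec_nonneg u
    rw [pow_succ', dotProduct_pow_mul_rankOne_mulVec, show l + (n + 1) = l + 1 + n by ring]
    linarith [ih (l + 1), mul_nonneg hA_nonneg hB_nonneg]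

/-- The rank-one perturbation `u uᵀ` acts on the moments of `u` at most like the shift by
`u ⬝ᵥ u`: expand one factor at a time and decouple the two resulting moments by Chebyshev's sum
inequality for the spectral measure of `u`. -/
lemma dotProduct_rankOne_mulVec_le_shift (hA : A.PosSemidef) (u : ι → ℝ) (n l : ℕ) :
    u ⬝ᵥ (A ^ l * (A + vecMulVec u u) ^ n) *ᵥ u
      ≤ u ⬝ᵥ aeval A (X ^ l * (X + C (u ⬝ᵥ u)) ^ n) *ᵥ u := by
  obtain ⟨c, hc, hquad⟩ := exists_dotProduct_aeval_mulVec_eq hA.isHermitian u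
  set e := hA.isHermitian.eigenvalues
  have he (i : ι) : 0 ≤ e i := hA.eigenvalues_nonneg i
  have hmass : u ⬝ᵥ u = ∑ i, c i := by simpa using hquad 1
  set a := u ⬝ᵥ u
  have ha : 0 ≤ a := hmass ▸ Finset.sum_nonneg fun i _ => hc i
  induction n generalizing l with
  | zero => simp
  | succ n ih =>
    have hl : u ⬝ᵥ A ^ l *ᵥ u = ∑ i, c i * e i ^ l := by simpa using hquad (X ^ l)
    have hn : u ⬝ᵥ (A + vecMulVec u u) ^ n *ᵥ u ≤ ∑ i, c i * (e i + a) ^ n := by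
      have h := ih 0
      rw [hquad] at h
      simpa using h
    have hmono : Monovary (fun i => e i ^ l) fun i => (e i + a) ^ n := fun i j hij =>
      pow_le_pow_left₀ (he i) (le_of_not_gt fun h =>
        hij.not_ge (pow_le_pow_left₀ (add_nonneg (he j) ha) (by linarith) n)) l
    calc u ⬝ᵥ (A ^ l * (A + vecMulVec u u) ^ (n + 1)) *ᵥ u
        = u ⬝ᵥ (A ^ (l + 1) * (A + vecMulVec u u) ^ n) *ᵥ u
            + (u ⬝ᵥ A ^ l *ᵥ u) * (u ⬝ᵥ (A + vecMulVec u u) ^ n *ᵥ u) := by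
          rw [pow_succ', dotProduct_pow_mul_rankOne_mulVec]
      _ ≤ ∑ i, c i * (e i ^ (l + 1) * (e i + a) ^ n)
            + (∑ i, c i * e i ^ l) * ∑ i, c i * (e i + a) ^ n := by
          refine add_le_add ?_ (hl ▸ mul_le_mul_of_nonneg_left hn ?_)
          · simpa only [hquad, eval_mul, eval_pow, eval_X, eval_add, eval_C] using ih (l + 1)
          · simpa using (hA.pow l).dotProduct_mulVec_nonneg u
      _ ≤ ∑ i, c i * (e i ^ (l + 1) * (e i + a) ^ n)
            + a * ∑ i, c i * (e i ^ l * (e i + a) ^ n) := by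
          refine add_le_add_right ?_ _
          simpa only [← hmass] using
            sum_mul_mul_sum_mul_le_of_monovary Finset.univ (fun i _ => hc i) hmono
      _ = u ⬝ᵥ aeval A (X ^ l * (X + C a) ^ (n + 1)) *ᵥ u := by
          simp only [hquad, Finset.mul_sum, ← Finset.sum_add_distrib, eval_mul, eval_pow, eval_X,
            eval_add, eval_C]
          exact Finset.sum_congr rfl fun i _ => by ring

lemma add_pow_le_three_mul_pow_add {x a μ : ℝ} (hx : 0 ≤ x) (ha : 0 ≤ a) (haμ : a ≤ μ) {k K : ℕ}
    (hk : k ≤ K) : (x + a) ^ k ≤ 3 * x ^ k + ((K + 1) * μ) ^ k := by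
  have hμ : 0 ≤ μ := ha.trans haμ
  rcases Nat.eq_zero_or_pos k with rfl | hk_pos
  · norm_num
  have hK : (0 : ℝ) < K := by exact_mod_cast hk_pos.trans_le hk
  rcases le_total (K * μ) x with h | h
  · have hshift : x + a ≤ x * (1 + (K : ℝ)⁻¹) := by
      have : μ ≤ x * (K : ℝ)⁻¹ := by rw [← div_eq_mul_inv, le_div_iff₀ hK]; linarith
      linarith
    have hexp : (1 + (K : ℝ)⁻¹) ^ k ≤ 3 := calc
      (1 + (K : ℝ)⁻¹) ^ k ≤ (1 + (K : ℝ)⁻¹) ^ K :=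
        pow_le_pow_right₀ (by linarith [inv_pos.2 hK]) hk
      _ ≤ 3 := by linarith [Real.one_add_inv_pow_le_exp (n := K), Real.exp_one_lt_d9]
    calc (x + a) ^ k ≤ (x * (1 + (K : ℝ)⁻¹)) ^ k := pow_le_pow_left₀ (by linarith) hshift k
      _ = x ^ k * (1 + (K : ℝ)⁻¹) ^ k := mul_pow _ _ _
      _ ≤ x ^ k * 3 := mul_le_mul_of_nonneg_left hexp (pow_nonneg hx k)
      _ ≤ 3 * x ^ k + ((K + 1) * μ) ^ k := by
          linarith [show 0 ≤ ((K + 1) * μ) ^ k by positivity]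
  · calc (x + a) ^ k ≤ ((K + 1) * μ) ^ k := pow_le_pow_left₀ (by linarith) (by linarith) k
      _ ≤ 3 * x ^ k + ((K + 1) * μ) ^ k := by linarith [pow_nonneg hx k]

lemma dotProduct_rankOne_pow_mulVec_le (hA : A.PosSemidef) (u : ι → ℝ) {μ : ℝ}
    (hu : u ⬝ᵥ u ≤ μ) {k K : ℕ} (hk : k ≤ K) :
    u ⬝ᵥ (A + vecMulVec u u) ^ k *ᵥ u
      ≤ 3 * (u ⬝ᵥ A ^ k *ᵥ u) + ((K + 1) * μ) ^ k * (u ⬝ᵥ u) := by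
  obtain ⟨c, hc, hquad⟩ := exists_dotProduct_aeval_mulVec_eq hA.isHermitian u
  have hmass : u ⬝ᵥ u = ∑ i, c i := by simpa using hquad 1
  have hk' : u ⬝ᵥ A ^ k *ᵥ u = ∑ i, c i * hA.isHermitian.eigenvalues i ^ k := by
    simpa using hquad (X ^ k)
  have ha : 0 ≤ u ⬝ᵥ u := hmass ▸ Finset.sum_nonneg fun i _ => hc i
  calc u ⬝ᵥ (A + vecMulVec u u) ^ k *ᵥ u
      ≤ ∑ i, c i * (hA.isHermitian.eigenvalues i + u ⬝ᵥ u) ^ k := by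
        simpa only [hquad, pow_zero, Matrix.one_mul, one_mul, eval_pow, eval_X, eval_add, eval_C]
          using dotProduct_rankOne_mulVec_le_shift hA u k 0
    _ ≤ ∑ i, c i * (3 * hA.isHermitian.eigenvalues i ^ k + ((K + 1) * μ) ^ k) := by
        gcongr with i
        · exact hc i
        · exact add_pow_le_three_mul_pow_add (hA.eigenvalues_nonneg i) ha hu hk
    _ = _ := by
        rw [hk', hmass, Finset.mul_sum, Finset.mul_sum, ← Finset.sum_add_distrib]
        exact Finset.sum_congr rfl fun i _ => by ring

end SpectralMoments

section Compression

variable {ι : Type*} [Fintype ι] [DecidableEq ι] {P : Matrix ι ι ℝ}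

/-- The coordinate projection onto the selected indices. -/
noncomputable def mask (z : ι → Bool) : Matrix ι ι ℝ := diagonal fun i => if z i then 1 else 0

/-- The compression to the range of a projection `P` of the coordinate projection `mask z`. -/
noncomputable def compress (P : Matrix ι ι ℝ) (z : ι → Bool) : Matrix ι ι ℝ := P * mask z * P

omit [DecidableEq ι] in
lemma transpose_eq_of_isStarProjection (hP : IsStarProjection P) : Pᵀ = P :=
  (conjTranspose_eq_transpose_of_trivial P).symm.trans hP.isSelfAdjoint

omit [DecidableEq ι] in
lemma col_dotProduct_mulVec_col (hP : IsStarProjection P) (B : Matrix ι ι ℝ) (i : ι) :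
    P.col i ⬝ᵥ B *ᵥ P.col i = (P * B * P) i i := by
  have hsymm (a : ι) : P i a = P a i := congrFun₂ (transpose_eq_of_isStarProjection hP) a i
  rw [Matrix.mul_assoc, Matrix.mul_apply]
  simp only [Matrix.mul_apply, dotProduct, mulVec, col_apply, hsymm]

omit [DecidableEq ι] in
lemma col_dotProduct_col (hP : IsStarProjection P) (i : ι) : P.col i ⬝ᵥ P.col i = P i i := by
  classical
  simpa [hP.isIdempotentElem.eq] using col_dotProduct_mulVec_col hP 1 i

lemma compress_posSemidef (hP : IsStarProjection P) (z : ι → Bool) : (compress P z).PosSemidef := by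
  have hmask : (mask z).PosSemidef := PosSemidef.diagonal fun i => by
    dsimp only
    split_ifs <;> simp
  simpa only [compress, conjTranspose_eq_transpose_of_trivial,
    transpose_eq_of_isStarProjection hP] using hmask.mul_mul_conjTranspose_same P

lemma compress_update_true (hP : IsStarProjection P) (z : ι → Bool) (i : ι) :
    compress P (Function.update z i true)
      = compress P (Function.update z i false) + vecMulVec (P.col i) (P.col i) := by
  have hmask : mask (Function.update z i true)
      = mask (Function.update z i false) + vecMulVec (Pi.single i 1) (Pi.single i 1) := by
    rw [← single_eq_single_vecMulVec_single, ← diagonal_single, mask, mask, diagonal_add]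
    congr 1
    ext j
    by_cases hj : j = i <;> simp [hj]
  rw [compress, hmask, Matrix.mul_add, Matrix.add_mul, mul_vecMulVec, vecMulVec_mul,
    mulVec_single_one, ← mulVec_transpose, transpose_eq_of_isStarProjection hP, mulVec_single_one]
  rfl

lemma trace_compress_pow_succ_mul (hP : IsStarProjection P) (z : ι → Bool) (k : ℕ) :
    (compress P z ^ (k + 1) * P).trace
      = ∑ i, if z i then P.col i ⬝ᵥ compress P z ^ k *ᵥ P.col i else 0 := by
  have hfactor : compress P z ^ (k + 1) * P = compress P z ^ k * P * mask z * P := by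
    simp only [pow_succ, compress, Matrix.mul_assoc, hP.isIdempotentElem.eq]
  rw [hfactor, trace_mul_comm, ← Matrix.mul_assoc, ← Matrix.mul_assoc, trace]
  refine Finset.sum_congr rfl fun i _ => ?_
  rw [col_dotProduct_mulVec_col hP, diag_apply, mask, mul_diagonal, mul_ite, mul_one, mul_zero]

omit [DecidableEq ι] in
lemma trace_mul_eq_sum_col (hP : IsStarProjection P) (B : Matrix ι ι ℝ) :
    (B * P).trace = ∑ i, P.col i ⬝ᵥ B *ᵥ P.col i := by
  have htrace : (B * P).trace = (P * B * P).trace := by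
    rw [trace_mul_comm (P * B), ← Matrix.mul_assoc, hP.isIdempotentElem.eq, trace_mul_comm]
  simp only [col_dotProduct_mulVec_col hP]
  exact htrace

omit [DecidableEq ι] in
lemma diag_nonneg (hP : IsStarProjection P) (i : ι) : 0 ≤ P i i :=
  (Finset.sum_nonneg fun j _ => mul_self_nonneg (P j i)).trans_eq (col_dotProduct_col hP i)

lemma compress_update_false_le (hP : IsStarProjection P) (z : ι → Bool) (i : ι) (k : ℕ) :
    P.col i ⬝ᵥ compress P (Function.update z i false) ^ k *ᵥ P.col i
      ≤ P.col i ⬝ᵥ compress P z ^ k *ᵥ P.col i := by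
  cases hz : z i with
  | false => rw [← hz, Function.update_eq_self]
  | true =>
    conv_rhs => rw [← Function.update_eq_self i z, hz, compress_update_true hP]
    simpa using dotProduct_pow_mulVec_le_rankOne (compress_posSemidef hP _) (P.col i) k 0

variable {μ q γ : ℝ} {K : ℕ}

lemma expect_ite_col_compress_pow_le (hP : IsStarProjection P) (hq : q ∈ unitInterval)
    (hμ : ∀ i, P i i ≤ μ) (i : ι) {k : ℕ} (hk : k ≤ K) :
    expect (bern q) (fun z => if z i then P.col i ⬝ᵥ compress P z ^ k *ᵥ P.col i else 0)
      ≤ q * expect (bern q) fun z =>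
          3 * (P.col i ⬝ᵥ compress P z ^ k *ᵥ P.col i) + ((K + 1) * μ) ^ k * P i i := by
  rw [expect_bern_ite q i fun z => P.col i ⬝ᵥ compress P z ^ k *ᵥ P.col i]
  refine mul_le_mul_of_nonneg_left (expect_mono (bern_mem_stdSimplex hq) fun z => ?_) hq.1
  have hrankOne := dotProduct_rankOne_pow_mulVec_le
    (compress_posSemidef hP (Function.update z i false)) (P.col i)
    ((col_dotProduct_col hP i).trans_le (hμ i)) hk
  rw [col_dotProduct_col hP, ← compress_update_true hP] at hrankOne
  linarith [compress_update_false_le hP z i k]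

theorem expect_trace_compress_pow_le (hP : IsStarProjection P) (hq : q ∈ unitInterval)
    (hμ : ∀ i, P i i ≤ μ) (hμ0 : 0 ≤ μ) (hqγ : 4 * q ≤ γ) (hμγ : (K + 1) * μ ≤ γ) {k : ℕ}
    (hk : k ≤ K) :
    expect (bern q) (fun z => (compress P z ^ k * P).trace) ≤ P.trace * γ ^ k := by
  have hγ : 0 ≤ γ := by linarith [hq.1]
  have htrace : 0 ≤ P.trace := Finset.sum_nonneg fun i _ => diag_nonneg hP i
  have hbern := bern_mem_stdSimplex (ι := ι) hq
  induction k with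
  | zero => simp [expect_const hbern]
  | succ k ih =>
    calc expect (bern q) (fun z => (compress P z ^ (k + 1) * P).trace)
        = ∑ i, expect (bern q) fun z =>
            if z i then P.col i ⬝ᵥ compress P z ^ k *ᵥ P.col i else 0 := by
          simp only [trace_compress_pow_succ_mul hP, expect_sum]
      _ ≤ ∑ i, q * expect (bern q) fun z =>
            3 * (P.col i ⬝ᵥ compress P z ^ k *ᵥ P.col i) + ((K + 1) * μ) ^ k * P i i :=
          Finset.sum_le_sum fun i _ => expect_ite_col_compress_pow_le hP hq hμ i (by omega)
      _ = q * (3 * expect (bern q) (fun z => (compress P z ^ k * P).trace)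
            + ((K + 1) * μ) ^ k * P.trace) := by
          rw [← Finset.mul_sum, ← expect_sum]
          simp only [trace_mul_eq_sum_col hP]
          simp only [← Finset.mul_sum, Finset.sum_add_distrib, expect_add, expect_const hbern,
            expect_const_mul, trace, diag_apply]
      _ ≤ q * (3 * (P.trace * γ ^ k) + γ ^ k * P.trace) := by
          have := hq.1
          gcongr
          exact ih (by omega)
      _ = 4 * q * (P.trace * γ ^ k) := by ring
      _ ≤ γ * (P.trace * γ ^ k) := mul_le_mul_of_nonneg_right hqγ (by positivity)
      _ = P.trace * γ ^ (k + 1) := by ring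

theorem prob_exists_lt_compress_le (hP : IsStarProjection P) (hq : q ∈ unitInterval)
    (hμ : ∀ i, P i i ≤ μ) (hμ0 : 0 ≤ μ) (hqγ : 4 * q ≤ γ) (hK : 0 < K)
    (hμγ : (K + 1) * μ ≤ γ) {t : ℝ} (ht : 0 < t) :
    prob (bern q) (fun z => ∃ x : ι → ℝ, t * (x ⬝ᵥ x) < x ⬝ᵥ compress P z *ᵥ x)
      ≤ P.trace * (γ / t) ^ K := by
  have habsorb (z : ι → Bool) : compress P z ^ K * P = compress P z ^ K := by
    obtain ⟨k, rfl⟩ := Nat.exists_eq_succ_of_ne_zero hK.ne'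
    simp only [Nat.succ_eq_add_one, pow_succ, compress, Matrix.mul_assoc, hP.isIdempotentElem.eq]
  calc prob (bern q) (fun z => ∃ x : ι → ℝ, t * (x ⬝ᵥ x) < x ⬝ᵥ compress P z *ᵥ x)
      ≤ expect (bern q) fun z => (t ^ K)⁻¹ * (compress P z ^ K * P).trace := by
        refine prob_le_expect (bern_mem_stdSimplex hq) (fun z => ?_) fun z hx => ?_
        · rw [habsorb]
          have := ((compress_posSemidef hP z).pow K).trace_nonneg
          positivity
        · obtain ⟨x, hx⟩ := hx
          rw [habsorb, inv_mul_eq_div, one_le_div (by positivity)]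
          exact pow_le_trace_pow (compress_posSemidef hP z) ht.le hx K
    _ ≤ (t ^ K)⁻¹ * (P.trace * γ ^ K) := by
        rw [expect_const_mul]
        gcongr
        exact expect_trace_compress_pow_le hP hq hμ hμ0 hqγ hμγ le_rfl
    _ = P.trace * (γ / t) ^ K := by rw [div_pow]; field_simp

end Compression

/-! ### Moment generating functions -/

section MomentGenerating

variable {Ω ι : Type*} [Fintype Ω] [Fintype ι]

/-- The random vector `X` is sub-Gaussian with variance proxy `2 κ`: the moment generating function
of each linear functional of `X` is dominated by a Gaussian one. -/
def SubGaussian (w : Ω → ℝ) (X : Ω → ι → ℝ) (κ : ℝ) : Prop :=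
  ∀ t : ι → ℝ, expect w (fun ω => Real.exp (t ⬝ᵥ X ω)) ≤ Real.exp (κ * (t ⬝ᵥ t))

lemma SubGaussian.prob_lt_dotProduct_le {w : Ω → ℝ} (hw : w ∈ stdSimplex ℝ Ω) {X : Ω → ι → ℝ}
    {κ : ℝ} (hX : SubGaussian w X κ) (hκ : 0 < κ) {s v : ℝ} (hs : 0 ≤ s) (hv : 0 < v) {t : ι → ℝ}
    (ht : t ⬝ᵥ t ≤ v) :
    prob w (fun ω => s < t ⬝ᵥ X ω) ≤ Real.exp (-(s ^ 2 / (4 * κ * v))) := by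
  set θ := s / (2 * κ * v) with hθ
  calc prob w (fun ω => s < t ⬝ᵥ X ω)
      ≤ Real.exp (-(θ * s)) * expect w fun ω => Real.exp ((θ • t) ⬝ᵥ X ω) := by
        simpa only [smul_dotProduct, smul_eq_mul] using
          prob_lt_le_exp_mul_expect hw (fun ω => t ⬝ᵥ X ω) θ s (by positivity)
    _ ≤ Real.exp (-(θ * s)) * Real.exp (κ * (θ ^ 2 * v)) := by
        gcongr
        refine (hX _).trans (Real.exp_le_exp.2 ?_)
        have hsq : (θ • t) ⬝ᵥ (θ • t) = θ ^ 2 * (t ⬝ᵥ t) := by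
          simp only [smul_dotProduct, dotProduct_smul, smul_eq_mul]
          ring
        rw [hsq]
        gcongr
    _ = Real.exp (-(s ^ 2 / (4 * κ * v))) := by
        rw [← Real.exp_add, hθ]
        congr 1
        field_simp
        ring

variable [DecidableEq ι] {q : ℝ}

lemma expect_exp_sum_le (hq : q ∈ unitInterval) {g : ι → Bool → ℝ} {c : ι → ℝ}
    (h : ∀ i, q * Real.exp (g i true) + (1 - q) * Real.exp (g i false) ≤ Real.exp (c i)) :
    expect (bern q) (fun z => Real.exp (∑ i, g i (z i))) ≤ Real.exp (∑ i, c i) := by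
  simp only [Real.exp_sum]
  rw [expect_bern_prod q fun i b => Real.exp (g i b)]
  refine Finset.prod_le_prod (fun i _ => ?_) fun i _ => h i
  have := hq.1
  have := sub_nonneg.2 hq.2
  positivity

/-- The sign `±1` encoded by a Boolean. -/
noncomputable def boolSign (b : Bool) : ℝ := if b then 1 else -1

lemma subGaussian_boolSign :
    SubGaussian (bern (1 / 2)) (fun (s : ι → Bool) i => boolSign (s i)) (1 / 2) := fun t => by
  simp only [dotProduct, Finset.mul_sum]
  refine expect_exp_sum_le ⟨by norm_num, by norm_num⟩ (g := fun i b => t i * boolSign b) fun i => ?_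
  have := Real.cosh_le_exp_half_sq (t i)
  rw [Real.cosh_eq] at this
  simp only [boolSign, if_true, mul_one, Bool.false_eq_true, if_false, mul_neg]
  ring_nf at this ⊢
  linarith

/-- The centred, rescaled selector `1 - b / q`; it has mean zero when `b` is chosen with
probability `q`. -/
noncomputable def centeredSelector (q : ℝ) (b : Bool) : ℝ := 1 - if b then q⁻¹ else 0

lemma centeredSelector_true (q : ℝ) : centeredSelector q true = 1 - q⁻¹ := rfl

lemma centeredSelector_false (q : ℝ) : centeredSelector q false = 1 := by simp [centeredSelector]

lemma abs_centeredSelector_le (hq : 0 < q) (hq1 : q ≤ 1) (b : Bool) :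
    |centeredSelector q b| ≤ q⁻¹ := by
  have hinv : 1 ≤ q⁻¹ := (one_le_inv₀ hq).2 hq1
  cases b
  · rwa [centeredSelector_false, abs_one]
  · rw [centeredSelector_true, abs_le]
    constructor <;> linarith

lemma centeredSelector_mgf_le_of_abs_le (hq : 0 < q) (hq1 : q ≤ 1) {t : ℝ} (ht : |t| ≤ q) :
    q * Real.exp (t * centeredSelector q true) + (1 - q) * Real.exp (t * centeredSelector q false)
      ≤ Real.exp (t ^ 2 / q) := by
  have hexp {b : Bool} : Real.exp (t * centeredSelector q b)
      ≤ 1 + t * centeredSelector q b + (t * centeredSelector q b) ^ 2 := by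
    have hle : |t * centeredSelector q b| ≤ 1 := by
      rw [abs_mul, ← mul_inv_cancel₀ hq.ne']
      gcongr
      exact abs_centeredSelector_le hq hq1 b
    linarith [(abs_le.1 (Real.abs_exp_sub_one_sub_id_le hle)).2]
  have hsecond : q * (1 + t * centeredSelector q true + (t * centeredSelector q true) ^ 2)
      + (1 - q) * (1 + t * centeredSelector q false + (t * centeredSelector q false) ^ 2)
      = t ^ 2 / q + 1 - t ^ 2 := by
    rw [centeredSelector_true, centeredSelector_false]
    field_simp
    ring
  calc q * Real.exp (t * centeredSelector q true)
        + (1 - q) * Real.exp (t * centeredSelector q false)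
      ≤ t ^ 2 / q + 1 - t ^ 2 := by
        rw [← hsecond]
        have := sub_nonneg.2 hq1
        gcongr <;> exact hexp
    _ ≤ Real.exp (t ^ 2 / q) := by linarith [Real.add_one_le_exp (t ^ 2 / q), sq_nonneg t]

lemma centeredSelector_mgf_le (hq : 0 < q) (hq1 : q ≤ 1) (t : ℝ) :
    q * Real.exp (t * centeredSelector q true) + (1 - q) * Real.exp (t * centeredSelector q false)
      ≤ Real.exp (t ^ 2 / q ^ 2) := by
  rcases le_or_gt |t| q with h | h
  · refine (centeredSelector_mgf_le_of_abs_le hq hq1 h).trans (Real.exp_le_exp.2 ?_)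
    exact div_le_div_of_nonneg_left (sq_nonneg t) (by positivity) (by nlinarith)
  · have hratio : 1 < |t| / q := by rwa [lt_div_iff₀ hq, one_mul]
    have hexponent (b : Bool) : t * centeredSelector q b ≤ t ^ 2 / q ^ 2 := calc
      t * centeredSelector q b ≤ |t| * |centeredSelector q b| :=
        (le_abs_self _).trans_eq (abs_mul _ _)
      _ ≤ |t| / q :=
        mul_le_mul_of_nonneg_left (abs_centeredSelector_le hq hq1 b) (abs_nonneg _)
      _ ≤ (|t| / q) ^ 2 := by nlinarith
      _ = t ^ 2 / q ^ 2 := by rw [div_pow, sq_abs]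
    have := sub_nonneg.2 hq1
    calc q * Real.exp (t * centeredSelector q true)
          + (1 - q) * Real.exp (t * centeredSelector q false)
        ≤ q * Real.exp (t ^ 2 / q ^ 2) + (1 - q) * Real.exp (t ^ 2 / q ^ 2) := by
          gcongr <;> exact hexponent _
      _ = Real.exp (t ^ 2 / q ^ 2) := by ring

lemma cosh_sub_one_le (t : ℝ) : Real.cosh t - 1 ≤ t ^ 2 / 2 * Real.exp |t| := by
  have hident : Real.cosh t - 1 = Real.exp |t| * (1 - Real.exp (-|t|)) ^ 2 / 2 := by
    have hinv : Real.exp |t| * Real.exp (-|t|) = 1 := by rw [← Real.exp_add]; simp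
    rw [← Real.cosh_abs, Real.cosh_eq]
    linear_combination (1 - Real.exp (-|t|) / 2) * hinv
  have hnonneg : 0 ≤ 1 - Real.exp (-|t|) :=
    sub_nonneg.2 (Real.exp_le_one_iff.2 (neg_nonpos.2 (abs_nonneg t)))
  have hle : (1 - Real.exp (-|t|)) ^ 2 ≤ t ^ 2 := by
    rw [← sq_abs t]
    exact pow_le_pow_left₀ hnonneg (by linarith [Real.add_one_le_exp (-|t|)]) 2
  rw [hident]
  nlinarith [mul_le_mul_of_nonneg_left hle (Real.exp_pos |t|).le]

lemma lazy_sign_mgf_le {ρ κ : ℝ} (hρ : ρ ∈ unitInterval) (hκ : 0 < κ)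
    (hρκ : ρ * Real.exp (1 / κ) ≤ 2 * κ) (t : ℝ) :
    ρ * Real.cosh t + (1 - ρ) ≤ Real.exp (κ * t ^ 2) := by
  have hρ0 := hρ.1
  rcases le_or_gt |t| (1 / κ) with h | h
  · calc ρ * Real.cosh t + (1 - ρ) = ρ * (Real.cosh t - 1) + 1 := by ring
      _ ≤ ρ * (t ^ 2 / 2 * Real.exp (1 / κ)) + 1 := by
          gcongr
          exact (cosh_sub_one_le t).trans (by gcongr)
      _ = ρ * Real.exp (1 / κ) * (t ^ 2 / 2) + 1 := by ring
      _ ≤ 2 * κ * (t ^ 2 / 2) + 1 := by gcongr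
      _ = κ * t ^ 2 + 1 := by ring
      _ ≤ Real.exp (κ * t ^ 2) := Real.add_one_le_exp _
  · have hcosh : Real.cosh t ≤ Real.exp (κ * t ^ 2) := calc
      Real.cosh t ≤ Real.exp |t| := by
        rw [← Real.cosh_abs, Real.cosh_eq]
        linarith [Real.exp_le_exp.2 (neg_le_self (abs_nonneg t))]
      _ ≤ Real.exp (κ * t ^ 2) := by
        have : 1 < κ * |t| := by rwa [div_lt_iff₀' hκ] at h
        rw [Real.exp_le_exp, ← sq_abs t]
        nlinarith [abs_nonneg t]
    have hone : 1 ≤ Real.exp (κ * t ^ 2) := Real.one_le_exp (by positivity)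
    nlinarith [mul_le_mul_of_nonneg_left hcosh hρ0, sub_nonneg.2 hρ.2]

/-- The vector of the signs `s` restricted to the support `z`. -/
noncomputable def sparseSign (ω : (ι → Bool) × (ι → Bool)) (i : ι) : ℝ :=
  if ω.1 i then boolSign (ω.2 i) else 0

/-- The law of a Bernoulli support together with independent uniform signs. -/
noncomputable def sparseSignLaw (ρ : ℝ) : (ι → Bool) × (ι → Bool) → ℝ :=
  prodWeight (bern ρ) (bern (1 / 2))

lemma sparseSignLaw_mem_stdSimplex (hq : q ∈ unitInterval) :
    (sparseSignLaw q : (ι → Bool) × (ι → Bool) → ℝ) ∈ stdSimplex ℝ _ :=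
  prodWeight_mem_stdSimplex (bern_mem_stdSimplex hq)
    (bern_mem_stdSimplex ⟨by norm_num, by norm_num⟩)

lemma subGaussian_sparseSign {ρ κ : ℝ} (hρ : ρ ∈ unitInterval) (hκ : 0 < κ)
    (hρκ : ρ * Real.exp (1 / κ) ≤ 2 * κ) :
    SubGaussian (sparseSignLaw ρ) (sparseSign (ι := ι)) κ := fun t => by
  have hsigns (z : ι → Bool) :
      expect (bern (1 / 2)) (fun s => Real.exp (t ⬝ᵥ sparseSign (z, s)))
        = ∏ i, if z i then Real.cosh (t i) else 1 := by
    simp only [dotProduct, sparseSign, Real.exp_sum]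
    rw [expect_bern_prod (1 / 2) fun i b => Real.exp (t i * if z i then boolSign b else 0)]
    refine Finset.prod_congr rfl fun i _ => ?_
    split_ifs
    · simp only [boolSign, Real.cosh_eq]
      norm_num
      ring
    · norm_num
  rw [sparseSignLaw, expect_prodWeight]
  simp only [hsigns]
  rw [expect_bern_prod ρ fun i b => if b then Real.cosh (t i) else 1, dotProduct, Finset.mul_sum,
    Real.exp_sum]
  refine Finset.prod_le_prod (fun i _ => ?_) fun i _ => ?_
  · have := hρ.1
    have := sub_nonneg.2 hρ.2
    have := (Real.cosh_pos (t i)).le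
    simp only [if_true, Bool.false_eq_true, if_false]
    positivity
  · simpa [pow_two] using lazy_sign_mgf_le hρ hκ hρκ (t i)

end MomentGenerating

/-! ### Euclidean and spectral norms -/

section Net

variable {E F : Type*} [NormedAddCommGroup E] [NormedSpace ℝ E]

lemma card_le_of_half_separated [FiniteDimensional ℝ E] (T : Finset E) (hT : ∀ x ∈ T, ‖x‖ ≤ 1)
    (hsep : ∀ x ∈ T, ∀ y ∈ T, x ≠ y → 1 / 2 ≤ ‖x - y‖) : T.card ≤ 5 ^ Module.finrank ℝ E := by
  rw [← T.card_map ⟨fun x => (2 : ℝ) • x, smul_right_injective E two_ne_zero⟩]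
  refine Besicovitch.card_le_of_separated _ ?_ ?_ <;>
    simp only [Finset.mem_map, Function.Embedding.coeFn_mk, forall_exists_index, and_imp]
  · rintro _ x hx rfl
    rw [norm_smul, Real.norm_ofNat]
    linarith [hT x hx]
  · rintro _ x hx rfl _ y hy rfl hxy
    rw [← smul_sub, norm_smul, Real.norm_ofNat]
    linarith [hsep x hx y hy fun h => hxy (by rw [h])]

lemma packingNumber_closedBall_le [FiniteDimensional ℝ E] :
    Metric.packingNumber (1 / 2) (Metric.closedBall (0 : E) 1) ≤ 5 ^ Module.finrank ℝ E := by
  refine iSup₂_le fun C hC => iSup_le fun hsep => ?_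
  by_contra! hcard
  obtain ⟨T, hTC, hT⟩ := Set.exists_subset_encard_eq (Order.add_one_le_of_lt hcard)
  have hfin : T.Finite := Set.finite_of_encard_eq_coe (k := 5 ^ Module.finrank ℝ E + 1) (by
    rw [hT]
    norm_cast)
  lift T to Finset E using hfin
  have hle : T.card ≤ 5 ^ Module.finrank ℝ E := by
    refine card_le_of_half_separated T (fun x hx => mem_closedBall_zero_iff.1 (hC (hTC hx)))
      fun x hx y hy hxy => ?_
    have hlt : ((1 / 2 : NNReal) : ENNReal) < edist x y := hsep (hTC hx) (hTC hy) hxy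
    rw [edist_nndist, ENNReal.coe_lt_coe, ← NNReal.coe_lt_coe, coe_nndist, dist_eq_norm] at hlt
    exact_mod_cast hlt.le
  rw [Set.encard_coe_eq_coe_finsetCard] at hT
  have : T.card = 5 ^ Module.finrank ℝ E + 1 := by exact_mod_cast hT
  omega

variable (E) in
lemma exists_half_net [FiniteDimensional ℝ E] :
    ∃ N : Finset E, N.card ≤ 5 ^ Module.finrank ℝ E ∧ (∀ x ∈ N, ‖x‖ ≤ 1) ∧
      ∀ x : E, ‖x‖ ≤ 1 → ∃ y ∈ N, ‖x - y‖ ≤ 1 / 2 := by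
  have hle := packingNumber_closedBall_le (E := E)
  have htop : Metric.packingNumber (1 / 2) (Metric.closedBall (0 : E) 1) ≠ ⊤ :=
    ne_top_of_le_ne_top (by exact_mod_cast ENat.natCast_ne_top _) hle
  rw [← Metric.encard_maximalSeparatedSet htop] at hle
  have hfin : (Metric.maximalSeparatedSet (1 / 2) (Metric.closedBall (0 : E) 1)).Finite :=
    Set.finite_of_encard_le_coe (k := 5 ^ Module.finrank ℝ E) (by exact_mod_cast hle)
  refine ⟨hfin.toFinset, ?_, fun x hx => ?_, fun x hx => ?_⟩
  · rw [hfin.encard_eq_coe_toFinset_card] at hle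
    exact_mod_cast hle
  · exact mem_closedBall_zero_iff.1
      (Metric.maximalSeparatedSet_subset (hfin.mem_toFinset.1 hx))
  · obtain ⟨y, hy, hxy⟩ := Metric.isCover_maximalSeparatedSet htop (mem_closedBall_zero_iff.2 hx)
    refine ⟨y, hfin.mem_toFinset.2 hy, ?_⟩
    rw [← dist_eq_norm, dist_edist]
    exact ENNReal.toReal_le_of_le_ofReal (by norm_num) (hxy.trans (by simp))

lemma opNorm_le_two_mul_of_half_net [NormedAddCommGroup F] [NormedSpace ℝ F] (f : E →L[ℝ] F)
    {N : Set E} (hN : ∀ x : E, ‖x‖ ≤ 1 → ∃ y ∈ N, ‖x - y‖ ≤ 1 / 2) {c : ℝ}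
    (hc : ∀ y ∈ N, ‖f y‖ ≤ c) : ‖f‖ ≤ 2 * c := by
  obtain ⟨y₀, hy₀, -⟩ := hN 0 (by simp)
  have hc0 : 0 ≤ c := (norm_nonneg _).trans (hc y₀ hy₀)
  have hbound : ‖f‖ ≤ c + ‖f‖ / 2 := by
    refine f.opNorm_le_of_unit_norm (by positivity) fun x hx => ?_
    obtain ⟨y, hy, hxy⟩ := hN x hx.le
    calc ‖f x‖ = ‖f y + f (x - y)‖ := by rw [← map_add, add_sub_cancel]
      _ ≤ ‖f y‖ + ‖f‖ * ‖x - y‖ := (norm_add_le _ _).trans (by gcongr; exact f.le_opNorm _)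
      _ ≤ c + ‖f‖ * (1 / 2) := by gcongr; exact hc y hy
      _ = c + ‖f‖ / 2 := by ring
  linarith

open scoped RealInnerProductSpace in
lemma norm_le_two_mul_of_half_net [NormedAddCommGroup F] [InnerProductSpace ℝ F] (v : F)
    {N : Set F} (hN : ∀ x : F, ‖x‖ ≤ 1 → ∃ y ∈ N, ‖x - y‖ ≤ 1 / 2) {c : ℝ}
    (hc : ∀ y ∈ N, ⟪y, v⟫ ≤ c) : ‖v‖ ≤ 2 * c := by
  have hu : ‖‖v‖⁻¹ • v‖ ≤ 1 := by
    rw [norm_smul, norm_inv, norm_norm]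
    exact inv_mul_le_one
  obtain ⟨y, hy, hxy⟩ := hN _ hu
  have hself : ⟪‖v‖⁻¹ • v, v⟫ = ‖v‖ := by
    rw [real_inner_smul_left, real_inner_self_eq_norm_sq, sq, ← mul_assoc, inv_mul_mul_self]
  have hdiff : ⟪‖v‖⁻¹ • v - y, v⟫ ≤ 1 / 2 * ‖v‖ :=
    (real_inner_le_norm _ _).trans (by gcongr)
  rw [inner_sub_left, hself] at hdiff
  linarith [hc y hy]

end Net

open scoped Matrix.Norms.L2Operator

section Euclidean

variable {ι m n : Type*} [Fintype ι] [Fintype m] [Fintype n] [DecidableEq n]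

/-- The Euclidean norm of a coordinate vector; the norm of a function type is the sup norm. -/
noncomputable def l2Norm (v : ι → ℝ) : ℝ := ‖WithLp.toLp 2 v‖

lemma l2Norm_nonneg (v : ι → ℝ) : 0 ≤ l2Norm v := norm_nonneg _

lemma l2Norm_sq (v : ι → ℝ) : l2Norm v ^ 2 = v ⬝ᵥ v := by
  rw [l2Norm, ← real_inner_self_eq_norm_sq, EuclideanSpace.inner_toLp_toLp, star_trivial]

lemma abs_dotProduct_le_l2Norm (v w : ι → ℝ) : |v ⬝ᵥ w| ≤ l2Norm v * l2Norm w := by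
  have := abs_real_inner_le_norm (WithLp.toLp 2 w) (WithLp.toLp 2 v)
  rwa [EuclideanSpace.inner_toLp_toLp, star_trivial, mul_comm] at this

lemma dotProduct_le_l2Norm (v w : ι → ℝ) : v ⬝ᵥ w ≤ l2Norm v * l2Norm w :=
  (le_abs_self _).trans (abs_dotProduct_le_l2Norm v w)

lemma l2Norm_add_le (v w : ι → ℝ) : l2Norm (v + w) ≤ l2Norm v + l2Norm w := norm_add_le _ _

lemma l2Norm_sub_le (v w : ι → ℝ) : l2Norm (v - w) ≤ l2Norm v + l2Norm w := norm_sub_le _ _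

lemma l2Norm_mulVec_le (A : Matrix m n ℝ) (v : n → ℝ) : l2Norm (A *ᵥ v) ≤ ‖A‖ * l2Norm v :=
  l2_opNorm_mulVec A (WithLp.toLp 2 v)

lemma l2_opNorm_le {A : Matrix m n ℝ} {c : ℝ} (hc : 0 ≤ c)
    (h : ∀ v, l2Norm (A *ᵥ v) ≤ c * l2Norm v) : ‖A‖ ≤ c := by
  rw [l2_opNorm_def]
  exact ContinuousLinearMap.opNorm_le_bound _ hc fun x => h x.ofLp

omit [DecidableEq n] in
lemma l2_opNorm_transpose [DecidableEq m] [DecidableEq n] (A : Matrix m n ℝ) : ‖Aᵀ‖ = ‖A‖ := by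
  rw [← conjTranspose_eq_transpose_of_trivial, l2_opNorm_conjTranspose]

lemma norm_le_one_of_isStarProjection {P : Matrix n n ℝ} (hP : IsStarProjection P) : ‖P‖ ≤ 1 :=
  IsStarProjection.norm_le P hP

/-- The matrix with a given family of entries. -/
def unvec {m n : Type*} : (m × n → ℝ) ≃ₗ[ℝ] Matrix m n ℝ :=
  (LinearEquiv.curry ℝ ℝ m n).trans (ofLinearEquiv ℝ)

@[simp]
lemma unvec_apply {m n : Type*} (X : m × n → ℝ) (i : m) (j : n) : unvec X i j = X (i, j) := rfl

@[simp]
lemma unvec_symm_apply {m n : Type*} (A : Matrix m n ℝ) (p : m × n) :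
    unvec.symm A p = A p.1 p.2 := rfl

omit [DecidableEq n] in
lemma dotProduct_unvec_mulVec (X : m × n → ℝ) (x : m → ℝ) (y : n → ℝ) :
    x ⬝ᵥ unvec X *ᵥ y = (fun p : m × n => x p.1 * y p.2) ⬝ᵥ X := by
  simp only [dotProduct, mulVec, unvec_apply, Fintype.sum_prod_type, Finset.mul_sum]
  exact Finset.sum_congr rfl fun i _ => Finset.sum_congr rfl fun j _ => by ring

omit [DecidableEq n] in
lemma outer_dotProduct_outer (x : m → ℝ) (y : n → ℝ) :
    (fun p : m × n => x p.1 * y p.2) ⬝ᵥ (fun p => x p.1 * y p.2) = (x ⬝ᵥ x) * (y ⬝ᵥ y) := by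
  simp only [dotProduct, Fintype.sum_prod_type, Finset.sum_mul_sum]
  exact Finset.sum_congr rfl fun i _ => Finset.sum_congr rfl fun j _ => by ring

end Euclidean

section SpectralTail

variable {ι m n Ω : Type*} [Fintype ι] [Fintype m] [Fintype n] [DecidableEq n] [Fintype Ω]
  {w : Ω → ℝ} {κ : ℝ}

lemma SubGaussian.mulVec {κ' : Type*} [Fintype κ'] [DecidableEq ι] {X : Ω → ι → ℝ}
    (hX : SubGaussian w X κ) (hκ : 0 ≤ κ) {A : Matrix κ' ι ℝ} {c : ℝ} (hA : ‖A‖ ≤ c) :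
    SubGaussian w (fun ω => A *ᵥ X ω) (κ * c ^ 2) := fun t => by
  classical
  simp only [dotProduct_mulVec]
  refine (hX _).trans (Real.exp_le_exp.2 ?_)
  rw [mul_assoc, ← l2Norm_sq, ← l2Norm_sq, ← mul_pow, ← mulVec_transpose]
  rw [← l2_opNorm_transpose] at hA
  gcongr
  · exact l2Norm_nonneg _
  · exact (l2Norm_mulVec_le _ _).trans (mul_le_mul_of_nonneg_right hA (l2Norm_nonneg t))

lemma SubGaussian.prob_lt_norm_unvec_le (hw : w ∈ stdSimplex ℝ Ω) {X : Ω → m × n → ℝ}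
    (hX : SubGaussian w X κ) (hκ : 0 < κ) {s : ℝ} (hs : 0 ≤ s) :
    prob w (fun ω => 4 * s < ‖unvec (X ω)‖) ≤
      Real.exp (2 * (Fintype.card m + Fintype.card n) - s ^ 2 / (4 * κ)) := by
  obtain ⟨N₁, hcard₁, hle₁, hnet₁⟩ := exists_half_net (EuclideanSpace ℝ m)
  obtain ⟨N₂, hcard₂, hle₂, hnet₂⟩ := exists_half_net (EuclideanSpace ℝ n)
  rw [finrank_euclideanSpace] at hcard₁ hcard₂
  have hsub : ∀ ω, 4 * s < ‖unvec (X ω)‖ →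
      ∃ p ∈ N₁ ×ˢ N₂, s < (fun i : m × n => p.1 i.1 * p.2 i.2) ⬝ᵥ X ω := by
    intro ω
    contrapose!
    intro h
    rw [l2_opNorm_def, show 4 * s = 2 * (2 * s) by ring]
    refine opNorm_le_two_mul_of_half_net _ hnet₂ fun y hy =>
      norm_le_two_mul_of_half_net _ hnet₁ fun x hx => ?_
    refine le_trans (le_of_eq ?_) (h (x, y) (Finset.mk_mem_product hx hy))
    rw [← dotProduct_unvec_mulVec, EuclideanSpace.inner_eq_star_dotProduct, star_trivial,
      dotProduct_comm]
    rfl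
  have htail : ∀ p ∈ N₁ ×ˢ N₂,
      prob w (fun ω => s < (fun i : m × n => p.1 i.1 * p.2 i.2) ⬝ᵥ X ω) ≤
        Real.exp (-(s ^ 2 / (4 * κ))) := by
    intro p hp
    obtain ⟨h₁, h₂⟩ := Finset.mem_product.1 hp
    refine (hX.prob_lt_dotProduct_le hw hκ hs one_pos ?_).trans_eq (by rw [mul_one])
    rw [outer_dotProduct_outer, ← l2Norm_sq, ← l2Norm_sq]
    exact mul_le_one₀ (pow_le_one₀ (norm_nonneg _) (hle₁ _ h₁)) (sq_nonneg _)
      (pow_le_one₀ (norm_nonneg _) (hle₂ _ h₂))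
  calc prob w (fun ω => 4 * s < ‖unvec (X ω)‖)
      ≤ ∑ _p ∈ N₁ ×ˢ N₂, Real.exp (-(s ^ 2 / (4 * κ))) :=
        (prob_mono hw hsub).trans ((prob_exists_le hw _ _).trans (Finset.sum_le_sum htail))
    _ = (N₁.card * N₂.card : ℕ) * Real.exp (-(s ^ 2 / (4 * κ))) := by
        rw [Finset.sum_const, nsmul_eq_mul, Finset.card_product]
    _ ≤ 5 ^ (Fintype.card m + Fintype.card n) * Real.exp (-(s ^ 2 / (4 * κ))) := by
        rw [pow_add]
        gcongr
        exact_mod_cast Nat.mul_le_mul hcard₁ hcard₂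
    _ ≤ Real.exp 2 ^ (Fintype.card m + Fintype.card n) * Real.exp (-(s ^ 2 / (4 * κ))) := by
        gcongr
        linarith [Real.quadratic_le_exp_of_nonneg zero_le_two]
    _ = Real.exp (2 * (Fintype.card m + Fintype.card n) - s ^ 2 / (4 * κ)) := by
        rw [← Real.exp_nat_mul, ← Real.exp_add]
        push_cast
        ring_nf

end SpectralTail

/-! ### Golfing scheme -/

section Bernstein

variable {ι : Type*} [Fintype ι] [DecidableEq ι] {q : ℝ}

lemma expect_bern_not (q : ℝ) (f : (ι → Bool) → ℝ) :
    expect (bern (1 - q)) f = expect (bern q) fun b => f fun i => !b i := by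
  refine Fintype.sum_equiv (Equiv.piCongrRight fun _ => Equiv.boolNot) _ _ fun z => ?_
  have hprod : bern (1 - q) z = bern q ((Equiv.piCongrRight fun _ => Equiv.boolNot) z) :=
    Finset.prod_congr rfl fun i _ => by cases h : z i <;> simp [h]
  simp only [hprod, Equiv.piCongrRight_apply, Pi.map_apply, Equiv.boolNot_apply, Bool.not_not]

lemma prob_lt_dotProduct_centeredSelector_le (hq : 0 < q) (hq1 : q ≤ 1) {t : ι → ℝ} {a v : ℝ}
    (ha : 0 ≤ a) (hv : 0 < v) (htv : t ⬝ᵥ t ≤ v) (hta : ∀ i, a * |t i| ≤ 2 * v) :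
    prob (bern q) (fun b => a < t ⬝ᵥ fun i => centeredSelector q (b i))
      ≤ Real.exp (-(q * a ^ 2 / (4 * v))) := by
  have hq' : q ∈ unitInterval := ⟨hq.le, hq1⟩
  set θ := q * a / (2 * v)
  have hsmall (i : ι) : |θ * t i| ≤ q := by
    rw [abs_mul, abs_of_nonneg (by positivity), div_mul_eq_mul_div, div_le_iff₀ (by positivity),
      mul_assoc]
    exact mul_le_mul_of_nonneg_left (hta i) hq.le
  calc prob (bern q) (fun b => a < t ⬝ᵥ fun i => centeredSelector q (b i))
      ≤ Real.exp (-(θ * a)) *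
          expect (bern q) fun b => Real.exp (∑ i, θ * t i * centeredSelector q (b i)) := by
        simpa only [dotProduct, Finset.mul_sum, mul_assoc] using
          prob_lt_le_exp_mul_expect (bern_mem_stdSimplex hq')
            (fun b => t ⬝ᵥ fun i => centeredSelector q (b i)) θ a (by positivity)
    _ ≤ Real.exp (-(θ * a)) * Real.exp (∑ i, (θ * t i) ^ 2 / q) := by
        gcongr
        exact expect_exp_sum_le hq' (g := fun i b => θ * t i * centeredSelector q b)
          fun i => centeredSelector_mgf_le_of_abs_le hq hq1 (hsmall i)
    _ ≤ Real.exp (-(θ * a)) * Real.exp (θ ^ 2 * v / q) := by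
        gcongr
        rw [← Finset.sum_div]
        gcongr
        simp only [mul_pow, ← Finset.mul_sum]
        gcongr
        simpa only [dotProduct, ← sq] using htv
    _ = Real.exp (-(q * a ^ 2 / (4 * v))) := by
        rw [← Real.exp_add]
        congr 1
        simp only [θ]
        field_simp
        ring

variable {Ω : Type*} [Fintype Ω] {w : Ω → ℝ}

lemma prob_lt_abs_le (hw : w ∈ stdSimplex ℝ Ω) (f : Ω → ℝ) (a : ℝ) :
    prob w (fun ω => a < |f ω|) ≤ prob w (fun ω => a < f ω) + prob w fun ω => a < -f ω :=
  (prob_mono hw fun _ => lt_abs.1).trans (prob_or_le hw _ _)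

omit [DecidableEq ι] in
lemma SubGaussian.prob_lt_abs_dotProduct_le (hw : w ∈ stdSimplex ℝ Ω) {X : Ω → ι → ℝ} {κ : ℝ}
    (hX : SubGaussian w X κ) (hκ : 0 < κ) {s v : ℝ} (hs : 0 ≤ s) (hv : 0 < v) {t : ι → ℝ}
    (ht : t ⬝ᵥ t ≤ v) :
    prob w (fun ω => s < |t ⬝ᵥ X ω|) ≤ 2 * Real.exp (-(s ^ 2 / (4 * κ * v))) := by
  have hneg := hX.prob_lt_dotProduct_le hw hκ hs hv (t := -t) (by simpa using ht)
  simp only [neg_dotProduct] at hneg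
  linarith [prob_lt_abs_le hw (fun ω => t ⬝ᵥ X ω) s, hX.prob_lt_dotProduct_le hw hκ hs hv ht]

end Bernstein

section ProjectionEntries

variable {ι : Type*} [Fintype ι] {P : Matrix ι ι ℝ} {μ : ℝ}

lemma mulVec_apply_eq_col_dotProduct (hP : IsStarProjection P) (v : ι → ℝ) (i : ι) :
    (P *ᵥ v) i = P.col i ⬝ᵥ v := by
  conv_lhs => rw [← transpose_eq_of_isStarProjection hP]
  rfl

lemma abs_apply_le (hP : IsStarProjection P) (hμ : ∀ i, P i i ≤ μ) (i j : ι) : |P i j| ≤ μ := by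
  have hcol (k : ι) : l2Norm (P.col k) ^ 2 ≤ μ := by
    rw [l2Norm_sq, col_dotProduct_col hP]
    exact hμ k
  have hentry : P i j = P.col i ⬝ᵥ P.col j := by
    rw [← mulVec_apply_eq_col_dotProduct hP]
    conv_lhs => rw [← hP.isIdempotentElem.eq]
    rfl
  rw [hentry]
  refine (abs_dotProduct_le_l2Norm _ _).trans ?_
  linarith [two_mul_le_add_sq (l2Norm (P.col i)) (l2Norm (P.col j)), hcol i, hcol j]

end ProjectionEntries

section Golfing

variable {m n : Type*} [Fintype m] [Fintype n] [DecidableEq m] [DecidableEq n]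
  {P : Matrix (m × n) (m × n) ℝ} {q ε μ M : ℝ} {Z : m × n → ℝ}

/-- The part of `Z` that a batch `b` of Bernoulli-`q` observations, rescaled by `q⁻¹`, fails to
reproduce: the other part `Z - batchError q b Z` is supported on `b`. -/
noncomputable def batchError {ι : Type*} (q : ℝ) (b : ι → Bool) (Z : ι → ℝ) : ι → ℝ :=
  fun i => centeredSelector q (b i) * Z i

lemma sub_batchError_apply {ι : Type*} (q : ℝ) (b : ι → Bool) (Z : ι → ℝ) (i : ι) :
    (Z - batchError q b Z) i = if b i then q⁻¹ * Z i else 0 := by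
  rw [Pi.sub_apply, batchError]
  cases b i
  · rw [centeredSelector_false]
    simp
  · rw [centeredSelector_true]
    simp only [if_true]
    ring

lemma dotProduct_batchError {ι : Type*} [Fintype ι] (q : ℝ) (b : ι → Bool) (Z t : ι → ℝ) :
    t ⬝ᵥ batchError q b Z = (fun i => t i * Z i) ⬝ᵥ fun i => centeredSelector q (b i) := by
  simp only [dotProduct, batchError]
  exact Finset.sum_congr rfl fun i _ => by ring

lemma sum_mul_sq_le {ι : Type*} [Fintype ι] {Z : ι → ℝ} (hZ : ∀ i, |Z i| ≤ M) (t : ι → ℝ) :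
    (fun i => t i * Z i) ⬝ᵥ (fun i => t i * Z i) ≤ M ^ 2 * (t ⬝ᵥ t) := by
  simp only [dotProduct, Finset.mul_sum]
  refine Finset.sum_le_sum fun i _ => ?_
  have : Z i ^ 2 ≤ M ^ 2 := sq_le_sq.2 ((hZ i).trans (le_abs_self M))
  nlinarith [mul_self_nonneg (t i)]

lemma subGaussian_batchError (hq : 0 < q) (hq1 : q ≤ 1) {ι : Type*} [Fintype ι] [DecidableEq ι]
    {Z : ι → ℝ} (hZ : ∀ i, |Z i| ≤ M) :
    SubGaussian (bern q) (fun b => batchError q b Z) (M ^ 2 / q ^ 2) := fun t => by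
  simp only [dotProduct_batchError]
  refine (expect_exp_sum_le ⟨hq.le, hq1⟩ (g := fun i b => t i * Z i * centeredSelector q b)
    fun i => centeredSelector_mgf_le hq hq1 (t i * Z i)).trans (Real.exp_le_exp.2 ?_)
  rw [← Finset.sum_div, div_mul_eq_mul_div]
  gcongr
  simpa only [dotProduct, ← sq] using sum_mul_sq_le hZ t

lemma prob_batchError_apply_le {ι : Type*} [Fintype ι] [DecidableEq ι] {P : Matrix ι ι ℝ}
    {Z : ι → ℝ} (hP : IsStarProjection P) (hμ0 : 0 < μ) (hμ : ∀ i, P i i ≤ μ) (hq : 0 < q)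
    (hq1 : q ≤ 1) (hε : 0 < ε) (hε1 : ε ≤ 1) (hM : 0 < M) (hZ : ∀ i, |Z i| ≤ M) (p : ι) :
    prob (bern q) (fun b => ε * M < |(P *ᵥ batchError q b Z) p|)
      ≤ 2 * Real.exp (-(q * ε ^ 2 / (4 * μ))) := by
  set t : ι → ℝ := fun i => P.col p i * Z i
  have hsq : t ⬝ᵥ t ≤ μ * M ^ 2 := by
    refine (sum_mul_sq_le hZ _).trans ?_
    rw [col_dotProduct_col hP, mul_comm]
    exact mul_le_mul_of_nonneg_right (hμ p) (sq_nonneg M)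
  have habs (i : ι) : ε * M * |t i| ≤ 2 * (μ * M ^ 2) := by
    have : |t i| ≤ μ * M := by
      rw [abs_mul]
      exact mul_le_mul (abs_apply_le hP hμ i p) (hZ i) (abs_nonneg _) hμ0.le
    calc ε * M * |t i| ≤ 1 * M * (μ * M) := by gcongr
      _ ≤ 2 * (μ * M ^ 2) := by nlinarith [mul_pos hμ0 (sq_pos_of_pos hM)]
  have hexp : q * (ε * M) ^ 2 / (4 * (μ * M ^ 2)) = q * ε ^ 2 / (4 * μ) := by field_simp
  have hpos := prob_lt_dotProduct_centeredSelector_le hq hq1 (by positivity : 0 ≤ ε * M)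
    (by positivity) hsq habs
  have hneg := prob_lt_dotProduct_centeredSelector_le (t := -t) (v := μ * M ^ 2) hq hq1
    (by positivity : 0 ≤ ε * M) (by positivity) (by simpa using hsq) (by simpa using habs)
  rw [hexp] at hpos hneg
  simp only [mulVec_apply_eq_col_dotProduct hP, dotProduct_batchError]
  refine (prob_lt_abs_le (bern_mem_stdSimplex ⟨hq.le, hq1⟩) _ _).trans ?_
  simp only [neg_dotProduct] at hneg
  linarith

lemma prob_norm_batchError_le (hmn : Fintype.card n ≤ Fintype.card m) (hq : 0 < q) (hq1 : q ≤ 1)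
    (hM : 0 < M) (hZ : ∀ i, |Z i| ≤ M) :
    prob (bern q) (fun b => 26 * √(Fintype.card m) / q * M < ‖unvec (batchError q b Z)‖)
      ≤ Real.exp (-(6 * Fintype.card m)) := by
  have htail := (subGaussian_batchError hq hq1 hZ).prob_lt_norm_unvec_le
    (bern_mem_stdSimplex ⟨hq.le, hq1⟩) (by positivity)
    (s := 13 / 2 * √(Fintype.card m) / q * M) (by positivity)
  rw [show 4 * (13 / 2 * √(Fintype.card m) / q * M) = 26 * √(Fintype.card m) / q * M by ring]
    at htail
  refine htail.trans (Real.exp_le_exp.2 ?_)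
  have hexp : (13 / 2 * √(Fintype.card m) / q * M) ^ 2 / (4 * (M ^ 2 / q ^ 2))
      = 169 / 16 * Fintype.card m := by
    rw [mul_pow, div_pow, mul_pow, Real.sq_sqrt (Nat.cast_nonneg _)]
    field_simp
    ring
  have : (Fintype.card n : ℝ) ≤ Fintype.card m := by exact_mod_cast hmn
  rw [hexp]
  linarith [(Nat.cast_nonneg (Fintype.card m) : (0 : ℝ) ≤ _)]

/-- The outcome of `k` rounds of golfing towards `Z`: a vector `Y` vanishing on `z` that reproduces
`Z` on the range of `P` up to an error `Z'` with entries at most `ε ^ k * M`, and is small off that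
range. -/
def Golfed (P : Matrix (m × n) (m × n) ℝ) (q ε : ℝ) (k : ℕ) (M : ℝ) (Z : m × n → ℝ)
    (z : m × n → Bool) : Prop :=
  ∃ Y Z' : m × n → ℝ, (∀ i, z i = true → Y i = 0) ∧ P *ᵥ Z' = Z' ∧ P *ᵥ Y = Z - Z' ∧
    (∀ i, |Z' i| ≤ ε ^ k * M) ∧ ‖unvec ((1 - P) *ᵥ Y)‖ ≤ 52 * √(Fintype.card m) / q * M ∧
    ∀ i, |Y i| ≤ 2 / q * M

lemma golfed_zero (hq : 0 < q) (hM : 0 ≤ M) (hPZ : P *ᵥ Z = Z) (hZ : ∀ i, |Z i| ≤ M)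
    (z : m × n → Bool) : Golfed P q ε 0 M Z z := by
  refine ⟨0, Z, fun _ _ => rfl, hPZ, by simp, by simpa using hZ, ?_, fun i => ?_⟩
  · rw [mulVec_zero, map_zero, norm_zero]
    positivity
  · rw [Pi.zero_apply, abs_zero]
    positivity

lemma Golfed.step (hPnorm : ∀ X, ‖unvec ((1 - P) *ᵥ X)‖ ≤ ‖unvec X‖) {k : ℕ} (hq : 0 < q)
    (hε : ε ≤ 1 / 2) (hM : 0 ≤ M) (hPZ : P *ᵥ Z = Z) (hZ : ∀ i, |Z i| ≤ M)
    {b z : m × n → Bool} (hb : ‖unvec (batchError q b Z)‖ ≤ 26 * √(Fintype.card m) / q * M)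
    (hG : Golfed P q ε k (ε * M) (P *ᵥ batchError q b Z) z) :
    Golfed P q ε (k + 1) M Z fun i => !b i && z i := by
  obtain ⟨Y, Z', hY0, hPZ', hPY, hZ', hYnorm, hY⟩ := hG
  refine ⟨(Z - batchError q b Z) + Y, Z', fun i hi => ?_, hPZ', ?_, fun i => ?_, ?_, fun i => ?_⟩
  · rw [Bool.and_eq_true, Bool.not_eq_true'] at hi
    rw [Pi.add_apply, sub_batchError_apply, hi.1, hY0 i hi.2]
    simp
  · rw [mulVec_add, mulVec_sub, hPZ, hPY]
    abel
  · exact (hZ' i).trans_eq (by ring)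
  · have hproj : (1 - P) *ᵥ (Z - batchError q b Z + Y)
        = (1 - P) *ᵥ Y - (1 - P) *ᵥ batchError q b Z := by
      rw [mulVec_add, mulVec_sub, sub_mulVec 1 P Z, one_mulVec, hPZ, sub_self]
      abel
    rw [hproj, map_sub]
    have : 0 ≤ √(Fintype.card m) / q * M := by positivity
    calc ‖unvec ((1 - P) *ᵥ Y) - unvec ((1 - P) *ᵥ batchError q b Z)‖
        ≤ 52 * √(Fintype.card m) / q * (ε * M) + 26 * √(Fintype.card m) / q * M :=
          (norm_sub_le _ _).trans (add_le_add hYnorm ((hPnorm _).trans hb))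
      _ = (52 * ε + 26) * (√(Fintype.card m) / q * M) := by ring
      _ ≤ 52 * (√(Fintype.card m) / q * M) := by gcongr; linarith
      _ = 52 * √(Fintype.card m) / q * M := by ring
  · have hbatch : |(Z - batchError q b Z) i| ≤ q⁻¹ * M := by
      rw [sub_batchError_apply]
      split_ifs
      · rw [abs_mul, abs_of_pos (inv_pos.2 hq)]
        gcongr
        exact hZ i
      · rw [abs_zero]
        positivity
    have : 0 ≤ q⁻¹ * M := by positivity
    calc |(Z - batchError q b Z + Y) i| ≤ q⁻¹ * M + 2 / q * (ε * M) :=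
          (abs_add_le _ _).trans (add_le_add hbatch (hY i))
      _ = (1 + 2 * ε) * (q⁻¹ * M) := by ring
      _ ≤ 2 * (q⁻¹ * M) := by gcongr; linarith
      _ = 2 / q * M := by ring

/-- A batch is bad for golfing towards `Z` when its error is not contracted by the factor `ε` on the
range of `P`, or is large in spectral norm. -/
def BadBatch (P : Matrix (m × n) (m × n) ℝ) (q ε M : ℝ) (Z : m × n → ℝ) (b : m × n → Bool) :
    Prop :=
  (∃ p ∈ Finset.univ, ε * M < |(P *ᵥ batchError q b Z) p|) ∨
    26 * √(Fintype.card m) / q * M < ‖unvec (batchError q b Z)‖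

/-- A bound on the failure probability of one golfing round. -/
noncomputable def golfFailure (m n : Type*) [Fintype m] [Fintype n] (q ε μ : ℝ) : ℝ :=
  2 * (Fintype.card m * Fintype.card n) * Real.exp (-(q * ε ^ 2 / (4 * μ)))
    + Real.exp (-(6 * Fintype.card m))

lemma prob_badBatch_le (hmn : Fintype.card n ≤ Fintype.card m) (hP : IsStarProjection P)
    (hμ0 : 0 < μ) (hμ : ∀ i, P i i ≤ μ) (hq : 0 < q) (hq1 : q ≤ 1) (hε : 0 < ε) (hε1 : ε ≤ 1)
    (hM : 0 < M) (hZ : ∀ i, |Z i| ≤ M) :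
    prob (bern q) (BadBatch P q ε M Z) ≤ golfFailure m n q ε μ := by
  have hw : bern q ∈ stdSimplex ℝ (m × n → Bool) := bern_mem_stdSimplex ⟨hq.le, hq1⟩
  refine (prob_or_le hw _ _).trans (add_le_add ((prob_exists_le hw _ _).trans ?_)
    (prob_norm_batchError_le hmn hq hq1 hM hZ))
  refine (Finset.sum_le_card_nsmul _ _ _ fun p _ =>
    prob_batchError_apply_le hP hμ0 hμ hq hq1 hε hε1 hM hZ p).trans_eq ?_
  rw [Finset.card_univ, Fintype.card_prod, nsmul_eq_mul, Nat.cast_mul]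
  ring

lemma prob_not_golfed_le (hmn : Fintype.card n ≤ Fintype.card m) (hP : IsStarProjection P)
    (hPnorm : ∀ X, ‖unvec ((1 - P) *ᵥ X)‖ ≤ ‖unvec X‖) (hμ0 : 0 < μ) (hμ : ∀ i, P i i ≤ μ)
    (hq : 0 < q) (hq1 : q ≤ 1) (hε : 0 < ε) (hε2 : ε ≤ 1 / 2) (k : ℕ) (hM : 0 < M)
    (hPZ : P *ᵥ Z = Z) (hZ : ∀ i, |Z i| ≤ M) :
    prob (bern ((1 - q) ^ k)) (fun z => ¬ Golfed P q ε k M Z z) ≤ k * golfFailure m n q ε μ := by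
  have hq' : 1 - q ∈ unitInterval := ⟨sub_nonneg.2 hq1, by linarith⟩
  have hpow (k : ℕ) : (1 - q) ^ k ∈ unitInterval := ⟨pow_nonneg hq'.1 k, pow_le_one₀ hq'.1 hq'.2⟩
  have hfail : 0 ≤ golfFailure m n q ε μ := by
    rw [golfFailure]
    positivity
  induction k generalizing M Z with
  | zero =>
    simp only [golfed_zero hq hM.le hPZ hZ, not_true_eq_false, prob_false, Nat.cast_zero, zero_mul,
      le_refl]
  | succ k ih =>
    have hround : ∀ b, ¬ BadBatch P q ε M Z b →
        prob (bern ((1 - q) ^ k)) (fun z => ¬ Golfed P q ε (k + 1) M Z fun i => !b i && z i)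
          ≤ k * golfFailure m n q ε μ := by
      intro b hb
      simp only [BadBatch, not_or, not_exists, not_and, not_lt, Finset.mem_univ,
        forall_true_left] at hb
      refine (prob_mono (bern_mem_stdSimplex (hpow k)) fun z hG hG' => hG
        (hG'.step hPnorm hq hε2 hM.le hPZ hZ hb.2)).trans (ih (by positivity) ?_ hb.1)
      rw [mulVec_mulVec, hP.isIdempotentElem.eq]
    calc prob (bern ((1 - q) ^ (k + 1))) (fun z => ¬ Golfed P q ε (k + 1) M Z z)
        = expect (bern q) fun b => prob (bern ((1 - q) ^ k)) fun z =>
            ¬ Golfed P q ε (k + 1) M Z fun i => !b i && z i := by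
          rw [prob, pow_succ', ← expect_bern_and, expect_bern_not]
          rfl
      _ ≤ prob (bern q) (BadBatch P q ε M Z) + k * golfFailure m n q ε μ :=
          expect_prob_le (bern_mem_stdSimplex ⟨hq.le, hq1⟩)
            (bern_mem_stdSimplex (hpow k)) (by positivity) hround
      _ ≤ golfFailure m n q ε μ + k * golfFailure m n q ε μ := by
          gcongr
          exact prob_badBatch_le hmn hP hμ0 hμ hq hq1 hε (by linarith) hM hZ
      _ = (k + 1 : ℕ) * golfFailure m n q ε μ := by
          push_cast
          ring

end Golfing

/-! ### Sign certificate -/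

section Neumann

variable {ι : Type*} [Fintype ι] [DecidableEq ι] {P : Matrix ι ι ℝ} {z : ι → Bool} {τ : ℝ}

lemma mask_mulVec_apply (z : ι → Bool) (v : ι → ℝ) (i : ι) :
    (mask z *ᵥ v) i = if z i then v i else 0 := by
  rw [mask, mulVec_diagonal, ite_mul, one_mul, zero_mul]

lemma mask_isStarProjection (z : ι → Bool) : IsStarProjection (mask z) := by
  refine ⟨?_, ?_⟩
  · rw [IsIdempotentElem, mask, diagonal_mul_diagonal]
    congr 1
    funext i
    split_ifs <;> simp
  · exact (isHermitian_diagonal _).isSelfAdjoint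

lemma norm_mask_mul_sq_le (hP : IsStarProjection P) (hτ : 0 ≤ τ)
    (h : ∀ x, x ⬝ᵥ compress P z *ᵥ x ≤ τ * (x ⬝ᵥ x)) : ‖mask z * P‖ ^ 2 ≤ τ := by
  rw [← Real.le_sqrt (norm_nonneg _) hτ]
  refine l2_opNorm_le (Real.sqrt_nonneg τ) fun v => ?_
  rw [← Real.sqrt_sq (l2Norm_nonneg v), ← Real.sqrt_mul hτ, l2Norm_sq]
  refine Real.le_sqrt_of_sq_le ?_
  rw [l2Norm_sq]
  refine le_of_eq_of_le ?_ (h v)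
  rw [dotProduct_mulVec, vecMul_mulVec, ← dotProduct_mulVec, transpose_mul,
    transpose_eq_of_isStarProjection hP, transpose_eq_of_isStarProjection (mask_isStarProjection z),
    Matrix.mul_assoc, ← Matrix.mul_assoc (mask z), (mask_isStarProjection z).isIdempotentElem.eq,
    compress, Matrix.mul_assoc]

lemma norm_mask_mul_mask_le (hP : IsStarProjection P) (hτ : 0 ≤ τ)
    (h : ∀ x, x ⬝ᵥ compress P z *ᵥ x ≤ τ * (x ⬝ᵥ x)) : ‖mask z * P * mask z‖ ≤ τ := by
  have hfactor : mask z * P * mask z = mask z * P * (mask z * P)ᴴ := by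
    rw [conjTranspose_eq_transpose_of_trivial, transpose_mul, transpose_eq_of_isStarProjection hP,
      transpose_eq_of_isStarProjection (mask_isStarProjection z), ← Matrix.mul_assoc,
      Matrix.mul_assoc (mask z) P P, hP.isIdempotentElem.eq]
  rw [hfactor, ← star_eq_conjTranspose, CStarRing.norm_self_mul_star, ← sq]
  exact norm_mask_mul_sq_le hP hτ h

lemma exists_eq_one_add_mul {B : Matrix ι ι ℝ} (hB : ‖B‖ ≤ 1 / 2) :
    ∃ G : Matrix ι ι ℝ, G = 1 + B * G ∧ ‖G‖ ≤ 2 := by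
  have : CompleteSpace (Matrix ι ι ℝ) := FiniteDimensional.complete ℝ _
  obtain ⟨G, hG⟩ := (isUnit_one_sub_of_norm_lt_one (by linarith : ‖B‖ < 1)).exists_right_inv
  have hfix : G = 1 + B * G := by
    rw [← hG, Matrix.sub_mul, Matrix.one_mul, sub_add_cancel]
  refine ⟨G, hfix, ?_⟩
  have hone : ‖(1 : Matrix ι ι ℝ)‖ ≤ 1 := norm_le_one_of_isStarProjection (.one _)
  have hle : ‖G‖ ≤ 1 + 1 / 2 * ‖G‖ := by
    calc ‖G‖ = ‖1 + B * G‖ := by rw [← hfix]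
      _ ≤ ‖(1 : Matrix ι ι ℝ)‖ + ‖B‖ * ‖G‖ :=
          (norm_add_le _ _).trans (by gcongr; exact norm_mul_le _ _)
      _ ≤ 1 + 1 / 2 * ‖G‖ := by gcongr
  linarith

end Neumann

section SignCertificate

variable {m n : Type*} [Fintype m] [Fintype n] [DecidableEq m] [DecidableEq n]
  {P : Matrix (m × n) (m × n) ℝ} {μ ρ : ℝ}

lemma sparseSign_eq_mask_mulVec {ι : Type*} [Fintype ι] [DecidableEq ι] (z s : ι → Bool) :
    sparseSign (z, s) = mask z *ᵥ fun i => boolSign (s i) := by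
  funext i
  rw [mask_mulVec_apply, sparseSign]

/-- A certificate for the sign pattern `s` on the support `z`: a vector in the kernel of `P` that
agrees with the signs on `z`, is small off `z`, and is small in spectral norm. -/
def SignCert (P : Matrix (m × n) (m × n) ℝ) (z s : m × n → Bool) : Prop :=
  ∃ W : m × n → ℝ, P *ᵥ W = 0 ∧ (∀ i, z i = true → W i = boolSign (s i)) ∧
    (∀ i, z i = false → |W i| ≤ 1 / 4) ∧ ‖unvec W‖ ≤ √(Fintype.card m) / 8

-- `(1 - P) (1 - mask z * P * mask z)⁻¹ E` is the least-squares vector in the kernel of `P` that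
-- equals `E` on `z`.
lemma signCert_of_neumann (hP : IsStarProjection P)
    (hPnorm : ∀ X, ‖unvec ((1 - P) *ᵥ X)‖ ≤ ‖unvec X‖) {z s : m × n → Bool}
    {G : Matrix (m × n) (m × n) ℝ} (hG : G = 1 + mask z * P * mask z * G)
    (hE : ‖unvec (sparseSign (z, s))‖ ≤ √(Fintype.card m) / 16)
    (hBG : ‖unvec ((mask z * P * mask z * G) *ᵥ sparseSign (z, s))‖ ≤ √(Fintype.card m) / 16)
    (hentry : ∀ p, |P.col p ⬝ᵥ G *ᵥ sparseSign (z, s)| ≤ 1 / 4) : SignCert P z s := by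
  have hmask := (mask_isStarProjection z).isIdempotentElem.eq
  set E := sparseSign (z, s) with hEdef
  set v := G *ᵥ E with hv
  have hvE : v = E + (mask z * P * mask z * G) *ᵥ E := by
    conv_lhs => rw [hv, hG, add_mulVec, one_mulVec]
  have hmaskv : mask z *ᵥ v = v := by
    conv_lhs => rw [hvE]
    rw [mulVec_add, mulVec_mulVec]
    simp only [← Matrix.mul_assoc, hmask]
    rw [hEdef, sparseSign_eq_mask_mulVec, mulVec_mulVec, hmask, ← sparseSign_eq_mask_mulVec,
      ← hEdef, ← hvE]
  have hmaskPv : mask z *ᵥ (P *ᵥ v) = v - E := by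
    conv_rhs => rw [hvE, ← mulVec_mulVec, ← hv, ← mulVec_mulVec, hmaskv, ← mulVec_mulVec]
    rw [add_sub_cancel_left]
  have hW (i : m × n) : ((1 - P) *ᵥ v) i = v i - (P *ᵥ v) i := by
    rw [sub_mulVec, one_mulVec, Pi.sub_apply]
  refine ⟨(1 - P) *ᵥ v, ?_, fun i hi => ?_, fun i hi => ?_, ?_⟩
  · rw [mulVec_mulVec, hP.isIdempotentElem.mul_one_sub_self, zero_mulVec]
  · have hPv := congrFun hmaskPv i
    rw [mask_mulVec_apply, if_pos hi, Pi.sub_apply, hEdef, sparseSign, if_pos hi] at hPv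
    rw [hW, hPv, sub_sub_cancel]
  · have hvi := congrFun hmaskv i
    rw [mask_mulVec_apply, hi, if_neg Bool.false_ne_true] at hvi
    rw [hW, ← hvi, zero_sub, abs_neg, mulVec_apply_eq_col_dotProduct hP]
    exact hentry i
  · refine (hPnorm v).trans ?_
    rw [hvE, map_add]
    linarith [norm_add_le (unvec E) (unvec ((mask z * P * mask z * G) *ᵥ E))]

omit [DecidableEq m] in
lemma SubGaussian.prob_lt_norm_unvec_le_exp_neg_card {Ω : Type*} [Fintype Ω] {w : Ω → ℝ}
    {X : Ω → m × n → ℝ} {κ : ℝ} (hX : SubGaussian w X κ)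
    (hmn : Fintype.card n ≤ Fintype.card m) (hw : w ∈ stdSimplex ℝ Ω) (hκ : 0 < κ)
    (hκ_le : κ ≤ 1 / 10 ^ 5) :
    prob w (fun ω => √(Fintype.card m) / 16 < ‖unvec (X ω)‖) ≤ Real.exp (-Fintype.card m) := by
  have htail := hX.prob_lt_norm_unvec_le hw hκ (s := √(Fintype.card m) / 64) (by positivity)
  rw [show 4 * (√(Fintype.card m) / 64) = √(Fintype.card m) / 16 by ring] at htail
  refine htail.trans (Real.exp_le_exp.2 ?_)
  have hexp : 5 * (Fintype.card m : ℝ) ≤ (√(Fintype.card m) / 64) ^ 2 / (4 * κ) := by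
    rw [div_pow, Real.sq_sqrt (Nat.cast_nonneg _), le_div_iff₀ (by positivity)]
    nlinarith [(Nat.cast_nonneg (Fintype.card m) : (0 : ℝ) ≤ _)]
  have : (Fintype.card n : ℝ) ≤ Fintype.card m := by exact_mod_cast hmn
  linarith

lemma prob_norm_sparseSign_le (hmn : Fintype.card n ≤ Fintype.card m) (hρ : ρ ∈ unitInterval)
    (hρexp : ρ * Real.exp (10 ^ 5) ≤ 2 / 10 ^ 5) :
    prob (sparseSignLaw ρ) (fun ω : (m × n → Bool) × (m × n → Bool) =>
      √(Fintype.card m) / 16 < ‖unvec (sparseSign ω)‖) ≤ Real.exp (-Fintype.card m) := by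
  have hsub : SubGaussian (sparseSignLaw ρ) (sparseSign (ι := m × n)) (1 / 10 ^ 5) :=
    subGaussian_sparseSign hρ (by norm_num) (by rwa [one_div_one_div, mul_one_div])
  exact hsub.prob_lt_norm_unvec_le_exp_neg_card hmn (sparseSignLaw_mem_stdSimplex hρ)
    (by norm_num) le_rfl

lemma prob_norm_mulVec_boolSign_le (hmn : Fintype.card n ≤ Fintype.card m)
    {A : Matrix (m × n) (m × n) ℝ} (hA : ‖A‖ ≤ 1 / 500) :
    prob (bern (1 / 2)) (fun s => √(Fintype.card m) / 16 < ‖unvec (A *ᵥ fun i => boolSign (s i))‖)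
      ≤ Real.exp (-Fintype.card m) :=
  (subGaussian_boolSign.mulVec (by norm_num) hA).prob_lt_norm_unvec_le_exp_neg_card hmn
    (bern_mem_stdSimplex ⟨by norm_num, by norm_num⟩) (by norm_num) (by norm_num)

lemma prob_exists_lt_abs_col_dotProduct_le (hP : IsStarProjection P) (hμ0 : 0 < μ)
    (hμ : ∀ i, P i i ≤ μ) {A : Matrix (m × n) (m × n) ℝ} (hA : ‖A‖ ≤ 2) :
    prob (bern (1 / 2)) (fun s => ∃ p ∈ Finset.univ,
        1 / 4 < |P.col p ⬝ᵥ A *ᵥ fun i => boolSign (s i)|)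
      ≤ 2 * (Fintype.card m * Fintype.card n) * Real.exp (-(1 / (128 * μ))) := by
  have hw : bern (1 / 2) ∈ stdSimplex ℝ (m × n → Bool) :=
    bern_mem_stdSimplex ⟨by norm_num, by norm_num⟩
  have hsub : SubGaussian (bern (1 / 2))
      (fun (s : m × n → Bool) => A *ᵥ fun i => boolSign (s i)) _ :=
    subGaussian_boolSign.mulVec (by norm_num) hA
  have htail (p : m × n) : prob (bern (1 / 2))
      (fun s => 1 / 4 < |P.col p ⬝ᵥ A *ᵥ fun i => boolSign (s i)|)
        ≤ 2 * Real.exp (-(1 / (128 * μ))) := by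
    refine (hsub.prob_lt_abs_dotProduct_le hw (by norm_num) (by norm_num) hμ0 ?_).trans_eq ?_
    · rw [col_dotProduct_col hP]
      exact hμ p
    · congr 3
      field_simp
      norm_num
  refine (prob_exists_le hw _ _).trans
    ((Finset.sum_le_card_nsmul _ _ _ fun p _ => htail p).trans_eq ?_)
  rw [Finset.card_univ, Fintype.card_prod, nsmul_eq_mul, Nat.cast_mul]
  ring

/-- The part of the failure of a sign certificate that depends on the support `z` only through the
conditioning of `compress P z`. -/
def NeumannFailure (P : Matrix (m × n) (m × n) ℝ) (z s : m × n → Bool) : Prop :=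
  ∀ G, G = 1 + mask z * P * mask z * G →
    √(Fintype.card m) / 16 < ‖unvec ((mask z * P * mask z * G) *ᵥ sparseSign (z, s))‖ ∨
    ∃ p ∈ Finset.univ, 1 / 4 < |P.col p ⬝ᵥ G *ᵥ sparseSign (z, s)|

lemma prob_neumannFailure_le (hmn : Fintype.card n ≤ Fintype.card m) (hP : IsStarProjection P)
    (hμ0 : 0 < μ) (hμ : ∀ i, P i i ≤ μ) {z : m × n → Bool}
    (hz : ¬ ∃ x, 1 / 1000 * (x ⬝ᵥ x) < x ⬝ᵥ compress P z *ᵥ x) :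
    prob (bern (1 / 2)) (NeumannFailure P z) ≤ Real.exp (-Fintype.card m)
      + 2 * (Fintype.card m * Fintype.card n) * Real.exp (-(1 / (128 * μ))) := by
  push Not at hz
  have hw : bern (1 / 2) ∈ stdSimplex ℝ (m × n → Bool) :=
    bern_mem_stdSimplex ⟨by norm_num, by norm_num⟩
  have hB := norm_mask_mul_mask_le hP (by norm_num) hz
  obtain ⟨G, hG, hGnorm⟩ := exists_eq_one_add_mul (hB.trans (by norm_num))
  have hmask := norm_le_one_of_isStarProjection (mask_isStarProjection z)
  have hGmask : ‖G * mask z‖ ≤ 2 :=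
    (norm_mul_le _ _).trans (by nlinarith [norm_nonneg G, norm_nonneg (mask z)])
  have hBG : ‖mask z * P * mask z * (G * mask z)‖ ≤ 1 / 500 :=
    (norm_mul_le _ _).trans (by nlinarith [norm_nonneg (G * mask z)])
  refine (prob_mono hw fun s hs => ?_).trans ((prob_or_le hw _ _).trans (add_le_add
    (prob_norm_mulVec_boolSign_le hmn hBG)
    (prob_exists_lt_abs_col_dotProduct_le hP hμ0 hμ hGmask)))
  simpa only [sparseSign_eq_mask_mulVec, mulVec_mulVec, Matrix.mul_assoc] using hs G hG

/-- A bound on the failure probability of a sign certificate over a well-conditioned support. -/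
noncomputable def signFailure (m n : Type*) [Fintype m] [Fintype n] (μ : ℝ) : ℝ :=
  2 * Real.exp (-Fintype.card m)
    + 2 * (Fintype.card m * Fintype.card n) * Real.exp (-(1 / (128 * μ)))

lemma prob_not_signCert_le (hmn : Fintype.card n ≤ Fintype.card m) (hP : IsStarProjection P)
    (hPnorm : ∀ X, ‖unvec ((1 - P) *ᵥ X)‖ ≤ ‖unvec X‖) (hμ0 : 0 < μ) (hμ : ∀ i, P i i ≤ μ)
    (hρ : ρ ∈ unitInterval) (hρexp : ρ * Real.exp (10 ^ 5) ≤ 2 / 10 ^ 5) :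
    prob (sparseSignLaw ρ) (fun ω => ¬ SignCert P ω.1 ω.2)
      ≤ prob (bern ρ) (fun z => ∃ x, 1 / 1000 * (x ⬝ᵥ x) < x ⬝ᵥ compress P z *ᵥ x)
        + signFailure m n μ := by
  have hw := sparseSignLaw_mem_stdSimplex (ι := m × n) hρ
  have hcases (ω : (m × n → Bool) × (m × n → Bool)) (hω : ¬ SignCert P ω.1 ω.2) :
      √(Fintype.card m) / 16 < ‖unvec (sparseSign ω)‖ ∨ NeumannFailure P ω.1 ω.2 := by
    rw [or_iff_not_imp_left, not_lt]
    intro hE G hG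
    by_contra hgood
    simp only [not_or, not_exists, not_and, not_lt, Finset.mem_univ, forall_true_left] at hgood
    exact hω (signCert_of_neumann hP hPnorm hG hE hgood.1 hgood.2)
  have hneumann : prob (sparseSignLaw ρ) (fun ω => NeumannFailure P ω.1 ω.2) ≤
      prob (bern ρ) (fun z => ∃ x, 1 / 1000 * (x ⬝ᵥ x) < x ⬝ᵥ compress P z *ᵥ x)
        + (Real.exp (-Fintype.card m)
          + 2 * (Fintype.card m * Fintype.card n) * Real.exp (-(1 / (128 * μ)))) := by
    rw [prob, sparseSignLaw, expect_prodWeight]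
    exact expect_prob_le (bern_mem_stdSimplex hρ)
      (bern_mem_stdSimplex ⟨by norm_num, by norm_num⟩) (by positivity) fun z hz =>
      prob_neumannFailure_le hmn hP hμ0 hμ hz
  rw [signFailure]
  linarith [(prob_mono hw hcases).trans (prob_or_le hw _ _),
    prob_norm_sparseSign_le (m := m) hmn hρ hρexp]

end SignCertificate

/-! ### Tangent space and nuclear norm -/

open scoped Kronecker

section Tangent

variable {m n r : Type*} [Fintype m] [Fintype n] [Fintype r] [DecidableEq m] [DecidableEq n]
  [DecidableEq r] {U : Matrix m r ℝ} {V : Matrix n r ℝ}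

/-- The orthogonal projection onto the orthogonal complement of the column space of a matrix with
orthonormal columns. -/
def coproj (U : Matrix m r ℝ) : Matrix m m ℝ := 1 - U * Uᵀ

/-- The orthogonal projection onto the tangent space of the rank-`r` matrices at `U * Σ * Vᵀ`, for
`U` and `V` with orthonormal columns, acting on matrices read as vectors of entries. -/
def tproj (U : Matrix m r ℝ) (V : Matrix n r ℝ) : Matrix (m × n) (m × n) ℝ :=
  1 - coproj U ⊗ₖ coproj V

lemma coproj_isStarProjection (hU : Uᵀ * U = 1) : IsStarProjection (coproj U) := by
  refine IsStarProjection.one_sub ⟨?_, ?_⟩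
  · rw [IsIdempotentElem, Matrix.mul_assoc, ← Matrix.mul_assoc Uᵀ, hU, Matrix.one_mul]
  · rw [IsSelfAdjoint, star_eq_conjTranspose, conjTranspose_eq_transpose_of_trivial, transpose_mul,
      transpose_transpose]

lemma coproj_mul_self (hU : Uᵀ * U = 1) : coproj U * U = 0 := by
  rw [coproj, Matrix.sub_mul, Matrix.one_mul, Matrix.mul_assoc, hU, Matrix.mul_one, sub_self]

lemma transpose_mul_coproj (hU : Uᵀ * U = 1) : Uᵀ * coproj U = 0 := by
  rw [coproj, Matrix.mul_sub, Matrix.mul_one, ← Matrix.mul_assoc, hU, Matrix.one_mul, sub_self]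

lemma l2Norm_transpose_mulVec_sq_add (hU : Uᵀ * U = 1) (x : m → ℝ) :
    l2Norm (Uᵀ *ᵥ x) ^ 2 + l2Norm (coproj U *ᵥ x) ^ 2 = l2Norm x ^ 2 := by
  have hproj := coproj_isStarProjection hU
  simp only [l2Norm_sq]
  rw [dotProduct_mulVec, dotProduct_mulVec (coproj U *ᵥ x), vecMul_mulVec, vecMul_mulVec,
    transpose_transpose, transpose_eq_of_isStarProjection hproj, hproj.isIdempotentElem.eq,
    ← add_dotProduct, ← vecMul_add, coproj, add_sub_cancel, vecMul_one]

lemma l2Norm_mulVec_add_coproj_sq (hU : Uᵀ * U = 1) (a : r → ℝ) (x : m → ℝ) :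
    l2Norm (U *ᵥ a + coproj U *ᵥ x) ^ 2 = l2Norm a ^ 2 + l2Norm (coproj U *ᵥ x) ^ 2 := by
  rw [← l2Norm_transpose_mulVec_sq_add hU]
  simp only [mulVec_add, mulVec_mulVec, hU, coproj_mul_self hU, transpose_mul_coproj hU,
    (coproj_isStarProjection hU).isIdempotentElem.eq, one_mulVec, zero_mulVec, add_zero, zero_add]

lemma norm_mul_transpose_add_le (hU : Uᵀ * U = 1) (hV : Vᵀ * V = 1) {R : Matrix m n ℝ}
    (hR : ‖coproj U * R * coproj V‖ ≤ 1) : ‖U * Vᵀ + coproj U * R * coproj V‖ ≤ 1 := by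
  refine l2_opNorm_le zero_le_one fun x => ?_
  rw [one_mul, ← sq_le_sq₀ (l2Norm_nonneg _) (l2Norm_nonneg _),
    ← l2Norm_transpose_mulVec_sq_add hV x]
  have hsplit : (U * Vᵀ + coproj U * R * coproj V) *ᵥ x
      = U *ᵥ (Vᵀ *ᵥ x) + coproj U *ᵥ ((R * coproj V) *ᵥ x) := by
    simp only [add_mulVec, mulVec_mulVec, Matrix.mul_assoc]
  have hcompl : coproj U *ᵥ ((R * coproj V) *ᵥ x)
      = (coproj U * R * coproj V) *ᵥ (coproj V *ᵥ x) := by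
    simp only [mulVec_mulVec, Matrix.mul_assoc, (coproj_isStarProjection hV).isIdempotentElem.eq]
  rw [hsplit, l2Norm_mulVec_add_coproj_sq hU, hcompl]
  gcongr
  · exact l2Norm_nonneg _
  · exact (l2Norm_mulVec_le _ _).trans (mul_le_of_le_one_left (l2Norm_nonneg _) hR)

lemma tproj_isStarProjection (hU : Uᵀ * U = 1) (hV : Vᵀ * V = 1) :
    IsStarProjection (tproj U V) := by
  have hpU := coproj_isStarProjection hU
  have hpV := coproj_isStarProjection hV
  refine IsStarProjection.one_sub ⟨?_, ?_⟩
  · rw [IsIdempotentElem, ← mul_kronecker_mul, hpU.isIdempotentElem.eq, hpV.isIdempotentElem.eq]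
  · rw [IsSelfAdjoint, star_eq_conjTranspose, conjTranspose_kronecker, ← star_eq_conjTranspose,
      ← star_eq_conjTranspose, hpU.isSelfAdjoint.star_eq, hpV.isSelfAdjoint.star_eq]

lemma unvec_one_sub_tproj_mulVec (hV : Vᵀ * V = 1) (X : m × n → ℝ) :
    unvec ((1 - tproj U V) *ᵥ X) = coproj U * unvec X * coproj V := by
  have hvec : X = vec (unvec X)ᵀ := rfl
  conv_lhs => rw [tproj, sub_sub_cancel, hvec, kronecker_mulVec_vec]
  ext i j
  rw [unvec_apply, vec, ← transpose_apply (_ * _), transpose_mul, transpose_mul,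
    transpose_transpose, transpose_transpose,
    transpose_eq_of_isStarProjection (coproj_isStarProjection hV), ← Matrix.mul_assoc]

lemma norm_unvec_one_sub_tproj_mulVec_le (hU : Uᵀ * U = 1) (hV : Vᵀ * V = 1) (X : m × n → ℝ) :
    ‖unvec ((1 - tproj U V) *ᵥ X)‖ ≤ ‖unvec X‖ := by
  have hpU := norm_le_one_of_isStarProjection (coproj_isStarProjection hU)
  have hpV := norm_le_one_of_isStarProjection (coproj_isStarProjection hV)
  rw [unvec_one_sub_tproj_mulVec hV]
  calc ‖coproj U * unvec X * coproj V‖ ≤ ‖coproj U‖ * ‖unvec X‖ * ‖coproj V‖ :=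
        (l2_opNorm_mul _ _).trans (by gcongr; exact l2_opNorm_mul _ _)
    _ ≤ 1 * ‖unvec X‖ * 1 := by gcongr
    _ = ‖unvec X‖ := by ring

lemma tproj_mulVec_mul_transpose (hU : Uᵀ * U = 1) (hV : Vᵀ * V = 1) :
    tproj U V *ᵥ unvec.symm (U * Vᵀ) = unvec.symm (U * Vᵀ) := by
  have hzero : (1 - tproj U V) *ᵥ unvec.symm (U * Vᵀ) = 0 := by
    rw [← unvec.map_eq_zero_iff, unvec_one_sub_tproj_mulVec hV, LinearEquiv.apply_symm_apply,
      ← Matrix.mul_assoc, coproj_mul_self hU, Matrix.zero_mul, Matrix.zero_mul]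
  rw [sub_mulVec, one_mulVec, sub_eq_zero] at hzero
  exact hzero.symm

omit [Fintype m] [Fintype n] [DecidableEq r] in
lemma tproj_apply_self_le {α β : ℝ} (hα : ∀ i, ∑ k, U i k ^ 2 ≤ α) (hβ : ∀ j, ∑ k, V j k ^ 2 ≤ β)
    (p : m × n) : tproj U V p p ≤ α + β := by
  have hdiag : tproj U V p p = 1 - (1 - ∑ k, U p.1 k ^ 2) * (1 - ∑ k, V p.2 k ^ 2) := by
    simp only [tproj, coproj, Matrix.sub_apply, one_apply_eq, kroneckerMap_apply, mul_apply,
      transpose_apply, sq]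
  have hprod : 0 ≤ (∑ k, U p.1 k ^ 2) * ∑ k, V p.2 k ^ 2 := by positivity
  rw [hdiag]
  linarith [hα p.1, hβ p.2]

end Tangent

section NuclearNorm

variable {n1 n2 : ℕ}

lemma frob_eq_l2Norm (A : Matrix (Fin n1) (Fin n2) ℝ) : frob A = l2Norm (unvec.symm A) := by
  rw [frob, ← Real.sqrt_sq (l2Norm_nonneg _), l2Norm_sq, dotProduct, Fintype.sum_prod_type]
  simp only [unvec_symm_apply, sq]

lemma l1norm_eq_sum_abs (A : Matrix (Fin n1) (Fin n2) ℝ) :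
    l1norm A = ∑ p, |unvec.symm A p| := by
  rw [l1norm, Fintype.sum_prod_type]
  rfl

lemma minner_eq_dotProduct (A B : Matrix (Fin n1) (Fin n2) ℝ) :
    minner A B = unvec.symm A ⬝ᵥ unvec.symm B := by
  rw [minner, dotProduct, Fintype.sum_prod_type]
  rfl

lemma minner_eq_trace (A B : Matrix (Fin n1) (Fin n2) ℝ) : minner A B = (Aᵀ * B).trace := by
  simp only [minner, trace, diag_apply, mul_apply, transpose_apply]
  exact Finset.sum_comm

lemma spec_eq_norm (A : Matrix (Fin n1) (Fin n2) ℝ) : spec A = ‖A‖ := by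
  rw [l2_opNorm_def, ← ContinuousLinearMap.sSup_unitClosedBall_eq_norm, spec]
  congr 1
  ext c
  constructor
  · rintro ⟨x, hx, rfl⟩
    refine ⟨WithLp.toLp 2 x, ?_, ?_⟩
    · rw [mem_closedBall_zero_iff, EuclideanSpace.norm_eq, Real.sqrt_le_one]
      simpa using hx
    · simp [EuclideanSpace.norm_eq, mulVec, dotProduct]
  · rintro ⟨x, hx, rfl⟩
    refine ⟨x.ofLp, ?_, ?_⟩
    · rw [mem_closedBall_zero_iff, EuclideanSpace.norm_eq, Real.sqrt_le_one] at hx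
      simpa using hx
    · simp [EuclideanSpace.norm_eq, mulVec, dotProduct]

lemma abs_apply_le_norm {m n : Type*} [Fintype m] [Fintype n] [DecidableEq n]
    (A : Matrix m n ℝ) (i : m) (j : n) : |A i j| ≤ ‖A‖ := by
  have hcol : |A i j| ≤ l2Norm (A *ᵥ Pi.single j 1) := by
    rw [mulVec_single_one]
    exact PiLp.norm_apply_le (WithLp.toLp 2 (A.col j)) i
  have hsingle : l2Norm (Pi.single j 1 : n → ℝ) = 1 := by
    rw [l2Norm, PiLp.toLp_single, PiLp.norm_single, norm_one]
  simpa only [hsingle, mul_one] using hcol.trans (l2Norm_mulVec_le A (Pi.single j 1))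

lemma norm_unvec_le {m n : Type*} [Fintype m] [Fintype n] [DecidableEq n] (X : m × n → ℝ) :
    ‖unvec X‖ ≤ l2Norm X := by
  refine l2_opNorm_le (l2Norm_nonneg X) fun v => ?_
  rw [← sq_le_sq₀ (l2Norm_nonneg _) (mul_nonneg (l2Norm_nonneg _) (l2Norm_nonneg _)), mul_pow]
  simp only [l2Norm_sq, dotProduct, mulVec, unvec_apply, ← sq]
  rw [Fintype.sum_prod_type, Finset.sum_mul]
  exact Finset.sum_le_sum fun i _ => Finset.sum_mul_sq_le_sq_mul_sq _ _ _

lemma minner_le_nuc (A : Matrix (Fin n1) (Fin n2) ℝ) {B : Matrix (Fin n1) (Fin n2) ℝ}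
    (hB : ‖B‖ ≤ 1) : minner A B ≤ nuc A := by
  refine le_csSup ⟨l1norm A, ?_⟩ ⟨B, by rwa [spec_eq_norm], rfl⟩
  rintro _ ⟨C, hC, rfl⟩
  rw [spec_eq_norm] at hC
  refine Finset.sum_le_sum fun i _ => Finset.sum_le_sum fun j _ => (le_abs_self _).trans ?_
  rw [abs_mul]
  exact mul_le_of_le_one_right (abs_nonneg _) ((abs_apply_le_norm C i j).trans hC)

variable {r : ℕ} {U : Matrix (Fin n1) (Fin r) ℝ} {V : Matrix (Fin n2) (Fin r) ℝ} {σ : Fin r → ℝ}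

lemma minner_mul_diagonal_mul (U : Matrix (Fin n1) (Fin r) ℝ) (V : Matrix (Fin n2) (Fin r) ℝ)
    (σ : Fin r → ℝ) (B : Matrix (Fin n1) (Fin n2) ℝ) :
    minner (U * diagonal σ * Vᵀ) B = ∑ k, σ k * (Uᵀ * B * V) k k := by
  rw [minner_eq_trace, transpose_mul, transpose_mul, transpose_transpose, diagonal_transpose,
    Matrix.mul_assoc, trace_mul_comm, Matrix.mul_assoc, Matrix.mul_assoc, ← Matrix.mul_assoc Uᵀ]
  simp only [trace, diag_apply, diagonal_mul]

lemma norm_le_one_of_transpose_mul_self {m k : Type*} [Fintype m] [Fintype k] [DecidableEq k]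
    {W : Matrix m k ℝ} (hW : Wᵀ * W = 1) : ‖W‖ ≤ 1 := by
  refine l2_opNorm_le zero_le_one fun v => ?_
  rw [one_mul, ← sq_le_sq₀ (l2Norm_nonneg _) (l2Norm_nonneg _), l2Norm_sq, l2Norm_sq,
    dotProduct_mulVec, vecMul_mulVec, hW, vecMul_one]

lemma nuc_mul_diagonal_mul_le (hU : Uᵀ * U = 1) (hV : Vᵀ * V = 1) (hσ : ∀ k, 0 ≤ σ k) :
    nuc (U * diagonal σ * Vᵀ) ≤ ∑ k, σ k := by
  refine csSup_le ⟨_, 0, by rw [spec_eq_norm, norm_zero]; exact zero_le_one, rfl⟩ ?_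
  rintro _ ⟨B, hB, rfl⟩
  rw [spec_eq_norm] at hB
  have hUBV : ‖Uᵀ * B * V‖ ≤ 1 :=
    calc ‖Uᵀ * B * V‖ ≤ ‖Uᵀ‖ * ‖B‖ * ‖V‖ :=
          (l2_opNorm_mul _ _).trans (by gcongr; exact l2_opNorm_mul _ _)
      _ ≤ 1 * 1 * 1 := by
          rw [l2_opNorm_transpose]
          gcongr
          exacts [norm_le_one_of_transpose_mul_self hU, norm_le_one_of_transpose_mul_self hV]
      _ = 1 := by norm_num
  rw [minner_mul_diagonal_mul]
  exact Finset.sum_le_sum fun k _ => mul_le_of_le_one_right (hσ k)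
    ((le_abs_self _).trans ((abs_apply_le_norm _ k k).trans hUBV))

lemma minner_mul_diagonal_mul_add (hU : Uᵀ * U = 1) (hV : Vᵀ * V = 1) (σ : Fin r → ℝ)
    (R : Matrix (Fin n1) (Fin n2) ℝ) :
    minner (U * diagonal σ * Vᵀ) (U * Vᵀ + coproj U * R * coproj V) = ∑ k, σ k := by
  have hone : Uᵀ * (U * Vᵀ + coproj U * R * coproj V) * V = 1 := by
    simp only [Matrix.mul_add, ← Matrix.mul_assoc, hU, Matrix.one_mul, hV,
      transpose_mul_coproj hU, Matrix.zero_mul, add_zero]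
  simp only [minner_mul_diagonal_mul, hone, one_apply_eq, mul_one]

lemma sum_add_dotProduct_le_nuc (hU : Uᵀ * U = 1) (hV : Vᵀ * V = 1) (σ : Fin r → ℝ)
    {X : Fin n1 × Fin n2 → ℝ} (hX : ‖unvec ((1 - tproj U V) *ᵥ X)‖ ≤ 1)
    (L : Matrix (Fin n1) (Fin n2) ℝ) :
    ∑ k, σ k + (unvec.symm (U * Vᵀ) + (1 - tproj U V) *ᵥ X) ⬝ᵥ
      unvec.symm (L - U * diagonal σ * Vᵀ) ≤ nuc L := by
  rw [unvec_one_sub_tproj_mulVec hV] at hX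
  have hN : unvec (unvec.symm (U * Vᵀ) + (1 - tproj U V) *ᵥ X)
      = U * Vᵀ + coproj U * unvec X * coproj V := by
    rw [map_add, LinearEquiv.apply_symm_apply, unvec_one_sub_tproj_mulVec hV]
  refine le_trans (le_of_eq ?_) (minner_le_nuc L (norm_mul_transpose_add_le hU hV hX))
  rw [← minner_mul_diagonal_mul_add hU hV σ (unvec X), ← hN, minner_eq_dotProduct,
    minner_eq_dotProduct, LinearEquiv.symm_apply_apply, dotProduct_comm _ (unvec.symm (L - _)),
    ← add_dotProduct, ← map_add, add_sub_cancel]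

-- The subgradient is pushed further in the direction of the part of `L - L₀` outside the tangent
-- space: the certificate `Y` leaves room for a vector of spectral norm `1 / 2` there.
lemma sum_add_dotProduct_add_le_nuc (hU : Uᵀ * U = 1) (hV : Vᵀ * V = 1) (σ : Fin r → ℝ)
    {Y : Fin n1 × Fin n2 → ℝ} (hPY : tproj U V *ᵥ Y = unvec.symm (U * Vᵀ))
    (hY : ‖unvec ((1 - tproj U V) *ᵥ Y)‖ ≤ 1 / 2) (L : Matrix (Fin n1) (Fin n2) ℝ) :
    ∑ k, σ k + Y ⬝ᵥ unvec.symm (L - U * diagonal σ * Vᵀ)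
      + l2Norm ((1 - tproj U V) *ᵥ unvec.symm (L - U * diagonal σ * Vᵀ)) / 2 ≤ nuc L := by
  set h := unvec.symm (L - U * diagonal σ * Vᵀ) with hh
  set a := l2Norm ((1 - tproj U V) *ᵥ h) with ha
  have hQ := (tproj_isStarProjection hU hV).one_sub
  have hshift : (1 - tproj U V) *ᵥ (Y + (2 * a)⁻¹ • h)
      = (1 - tproj U V) *ᵥ Y + (2 * a)⁻¹ • ((1 - tproj U V) *ᵥ h) := by
    rw [mulVec_add, mulVec_smul]
  have hnorm : ‖unvec ((1 - tproj U V) *ᵥ (Y + (2 * a)⁻¹ • h))‖ ≤ 1 := by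
    have ha0 : 0 ≤ (2 * a)⁻¹ := inv_nonneg.2 (mul_nonneg zero_le_two (l2Norm_nonneg _))
    have hhalf : (2 * a)⁻¹ * a ≤ 1 / 2 := by
      rw [mul_inv, mul_assoc]
      linarith [inv_mul_le_one (a := a)]
    rw [hshift, map_add, map_smul]
    refine (norm_add_le _ _).trans ?_
    rw [norm_smul, Real.norm_of_nonneg ha0]
    linarith [mul_le_mul_of_nonneg_left (norm_unvec_le ((1 - tproj U V) *ᵥ h)) ha0]
  have hsq : ((1 - tproj U V) *ᵥ h) ⬝ᵥ h = a ^ 2 := by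
    rw [ha, l2Norm_sq, dotProduct_mulVec _ (1 - tproj U V), vecMul_mulVec, ← mulVec_transpose,
      transpose_eq_of_isStarProjection hQ, transpose_mul, transpose_eq_of_isStarProjection hQ,
      hQ.isIdempotentElem.eq]
  have hsubgrad := sum_add_dotProduct_le_nuc hU hV σ hnorm L
  rw [← hh, hshift, ← hPY, ← add_assoc, ← add_mulVec, add_sub_cancel, one_mulVec, add_dotProduct,
    smul_dotProduct, hsq, smul_eq_mul, ← add_assoc] at hsubgrad
  refine hsubgrad.trans' (le_of_eq ?_)
  rcases eq_or_ne a 0 with h0 | _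
  · rw [h0]; norm_num
  · field_simp

end NuclearNorm

/-! ### Recovery from a dual certificate -/

section Coordinates

variable {ι : Type*} [Fintype ι]

lemma abs_apply_le_l2Norm (v : ι → ℝ) (i : ι) : |v i| ≤ l2Norm v :=
  PiLp.norm_apply_le (WithLp.toLp 2 v) i

lemma l2Norm_abs (v : ι → ℝ) : l2Norm (fun i => |v i|) = l2Norm v := by
  simp only [l2Norm, EuclideanSpace.norm_eq, Real.norm_eq_abs, abs_abs]

lemma l2Norm_le_sum_abs (v : ι → ℝ) : l2Norm v ≤ ∑ i, |v i| := by
  rw [← sq_le_sq₀ (l2Norm_nonneg v) (Finset.sum_nonneg fun _ _ => abs_nonneg _), l2Norm_sq,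
    dotProduct]
  simpa only [← sq, sq_abs] using
    Finset.sum_sq_le_sq_sum_of_nonneg (s := Finset.univ) fun i _ => abs_nonneg (v i)

lemma sum_abs_le_sqrt_card_mul_l2Norm (v : ι → ℝ) :
    ∑ i, |v i| ≤ √(Fintype.card ι) * l2Norm v := by
  have hone : l2Norm (1 : ι → ℝ) = √(Fintype.card ι) := by
    simp [l2Norm, EuclideanSpace.norm_eq]
  simpa only [hone, l2Norm_abs, one_dotProduct] using dotProduct_le_l2Norm 1 fun i => |v i|

lemma abs_dotProduct_le_mul_sum_abs {v : ι → ℝ} {c : ℝ} (hv : ∀ i, |v i| ≤ c) (u : ι → ℝ) :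
    |v ⬝ᵥ u| ≤ c * ∑ i, |u i| := by
  rw [Finset.mul_sum]
  refine (Finset.abs_sum_le_sum_abs _ _).trans (Finset.sum_le_sum fun i _ => ?_)
  rw [abs_mul]
  exact mul_le_mul_of_nonneg_right (hv i) (abs_nonneg _)

variable [DecidableEq ι] {z s : ι → Bool}

lemma l2Norm_sub_mask_le (z : ι → Bool) (v : ι → ℝ) : l2Norm (v - mask z *ᵥ v) ≤ l2Norm v := by
  have hnorm := norm_le_one_of_isStarProjection (mask_isStarProjection z).one_sub
  simpa only [sub_mulVec, one_mulVec, one_mul] using (l2Norm_mulVec_le (1 - mask z) v).trans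
    (mul_le_mul_of_nonneg_right hnorm (l2Norm_nonneg v))

lemma mul_l2Norm_sq_le_of_compress {P : Matrix ι ι ℝ} (hP : IsStarProjection P) {τ : ℝ}
    (hz : ∀ x, x ⬝ᵥ compress P z *ᵥ x ≤ τ * (x ⬝ᵥ x)) {v : ι → ℝ} (hv : P *ᵥ v = v) :
    (1 - τ) * l2Norm v ^ 2 ≤ l2Norm (v - mask z *ᵥ v) ^ 2 := by
  have hmask := (mask_isStarProjection z).isIdempotentElem.eq
  have hmaskT := transpose_eq_of_isStarProjection (mask_isStarProjection z)
  have hcompress : v ⬝ᵥ mask z *ᵥ v = v ⬝ᵥ compress P z *ᵥ v := by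
    rw [compress, ← mulVec_mulVec, hv, ← mulVec_mulVec, dotProduct_mulVec v P, ← mulVec_transpose,
      transpose_eq_of_isStarProjection hP, hv]
  have hsq : (mask z *ᵥ v) ⬝ᵥ (mask z *ᵥ v) = v ⬝ᵥ mask z *ᵥ v := by
    rw [dotProduct_mulVec, vecMul_mulVec, hmaskT, hmask, ← dotProduct_mulVec]
  rw [l2Norm_sq, l2Norm_sq, dotProduct_sub, sub_dotProduct, sub_dotProduct,
    dotProduct_comm (mask z *ᵥ v) v, hsq, hcompress]
  linarith [hz v]

lemma dotProduct_sub_add_le_sum_abs_add_sub {lam : ℝ} (hlam : 0 ≤ lam) {Y Z v : ι → ℝ}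
    (hon : ∀ i, z i = true → Y i = lam * boolSign (s i) + Z i)
    (hoff : ∀ i, z i = false → |Y i| ≤ lam / 2)
    (hsign : ∀ i, |v i| = boolSign (s i) * v i) (hv : ∀ i, z i = false → v i = 0) (g : ι → ℝ) :
    Y ⬝ᵥ g - l2Norm Z * l2Norm g + lam / 2 * l2Norm (g - mask z *ᵥ g)
      ≤ lam * (∑ i, |v i + g i| - ∑ i, |v i|) := by
  have hentry (i : ι) : Y i * g i - |Z i| * |g i| + lam / 2 * |(g - mask z *ᵥ g) i|
      ≤ lam * (|v i + g i| - |v i|) := by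
    rw [Pi.sub_apply, mask_mulVec_apply]
    cases hzi : z i with
    | true =>
      have habs : boolSign (s i) * (v i + g i) ≤ |v i + g i| := by
        rw [boolSign]
        split_ifs <;> simp only [one_mul, neg_mul, le_abs_self, neg_le_abs]
      rw [hon i hzi, hsign i, if_pos rfl, sub_self, abs_zero, ← abs_mul]
      nlinarith [mul_le_mul_of_nonneg_left habs hlam, le_abs_self (Z i * g i)]
    | false =>
      have hYg : Y i * g i ≤ lam / 2 * |g i| := (le_abs_self _).trans
        ((abs_mul _ _).trans_le (mul_le_mul_of_nonneg_right (hoff i hzi) (abs_nonneg _)))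
      rw [hv i hzi, if_neg Bool.false_ne_true, sub_zero, abs_zero, zero_add, sub_zero]
      linarith [mul_nonneg (abs_nonneg (Z i)) (abs_nonneg (g i))]
  have hsum := Finset.sum_le_sum fun i (_ : i ∈ Finset.univ) => hentry i
  rw [← Finset.mul_sum, Finset.sum_sub_distrib, Finset.sum_add_distrib, Finset.sum_sub_distrib,
    ← Finset.mul_sum] at hsum
  have hZg := dotProduct_le_l2Norm (fun i => |Z i|) (fun i => |g i|)
  rw [l2Norm_abs, l2Norm_abs] at hZg
  have hmask := mul_le_mul_of_nonneg_left (l2Norm_le_sum_abs (g - mask z *ᵥ g))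
    (by positivity : 0 ≤ lam / 2)
  simp only [dotProduct] at hZg ⊢
  linarith

end Coordinates

section Recovery

/-- An approximate dual certificate with regularization parameter `lam` for the support pattern `z`
and the sign pattern `s`: a vector `Y` whose tangent part is `U * Vᵀ`, which is close to a
subgradient of the nuclear norm at `U * Σ * Vᵀ` and, up to the error `Z`, to a subgradient of
`lam` times the entrywise norm, together with the transversality of the tangent space and the
support. -/
def DualCert {m n r : Type*} [Fintype m] [Fintype n] [Fintype r] [DecidableEq m] [DecidableEq n]
    (U : Matrix m r ℝ) (V : Matrix n r ℝ) (lam : ℝ) (z s : m × n → Bool) : Prop :=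
  ∃ Y Z : m × n → ℝ, tproj U V *ᵥ Y = unvec.symm (U * Vᵀ) ∧
    ‖unvec ((1 - tproj U V) *ᵥ Y)‖ ≤ 1 / 2 ∧
    (∀ i, z i = true → Y i = lam * boolSign (s i) + Z i) ∧
    (∀ i, z i = false → |Y i| ≤ lam / 2) ∧
    l2Norm Z ≤ lam / 100 ∧
    ∀ x, x ⬝ᵥ compress (tproj U V) z *ᵥ x ≤ 1 / 4 * (x ⬝ᵥ x)

variable {n1 n2 r : ℕ} {U : Matrix (Fin n1) (Fin r) ℝ} {V : Matrix (Fin n2) (Fin r) ℝ}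
  {σ : Fin r → ℝ} {lam δ : ℝ}

lemma l2Norm_add_le_of_isStablePCPMin {L0 S0 Z0 Lh Sh : Matrix (Fin n1) (Fin n2) ℝ}
    (hmin : IsStablePCPMin (L0 + S0 + Z0) lam δ Lh Sh) (hδZ : δ ≤ frob Z0) :
    l2Norm (unvec.symm (Lh - L0) + unvec.symm (Sh - S0)) ≤ 2 * frob Z0 := by
  have hsplit : unvec.symm (Lh - L0) + unvec.symm (Sh - S0)
      = unvec.symm (Lh + Sh - (L0 + S0 + Z0)) + unvec.symm Z0 := by
    rw [← map_add, ← map_add]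
    congr 1
    abel
  rw [hsplit]
  refine (l2Norm_add_le _ _).trans ?_
  rw [← frob_eq_l2Norm, ← frob_eq_l2Norm]
  linarith [hmin.1]

lemma objective_le_of_isStablePCPMin {L0 S0 Z0 Lh Sh : Matrix (Fin n1) (Fin n2) ℝ}
    (hmin : IsStablePCPMin (L0 + S0 + Z0) lam δ Lh Sh) (hδ : 0 ≤ δ) (hlam : 0 ≤ lam) :
    nuc Lh + lam * l1norm Sh
      ≤ nuc L0 + lam * (l1norm S0 + √(Fintype.card (Fin n1 × Fin n2)) * frob Z0) := by
  refine (hmin.2 L0 (S0 + Z0) ?_).trans (add_le_add le_rfl (mul_le_mul_of_nonneg_left ?_ hlam))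
  · simpa [← add_assoc, frob] using hδ
  · rw [l1norm_eq_sum_abs, l1norm_eq_sum_abs, frob_eq_l2Norm]
    refine (Finset.sum_le_sum fun p _ => abs_add_le (unvec.symm S0 p) (unvec.symm Z0 p)).trans ?_
    rw [Finset.sum_add_distrib]
    exact add_le_add le_rfl (sum_abs_le_sqrt_card_mul_l2Norm _)

lemma sq_add_sq_le_of_recovery_bounds {N ζ a b p G H : ℝ} (hN : 100 ≤ N) (hζ : 0 ≤ ζ) (ha : 0 ≤ a)
    (hb : 0 ≤ b) (hG : 0 ≤ G) (hH : 0 ≤ H)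
    (hgap : 100 * a + b ≤ 604 / 100 * (N * ζ) + 2 / 100 * G)
    (hpab : 3 / 4 * p ^ 2 ≤ (2 * ζ + a + b) ^ 2) (hHp : H ≤ p + a) (hGH : G ≤ 2 * ζ + H) :
    H ^ 2 + G ^ 2 ≤ 720 * (N * ζ) ^ 2 := by
  have hNζ : 100 * ζ ≤ N * ζ := mul_le_mul_of_nonneg_right hN hζ
  have hp' : p ≤ 116 / 100 * (2 * ζ + a + b) := by
    refine abs_le_of_sq_le_sq' ?_ (by positivity) |>.2
    nlinarith
  have hG' : G ≤ 73 / 10 * (N * ζ) := by linarith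
  have hH' : H ≤ 73 / 10 * (N * ζ) := by linarith
  nlinarith [pow_le_pow_left₀ hG hG' 2, pow_le_pow_left₀ hH hH' 2, sq_nonneg (N * ζ)]

lemma mul_l2Norm_tproj_sq_le {m n k : Type*} [Fintype m] [Fintype n] [Fintype k] [DecidableEq m]
    [DecidableEq n] [DecidableEq k] {U : Matrix m k ℝ} {V : Matrix n k ℝ} (hU : Uᵀ * U = 1)
    (hV : Vᵀ * V = 1) {z : m × n → Bool} {τ : ℝ}
    (hz : ∀ x, x ⬝ᵥ compress (tproj U V) z *ᵥ x ≤ τ * (x ⬝ᵥ x)) (h g : m × n → ℝ) :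
    (1 - τ) * l2Norm (tproj U V *ᵥ h) ^ 2 ≤ (l2Norm (h + g)
      + l2Norm ((1 - tproj U V) *ᵥ h) + l2Norm (g - mask z *ᵥ g)) ^ 2 := by
  have hP := tproj_isStarProjection hU hV
  refine (mul_l2Norm_sq_le_of_compress hP hz (by
    rw [mulVec_mulVec, hP.isIdempotentElem.eq])).trans (pow_le_pow_left₀ (l2Norm_nonneg _) ?_ 2)
  have hsplit : tproj U V *ᵥ h - mask z *ᵥ (tproj U V *ᵥ h)
      = ((h + g) - mask z *ᵥ (h + g)) - ((1 - tproj U V) *ᵥ h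
        - mask z *ᵥ ((1 - tproj U V) *ᵥ h)) - (g - mask z *ᵥ g) := by
    rw [sub_mulVec, one_mulVec, mulVec_add, mulVec_sub]
    abel
  rw [hsplit]
  exact (l2Norm_sub_le _ _).trans (add_le_add ((l2Norm_sub_le _ _).trans
    (add_le_add (l2Norm_sub_mask_le z _) (l2Norm_sub_mask_le z _))) le_rfl)

lemma l2Norm_add_l2Norm_le_of_isStablePCPMin (hU : Uᵀ * U = 1) (hV : Vᵀ * V = 1)
    (hσ : ∀ k, 0 ≤ σ k) (hlam0 : 0 < lam) (hlam : lam ≤ 1 / 100) {z s : Fin n1 × Fin n2 → Bool}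
    {S0 Z0 Lh Sh : Matrix (Fin n1) (Fin n2) ℝ}
    (hsign : ∀ p, |unvec.symm S0 p| = boolSign (s p) * unvec.symm S0 p)
    (hS0 : ∀ p, z p = false → unvec.symm S0 p = 0) (hδ : 0 ≤ δ) (hδZ : δ ≤ frob Z0)
    (hmin : IsStablePCPMin (U * diagonal σ * Vᵀ + S0 + Z0) lam δ Lh Sh)
    {Y Z : Fin n1 × Fin n2 → ℝ} (hPY : tproj U V *ᵥ Y = unvec.symm (U * Vᵀ))
    (hQY : ‖unvec ((1 - tproj U V) *ᵥ Y)‖ ≤ 1 / 2)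
    (hon : ∀ i, z i = true → Y i = lam * boolSign (s i) + Z i)
    (hoff : ∀ i, z i = false → |Y i| ≤ lam / 2) (hZ : l2Norm Z ≤ lam / 100) :
    100 * l2Norm ((1 - tproj U V) *ᵥ unvec.symm (Lh - U * diagonal σ * Vᵀ))
        + l2Norm (unvec.symm (Sh - S0) - mask z *ᵥ unvec.symm (Sh - S0))
      ≤ 604 / 100 * (√(Fintype.card (Fin n1 × Fin n2)) * frob Z0)
        + 2 / 100 * l2Norm (unvec.symm (Sh - S0)) := by
  set h := unvec.symm (Lh - U * diagonal σ * Vᵀ)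
  set g := unvec.symm (Sh - S0) with hg
  have hY (p : Fin n1 × Fin n2) : |Y p| ≤ 101 / 100 * lam := by
    cases hzp : z p with
    | true =>
      have hsgn : |lam * boolSign (s p)| = lam := by
        rw [abs_mul, boolSign, apply_ite abs, abs_neg, abs_one, ite_self, mul_one, abs_of_pos hlam0]
      rw [hon p hzp]
      linarith [abs_add_le (lam * boolSign (s p)) (Z p), abs_apply_le_l2Norm Z p]
    | false => linarith [hoff p hzp]
  have hYhg : -(101 / 100 * lam * (√(Fintype.card (Fin n1 × Fin n2)) * (2 * frob Z0)))
      ≤ Y ⬝ᵥ h + Y ⬝ᵥ g := by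
    rw [← dotProduct_add]
    refine (neg_le_neg ((abs_dotProduct_le_mul_sum_abs hY _).trans ?_)).trans (neg_abs_le _)
    gcongr
    refine (sum_abs_le_sqrt_card_mul_l2Norm _).trans ?_
    gcongr
    exact l2Norm_add_le_of_isStablePCPMin hmin hδZ
  have hnuc := sum_add_dotProduct_add_le_nuc hU hV σ hPY hQY Lh
  have hl1 := dotProduct_sub_add_le_sum_abs_add_sub hlam0.le hon hoff hsign hS0 g
  have hSh : ∑ p, |unvec.symm S0 p + g p| = l1norm Sh := by
    rw [l1norm_eq_sum_abs]
    simp only [hg, map_sub, Pi.sub_apply, add_sub_cancel]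
  rw [hSh, ← l1norm_eq_sum_abs] at hl1
  have hobj := objective_le_of_isStablePCPMin hmin hδ hlam0.le
  have hnuc0 := nuc_mul_diagonal_mul_le hU hV hσ
  have hZg := mul_le_mul_of_nonneg_right hZ (l2Norm_nonneg g)
  have ha := mul_le_mul_of_nonneg_right hlam (l2Norm_nonneg ((1 - tproj U V) *ᵥ h))
  refine le_of_mul_le_mul_left ?_ hlam0
  linarith

theorem pairDist_le_of_isStablePCPMin (hU : Uᵀ * U = 1) (hV : Vᵀ * V = 1) (hσ : ∀ k, 0 ≤ σ k)
    (hlam0 : 0 < lam) (hlam : lam ≤ 1 / 100) (hn : 10000 ≤ n1 * n2)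
    {z s : Fin n1 × Fin n2 → Bool} (hcert : DualCert U V lam z s)
    {S0 Z0 Lh Sh : Matrix (Fin n1) (Fin n2) ℝ}
    (hsign : ∀ p, |unvec.symm S0 p| = boolSign (s p) * unvec.symm S0 p)
    (hS0 : ∀ p, z p = false → unvec.symm S0 p = 0) (hδ : 0 ≤ δ) (hδZ : δ ≤ frob Z0)
    (hmin : IsStablePCPMin (U * diagonal σ * Vᵀ + S0 + Z0) lam δ Lh Sh) :
    pairDist Lh Sh (U * diagonal σ * Vᵀ) S0 ≤ √(720 * n1 * n2) * frob Z0 := by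
  obtain ⟨Y, Z, hPY, hQY, hon, hoff, hZ, hcomp⟩ := hcert
  have hgap := l2Norm_add_l2Norm_le_of_isStablePCPMin hU hV hσ hlam0 hlam hsign hS0 hδ hδZ hmin hPY
    hQY hon hoff hZ
  have hsum := l2Norm_add_le_of_isStablePCPMin hmin hδZ
  set h := unvec.symm (Lh - U * diagonal σ * Vᵀ) with hh
  set g := unvec.symm (Sh - S0) with hg
  have hζ : 0 ≤ frob Z0 := Real.sqrt_nonneg _
  have hN : 100 ≤ √(Fintype.card (Fin n1 × Fin n2)) := by
    refine Real.le_sqrt_of_sq_le ?_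
    simpa using (by exact_mod_cast hn : (100 : ℝ) ^ 2 ≤ n1 * n2)
  have htangent : 3 / 4 * l2Norm (tproj U V *ᵥ h) ^ 2 ≤ (2 * frob Z0
      + l2Norm ((1 - tproj U V) *ᵥ h) + l2Norm (g - mask z *ᵥ g)) ^ 2 := by
    have hle := mul_l2Norm_tproj_sq_le hU hV hcomp h g
    rw [show (1 : ℝ) - 1 / 4 = 3 / 4 by norm_num] at hle
    refine hle.trans (pow_le_pow_left₀ ?_ (by linarith) 2)
    exact add_nonneg (add_nonneg (l2Norm_nonneg _) (l2Norm_nonneg _)) (l2Norm_nonneg _)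
  have hH : l2Norm h ≤ l2Norm (tproj U V *ᵥ h) + l2Norm ((1 - tproj U V) *ᵥ h) := by
    have hsplit : tproj U V *ᵥ h + (1 - tproj U V) *ᵥ h = h := by
      rw [sub_mulVec, one_mulVec, add_sub_cancel]
    exact (congrArg l2Norm hsplit).symm.trans_le (l2Norm_add_le _ _)
  have hG : l2Norm g ≤ 2 * frob Z0 + l2Norm h := by
    have := l2Norm_sub_le (h + g) h
    rw [add_sub_cancel_left] at this
    linarith
  have hfinal := sq_add_sq_le_of_recovery_bounds hN hζ (l2Norm_nonneg _) (l2Norm_nonneg _)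
    (l2Norm_nonneg g) (l2Norm_nonneg h) hgap htangent hH hG
  rw [pairDist, frob_eq_l2Norm, frob_eq_l2Norm, ← hh, ← hg]
  refine Real.sqrt_le_iff.2 ⟨by positivity, hfinal.trans_eq ?_⟩
  rw [mul_pow, mul_pow, Real.sq_sqrt (Nat.cast_nonneg _), Real.sq_sqrt (by positivity),
    Fintype.card_prod, Fintype.card_fin, Fintype.card_fin]
  push_cast
  ring

end Recovery

/-! ### From independent selection to a uniformly random support -/

section Uniform

variable {α : Type*} [Fintype α]

open Classical in
lemma unifProb_eq_sum_div (E : α → Prop) :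
    unifProb E = (∑ a, if E a then (1 : ℝ) else 0) / Fintype.card α := by
  rw [unifProb, Finset.sum_boole]

lemma unifProb_nonneg (E : α → Prop) : 0 ≤ unifProb E :=
  div_nonneg (Nat.cast_nonneg _) (Nat.cast_nonneg _)

lemma unifProb_mono {E F : α → Prop} (h : ∀ a, E a → F a) : unifProb E ≤ unifProb F := by
  classical
  rw [unifProb, unifProb]
  gcongr with a
  exact h a

lemma unifProb_not [Nonempty α] (E : α → Prop) : unifProb (fun a => ¬ E a) = 1 - unifProb E := by
  classical
  have hcard : (Fintype.card α : ℝ) ≠ 0 := Nat.cast_ne_zero.2 Fintype.card_ne_zero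
  rw [unifProb, unifProb, eq_sub_iff_add_eq, ← add_div, div_eq_one_iff_eq hcard, ← Nat.cast_add,
    add_comm, Finset.card_filter_add_card_filter_not, Finset.card_univ]

lemma unifProb_const [Nonempty α] (p : Prop) [Decidable p] :
    unifProb (fun _ : α => p) = if p then 1 else 0 := by
  split_ifs with hp <;> simp [unifProb, hp]

variable {ι : Type*} [Fintype ι]

lemma unifProb_prod_bool [DecidableEq ι] (E : α × (ι → Bool) → Prop) :
    unifProb E = expect (bern (1 / 2)) fun s => unifProb fun a => E (a, s) := by
  have hbern (s : ι → Bool) : bern (1 / 2) s = (2 ^ Fintype.card ι : ℝ)⁻¹ := by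
    simp [bern, show (1 : ℝ) - 2⁻¹ = 2⁻¹ by norm_num]
  simp only [expect, hbern, unifProb_eq_sum_div, Fintype.sum_prod_type_right, Fintype.card_prod,
    Fintype.card_fun, Fintype.card_bool, ← Finset.mul_sum, ← Finset.sum_div]
  push_cast
  rw [inv_mul_eq_div, div_div]

/-- Double counting of the pairs `B ⊂ A` with `|A| = |B| + 1` shows that a decreasing property
holds for a smaller proportion of the larger sets. -/
lemma antitone_unifProb_card {E : Finset ι → Prop} (hE : Antitone E) :
    Antitone fun k => unifProb fun A : {A : Finset ι // A.card = k} => E A := by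
  classical
  have hcard (k : ℕ) : unifProb (fun A : {A : Finset ι // A.card = k} => E A)
      = (((Finset.univ.powersetCard k).filter E).card : ℝ) / (Fintype.card ι).choose k := by
    rw [unifProb, Fintype.card_finset_len]
    congr 2
    refine Finset.card_bij (fun A _ => A.1) (fun A hA => ?_) (fun _ _ _ _ => Subtype.ext)
      fun A hA => ?_
    · simpa [A.2] using hA
    · simp only [Finset.mem_filter, Finset.mem_powersetCard] at hA
      exact ⟨⟨A, hA.1.2⟩, by simpa using hA.2, rfl⟩
  refine antitone_nat_of_succ_le fun k => ?_
  have hsized : ((Finset.univ.powersetCard (k + 1)).filter E : Set (Finset ι)).Sized (k + 1) :=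
    fun A hA => (Finset.mem_powersetCard.1 (Finset.mem_filter.1 hA).1).2
  rw [hcard, hcard]
  refine (Finset.local_lubell_yamamoto_meshalkin_inequality_div k.succ_ne_zero hsized).trans ?_
  rw [Nat.succ_eq_add_one, Nat.add_sub_cancel]
  gcongr
  intro B hB
  obtain ⟨A, hA, i, hi, rfl⟩ := Finset.mem_shadow_iff.1 hB
  simp only [Finset.mem_filter, Finset.mem_powersetCard] at hA ⊢
  exact ⟨⟨Finset.subset_univ _, by rw [Finset.card_erase_of_mem hi, hA.1.2, Nat.add_sub_cancel]⟩,
    hE (Finset.erase_subset i A) hA.2⟩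

variable [DecidableEq ι]

/-- The number of selected indices is binomial, and given that number the selected set is
uniform. -/
lemma prob_bern_filter_eq_sum (q : ℝ) (E : Finset ι → Prop) :
    prob (bern q) (fun z : ι → Bool => E {i | z i = true})
      = ∑ k ∈ Finset.range (Fintype.card ι + 1), q ^ k * (1 - q) ^ (Fintype.card ι - k)
          * (Fintype.card ι).choose k * unifProb fun A : {A : Finset ι // A.card = k} => E A := by
  classical
  have hbern (A : Finset ι) : bern q (fun i => decide (i ∈ A))
      = q ^ A.card * (1 - q) ^ (Fintype.card ι - A.card) := by
    simp only [bern, decide_eq_true_eq, Finset.prod_ite, Finset.prod_const, Finset.filter_univ_mem,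
      Finset.filter_not, ← Finset.compl_eq_univ_sdiff, Finset.card_compl]
  let e : Finset ι ≃ (ι → Bool) :=
    { toFun := fun A i => decide (i ∈ A)
      invFun := fun z => Finset.univ.filter fun i => z i = true
      left_inv := fun A => by simp
      right_inv := fun z => by simp }
  rw [prob, expect, ← e.sum_comp, ← Finset.powerset_univ, Finset.sum_powerset, Finset.card_univ]
  refine Finset.sum_congr rfl fun k hk => ?_
  have hchoose : ((Fintype.card ι).choose k : ℝ) ≠ 0 :=
    Nat.cast_ne_zero.2 (Nat.choose_pos (Finset.mem_range_succ_iff.1 hk)).ne'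
  rw [unifProb_eq_sum_div, Fintype.card_finset_len, mul_assoc, mul_div_cancel₀ _ hchoose,
    Finset.mul_sum, Finset.sum_subtype _ (p := fun A => A.card = k) (by simp)]
  refine Finset.sum_congr rfl fun A _ => ?_
  simp only [e, Equiv.coe_fn_mk, hbern, A.2, decide_eq_true_eq, Finset.filter_univ_mem]

lemma unifProb_not_mul_prob_le {E : Finset ι → Prop} (hE : Antitone E) {q : ℝ}
    (hq : q ∈ unitInterval) {m : ℕ} (hm : m ≤ Fintype.card ι) :
    unifProb (fun A : {A : Finset ι // A.card = m} => ¬ E A)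
        * prob (bern q) (fun z : ι → Bool => m ≤ Finset.card {i | z i = true})
      ≤ prob (bern q) fun z : ι → Bool => ¬ E {i | z i = true} := by
  have hnonempty {k : ℕ} (hk : k ≤ Fintype.card ι) : Nonempty {A : Finset ι // A.card = k} := by
    obtain ⟨A, -, hA⟩ := Finset.exists_subset_card_eq (s := (Finset.univ : Finset ι)) hk
    exact ⟨A, hA⟩
  have := hnonempty hm
  rw [prob_bern_filter_eq_sum q fun A => m ≤ A.card, prob_bern_filter_eq_sum q fun A => ¬ E A,
    Finset.mul_sum]
  refine Finset.sum_le_sum fun k hk => ?_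
  have := hnonempty (Finset.mem_range_succ_iff.1 hk)
  rw [mul_left_comm]
  refine mul_le_mul_of_nonneg_left ?_ (mul_nonneg (mul_nonneg (pow_nonneg hq.1 _)
    (pow_nonneg (sub_nonneg.2 hq.2) _)) (Nat.cast_nonneg _))
  have hcard : (fun A : {A : Finset ι // A.card = k} => m ≤ A.1.card) = fun _ => m ≤ k :=
    funext fun A => by rw [A.2]
  rw [hcard, unifProb_const]
  split_ifs with hmk
  · rw [mul_one, unifProb_not, unifProb_not]
    exact sub_le_sub_left (antitone_unifProb_card hE hmk) 1
  · rw [mul_zero]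
    exact unifProb_nonneg _

lemma expect_exp_neg_card_le {q : ℝ} (hq : q ∈ unitInterval) :
    expect (bern q) (fun z : ι → Bool => Real.exp (-(Finset.card {i | z i = true} : ℝ)))
      ≤ Real.exp (-(5 / 8 * (q * Fintype.card ι))) := by
  have hprod (z : ι → Bool) : Real.exp (-(Finset.card {i | z i = true} : ℝ))
      = ∏ i, if z i then Real.exp (-1) else 1 := by
    rw [Finset.prod_ite, Finset.prod_const_one, mul_one, Finset.prod_const, ← Real.exp_nat_mul,
      mul_neg_one]
  simp only [hprod]
  rw [expect_bern_prod q fun _ b => if b then Real.exp (-1) else 1]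
  simp only [if_true, Bool.false_eq_true, if_false, Finset.prod_const, Finset.card_univ]
  have hq0 := hq.1
  have hq1 := sub_nonneg.2 hq.2
  have hbase : q * Real.exp (-1) + (1 - q) * 1 ≤ Real.exp (-(5 / 8 * q)) := by
    nlinarith [Real.exp_neg_one_lt_d9, Real.add_one_le_exp (-(5 / 8 * q))]
  refine (pow_le_pow_left₀ (by positivity) hbase _).trans_eq ?_
  rw [← Real.exp_nat_mul]
  ring_nf

lemma half_le_prob_le_card {q : ℝ} (hq : q ∈ unitInterval) {m : ℕ}
    (hm : (m : ℝ) ≤ q * Fintype.card ι / 2) (hqι : 10 ≤ q * Fintype.card ι) :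
    1 / 2 ≤ prob (bern q) fun z : ι → Bool => m ≤ Finset.card {i | z i = true} := by
  have hw : (bern q : (ι → Bool) → ℝ) ∈ stdSimplex ℝ _ := bern_mem_stdSimplex hq
  have htail := prob_lt_le_exp_mul_expect hw
    (fun z : ι → Bool => -(Finset.card {i | z i = true} : ℝ)) 1 (-m) zero_le_one
  simp only [one_mul, neg_neg] at htail
  have hsmall : Real.exp m * Real.exp (-(5 / 8 * (q * Fintype.card ι))) ≤ 1 / 2 := by
    rw [← Real.exp_add]
    refine (Real.exp_le_exp.2 (by linarith : _ ≤ (-1 : ℝ))).trans ?_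
    linarith [Real.exp_neg_one_lt_d9]
  have hcover : 1 ≤ prob (bern q) fun z : ι → Bool => m ≤ Finset.card {i | z i = true} ∨
      (-m : ℝ) < -(Finset.card {i | z i = true} : ℝ) := by
    refine (expect_const hw 1).symm.trans_le (expect_mono hw fun z => ?_)
    rw [if_pos]
    simp only [neg_lt_neg_iff, Nat.cast_lt]
    exact le_or_gt _ _
  linarith [prob_or_le hw (fun z : ι → Bool => m ≤ Finset.card {i | z i = true}) fun z =>
    (-m : ℝ) < -(Finset.card {i | z i = true} : ℝ),
    mul_le_mul_of_nonneg_left (expect_exp_neg_card_le hq (ι := ι)) (Real.exp_pos m).le]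

/-- For each fixed sign pattern, enlarging the support only makes the event harder, so the uniform
support of size `m` can be compared with an independent selection of at least `m` indices. -/
theorem one_sub_two_mul_prob_le_unifProb {q : ℝ} (hq : q ∈ unitInterval) {m : ℕ}
    (hm : (m : ℝ) ≤ q * Fintype.card ι / 2) (hqι : 10 ≤ q * Fintype.card ι)
    {C : (ι → Bool) → (ι → Bool) → Prop}
    {E : {A : Finset ι // A.card = m} × (ι → Bool) → Prop}
    (hE : ∀ ω z, (∀ i ∈ ω.1.1, z i = true) → C z ω.2 → E ω) :
    1 - 2 * prob (sparseSignLaw q) (fun ω => ¬ C ω.1 ω.2) ≤ unifProb E := by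
  have hmι : m ≤ Fintype.card ι := by
    have : (m : ℝ) ≤ Fintype.card ι := by nlinarith [hq.2, hqι]
    exact_mod_cast this
  obtain ⟨A, -, hA⟩ := Finset.exists_subset_card_eq (s := (Finset.univ : Finset ι)) hmι
  have : Nonempty {A : Finset ι // A.card = m} := ⟨A, hA⟩
  let G (s : ι → Bool) (A : Finset ι) : Prop := ∃ z, (∀ i ∈ A, z i = true) ∧ C z s
  have hG (s : ι → Bool) : Antitone (G s) :=
    fun _ _ hAB ⟨z, hz, hC⟩ => ⟨z, fun i hi => hz i (hAB hi), hC⟩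
  have hsign (s : ι → Bool) : 1 + -2 * prob (bern q) (fun z => ¬ C z s)
      ≤ unifProb fun A : {A : Finset ι // A.card = m} => G s A := by
    have hle := (unifProb_not_mul_prob_le (hG s) hq hmι).trans
      (prob_mono (bern_mem_stdSimplex hq) (F := fun z => ¬ C z s)
        fun z hz hC => hz ⟨z, fun i hi => (Finset.mem_filter.1 hi).2, hC⟩)
    have hhalf := mul_le_mul_of_nonneg_left (half_le_prob_le_card hq hm hqι)
      (unifProb_nonneg fun A : {A : Finset ι // A.card = m} => ¬ G s A)
    rw [unifProb_not] at hle hhalf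
    linarith
  have hhalf_mem : (1 / 2 : ℝ) ∈ unitInterval := ⟨by norm_num, by norm_num⟩
  calc 1 - 2 * prob (sparseSignLaw q) (fun ω => ¬ C ω.1 ω.2)
      = expect (bern (1 / 2)) fun s => 1 + -2 * prob (bern q) fun z => ¬ C z s := by
        rw [expect_add, expect_const (bern_mem_stdSimplex hhalf_mem), expect_const_mul, prob,
          sparseSignLaw, expect_prodWeight, expect_comm, neg_mul, sub_eq_add_neg]
        rfl
    _ ≤ expect (bern (1 / 2)) fun s => unifProb fun A : {A : Finset ι // A.card = m} => G s A :=
        expect_mono (bern_mem_stdSimplex hhalf_mem) hsign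
    _ = unifProb fun ω : {A : Finset ι // A.card = m} × (ι → Bool) => G ω.2 ω.1 := by
        rw [unifProb_prod_bool]
    _ ≤ unifProb E := unifProb_mono fun ω ⟨z, hz, hC⟩ => hE ω z hz hC

end Uniform

/-! ### Golfing and signs give a dual certificate -/

section Certificate

variable {m n r : Type*} [Fintype m] [Fintype n] [Fintype r] [DecidableEq m] [DecidableEq n]
  {U : Matrix m r ℝ} {V : Matrix n r ℝ}

lemma l2Norm_le_sqrt_card_mul {ι : Type*} [Fintype ι] {v : ι → ℝ} {c : ℝ} (hc : 0 ≤ c)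
    (hv : ∀ i, |v i| ≤ c) : l2Norm v ≤ √(Fintype.card ι) * c := by
  refine abs_le_of_sq_le_sq' ?_ (by positivity) |>.2
  rw [l2Norm_sq, mul_pow, Real.sq_sqrt (Nat.cast_nonneg _), dotProduct, ← nsmul_eq_mul]
  refine Finset.sum_le_card_nsmul _ _ _ fun i _ => ?_
  rw [← sq]
  exact sq_le_sq' (neg_le_of_abs_le (hv i)) (le_of_abs_le (hv i))

lemma norm_unvec_one_sub_mulVec_add_smul_le {P : Matrix (m × n) (m × n) ℝ} {Y Z W : m × n → ℝ}
    {lam : ℝ} (hlam : 0 ≤ lam) (hZ : P *ᵥ Z = Z) (hW : P *ᵥ W = 0) :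
    ‖unvec ((1 - P) *ᵥ (Y + Z + lam • W))‖ ≤ ‖unvec ((1 - P) *ᵥ Y)‖ + lam * ‖unvec W‖ := by
  have hsplit : (1 - P) *ᵥ (Y + Z + lam • W) = (1 - P) *ᵥ Y + lam • W := by
    rw [mulVec_add, mulVec_add, mulVec_smul, sub_mulVec 1 P Z, sub_mulVec 1 P W, hZ, hW,
      one_mulVec, one_mulVec, sub_self, add_zero, sub_zero]
  rw [hsplit, map_add, map_smul]
  exact (norm_add_le _ _).trans_eq (by rw [norm_smul, Real.norm_of_nonneg hlam])

lemma abs_add_smul_le_half {lam y z w : ℝ} (hlam : 0 ≤ lam) (hy : |y| ≤ lam / 104)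
    (hz : |z| ≤ lam / 100) (hw : |w| ≤ 1 / 4) : |y + z + lam * w| ≤ lam / 2 := by
  have hlw : |lam * w| ≤ lam * (1 / 4) := by
    rw [abs_mul, abs_of_nonneg hlam]
    exact mul_le_mul_of_nonneg_left hw hlam
  linarith [abs_add_three y z (lam * w)]

theorem dualCert_of_golfed [Nonempty m] {q ε η : ℝ} {k : ℕ} (hq : 0 < q) (hε : 0 ≤ ε) (hη : 0 ≤ η)
    (hηq : 208 * η ≤ q) (hk : √(Fintype.card m * Fintype.card n) * (ε ^ k * η) ≤ 1 / 100)
    {z s : m × n → Bool}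
    (hgolf : Golfed (tproj U V) q ε k (η * (√(Fintype.card m))⁻¹) (unvec.symm (U * Vᵀ)) z)
    (hsign : SignCert (tproj U V) z s)
    (hcomp : ∀ x, x ⬝ᵥ compress (tproj U V) z *ᵥ x ≤ 1 / 1000 * (x ⬝ᵥ x)) :
    DualCert U V (√(Fintype.card m))⁻¹ z s := by
  obtain ⟨Y, Z, hYz, hPZ, hPY, hZ, hYnorm, hY⟩ := hgolf
  obtain ⟨W, hPW, hWon, hWoff, hWnorm⟩ := hsign
  set c := √(Fintype.card m : ℝ)
  have hc0 : 0 < c := Real.sqrt_pos.2 (Nat.cast_pos.2 Fintype.card_pos)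
  have hlam : 0 ≤ c⁻¹ := (inv_pos.2 hc0).le
  have hηdiv : η / q ≤ 1 / 208 := by rw [div_le_iff₀ hq]; linarith
  have hZl2 : l2Norm Z ≤ c⁻¹ / 100 := by
    refine (l2Norm_le_sqrt_card_mul (by positivity) hZ).trans ?_
    rw [Fintype.card_prod, Nat.cast_mul, ← mul_assoc (ε ^ k), ← mul_assoc]
    exact (mul_le_mul_of_nonneg_right hk hlam).trans_eq (by ring)
  refine ⟨Y + Z + c⁻¹ • W, Z, ?_, ?_, fun i hi => ?_, fun i hi => ?_, hZl2, fun x => ?_⟩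
  · rw [mulVec_add, mulVec_add, mulVec_smul, hPW, hPZ, hPY, smul_zero, add_zero, sub_add_cancel]
  · calc ‖unvec ((1 - tproj U V) *ᵥ (Y + Z + c⁻¹ • W))‖
        ≤ 52 * c / q * (η * c⁻¹) + c⁻¹ * (c / 8) :=
          (norm_unvec_one_sub_mulVec_add_smul_le hlam hPZ hPW).trans
            (add_le_add hYnorm (mul_le_mul_of_nonneg_left hWnorm hlam))
      _ = 52 * (η / q) + 1 / 8 := by field_simp
      _ ≤ 1 / 2 := by linarith
  · simp only [Pi.add_apply, Pi.smul_apply, smul_eq_mul, hYz i hi, hWon i hi]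
    ring
  · refine abs_add_smul_le_half hlam ((hY i).trans ?_) ((abs_apply_le_l2Norm Z i).trans hZl2)
      (hWoff i hi)
    calc 2 / q * (η * c⁻¹) = 2 * (η / q) * c⁻¹ := by ring
      _ ≤ 2 * (1 / 208) * c⁻¹ := by gcongr
      _ = c⁻¹ / 104 := by ring
  · linarith [hcomp x, (l2Norm_sq x).symm.trans_ge (sq_nonneg _)]

theorem prob_not_dualCert_le [Nonempty m] [DecidableEq r] (hmn : Fintype.card n ≤ Fintype.card m)
    (hU : Uᵀ * U = 1) (hV : Vᵀ * V = 1) {μ q ε η : ℝ} {k : ℕ} (hμ0 : 0 < μ)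
    (hμ : ∀ p, tproj U V p p ≤ μ) (hq : 0 < q) (hq1 : q ≤ 1) (hε : 0 < ε) (hε2 : ε ≤ 1 / 2)
    (hη : 0 < η) (hηq : 208 * η ≤ q)
    (hk : √(Fintype.card m * Fintype.card n) * (ε ^ k * η) ≤ 1 / 100)
    (hUV : ∀ p, |unvec.symm (U * Vᵀ) p| ≤ η * (√(Fintype.card m))⁻¹)
    (hρexp : (1 - q) ^ k * Real.exp (10 ^ 5) ≤ 2 / 10 ^ 5) :
    prob (sparseSignLaw ((1 - q) ^ k)) (fun ω => ¬ DualCert U V (√(Fintype.card m))⁻¹ ω.1 ω.2)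
      ≤ k * golfFailure m n q ε μ + signFailure m n μ
        + 2 * prob (bern ((1 - q) ^ k))
            (fun z => ∃ x, 1 / 1000 * (x ⬝ᵥ x) < x ⬝ᵥ compress (tproj U V) z *ᵥ x) := by
  have hP := tproj_isStarProjection hU hV
  have hPnorm := norm_unvec_one_sub_tproj_mulVec_le hU hV
  have hρ : (1 - q) ^ k ∈ unitInterval :=
    ⟨pow_nonneg (sub_nonneg.2 hq1) k, pow_le_one₀ (sub_nonneg.2 hq1) (sub_le_self 1 hq.le)⟩
  have hw := sparseSignLaw_mem_stdSimplex (ι := m × n) hρ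
  have hM : 0 < η * (√(Fintype.card m))⁻¹ :=
    mul_pos hη (inv_pos.2 (Real.sqrt_pos.2 (Nat.cast_pos.2 Fintype.card_pos)))
  have hgolf := prob_not_golfed_le hmn hP hPnorm hμ0 hμ hq hq1 hε hε2 k hM
    (tproj_mulVec_mul_transpose hU hV) hUV
  have hsign := prob_not_signCert_le hmn hP hPnorm hμ0 hμ hρ hρexp
  have hhalf := bern_mem_stdSimplex (ι := m × n) (q := 1 / 2) ⟨by norm_num, by norm_num⟩
  rw [← prob_prodWeight_fst _ hhalf] at hgolf
  set bad : (m × n → Bool) → Prop :=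
    fun z => ∃ x, 1 / 1000 * (x ⬝ᵥ x) < x ⬝ᵥ compress (tproj U V) z *ᵥ x
  have hfail (ω : (m × n → Bool) × (m × n → Bool))
      (hω : ¬ DualCert U V (√(Fintype.card m))⁻¹ ω.1 ω.2) :
      (¬ Golfed (tproj U V) q ε k (η * (√(Fintype.card m))⁻¹) (unvec.symm (U * Vᵀ)) ω.1
        ∨ ¬ SignCert (tproj U V) ω.1 ω.2) ∨ bad ω.1 := by
    by_contra! hgood
    exact hω (dualCert_of_golfed hq hε.le hη.le hηq hk hgood.1.1 hgood.1.2
      fun x => not_lt.1 fun hx => hgood.2 ⟨x, hx⟩)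
  have hunion := (prob_mono hw hfail).trans
    ((prob_or_le hw _ _).trans (add_le_add_left (prob_or_le hw _ _) _))
  rw [sparseSignLaw, prob_prodWeight_fst _ hhalf bad] at hunion
  rw [sparseSignLaw] at hsign ⊢
  linarith

end Certificate

/-! ### Choice of parameters -/

section Parameters

/-- Number of golfing rounds, as a function of `ℓ = log n1`: enough for the residual, which shrinks
by the factor `exp (-1)` in each round, to fall below `n1 ^ (-2)`. -/
noncomputable def golfRounds (ℓ : ℝ) : ℕ := ⌈2 * ℓ⌉₊

/-- Density of each golfing batch. The numerator makes the density of the points missed by all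
batches constant, and so small that `prob_not_signCert_le` applies. -/
noncomputable def golfRate (ℓ : ℝ) : ℝ := 2 * 10 ^ 5 / golfRounds ℓ

/-- Density of the random support, that is, of the points missed by all golfing batches. -/
noncomputable def supportRate (ℓ : ℝ) : ℝ := (1 - golfRate ℓ) ^ golfRounds ℓ

/-- Bound on the diagonal of the projection onto the tangent space, coming from incoherence. -/
noncomputable def coherenceBound (ℓ : ℝ) : ℝ := 1 / (50000 * ℓ ^ 2)

variable {ℓ : ℝ}

lemma two_mul_le_golfRounds (ℓ : ℝ) : 2 * ℓ ≤ golfRounds ℓ := Nat.le_ceil _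

lemma golfRounds_le (hℓ : 10 ^ 6 ≤ ℓ) : (golfRounds ℓ : ℝ) ≤ 3 * ℓ := by
  have := Nat.ceil_lt_add_one (a := 2 * ℓ) (by linarith)
  rw [golfRounds]
  linarith

lemma golfRounds_pos (hℓ : 10 ^ 6 ≤ ℓ) : (0 : ℝ) < golfRounds ℓ := by
  linarith [two_mul_le_golfRounds ℓ]

lemma golfRounds_mul_golfRate (hℓ : 10 ^ 6 ≤ ℓ) : golfRounds ℓ * golfRate ℓ = 2 * 10 ^ 5 :=
  mul_div_cancel₀ _ (golfRounds_pos hℓ).ne'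

lemma div_le_golfRate (hℓ : 10 ^ 6 ≤ ℓ) : 60000 / ℓ ≤ golfRate ℓ := by
  rw [golfRate, div_le_div_iff₀ (by linarith) (golfRounds_pos hℓ)]
  linarith [golfRounds_le hℓ]

lemma golfRate_pos (hℓ : 10 ^ 6 ≤ ℓ) : 0 < golfRate ℓ :=
  div_pos (by norm_num) (golfRounds_pos hℓ)

lemma golfRate_le_half (hℓ : 10 ^ 6 ≤ ℓ) : golfRate ℓ ≤ 1 / 2 := by
  rw [golfRate, div_le_iff₀ (golfRounds_pos hℓ)]
  linarith [two_mul_le_golfRounds ℓ]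

lemma exp_neg_two_mul_le_one_sub {q : ℝ} (hq0 : 0 ≤ q) (hq : q ≤ 1 / 2) :
    Real.exp (-(2 * q)) ≤ 1 - q := by
  rw [Real.exp_neg]
  refine inv_le_of_inv_le₀ (by linarith) (le_trans ?_ (Real.add_one_le_exp _))
  rw [inv_le_iff_one_le_mul₀ (by linarith)]
  nlinarith

lemma exp_neg_le_supportRate (hℓ : 10 ^ 6 ≤ ℓ) : Real.exp (-(4 * 10 ^ 5)) ≤ supportRate ℓ := by
  have hpow := pow_le_pow_left₀ (Real.exp_pos _).le
    (exp_neg_two_mul_le_one_sub (golfRate_pos hℓ).le (golfRate_le_half hℓ)) (golfRounds ℓ)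
  rw [← Real.exp_nat_mul] at hpow
  exact le_of_eq_of_le (congrArg _ (by linarith [golfRounds_mul_golfRate hℓ])) hpow

lemma supportRate_le_exp_neg (hℓ : 10 ^ 6 ≤ ℓ) : supportRate ℓ ≤ Real.exp (-(2 * 10 ^ 5)) := by
  have hpow := pow_le_pow_left₀ (by linarith [golfRate_le_half hℓ])
    (Real.one_sub_le_exp_neg (golfRate ℓ)) (golfRounds ℓ)
  rw [← Real.exp_nat_mul] at hpow
  exact hpow.trans_eq (congrArg _ (by linarith [golfRounds_mul_golfRate hℓ]))

lemma supportRate_mem_unitInterval (hℓ : 10 ^ 6 ≤ ℓ) : supportRate ℓ ∈ unitInterval :=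
  ⟨(Real.exp_pos _).le.trans (exp_neg_le_supportRate hℓ),
    (supportRate_le_exp_neg hℓ).trans (Real.exp_le_one_iff.2 (by norm_num))⟩

lemma exp_neg_le_inv {a : ℝ} (ha : 0 < a) : Real.exp (-a) ≤ a⁻¹ := by
  rw [Real.exp_neg]
  exact inv_anti₀ ha (by linarith [Real.add_one_le_exp a])

lemma supportRate_mul_exp_le (hℓ : 10 ^ 6 ≤ ℓ) :
    supportRate ℓ * Real.exp (10 ^ 5) ≤ 2 / 10 ^ 5 :=
  calc supportRate ℓ * Real.exp (10 ^ 5)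
      ≤ Real.exp (-(2 * 10 ^ 5)) * Real.exp (10 ^ 5) :=
        mul_le_mul_of_nonneg_right (supportRate_le_exp_neg hℓ) (Real.exp_pos _).le
    _ = Real.exp (-10 ^ 5) := by rw [← Real.exp_add]; norm_num
    _ ≤ (10 ^ 5)⁻¹ := exp_neg_le_inv (by norm_num)
    _ ≤ 2 / 10 ^ 5 := by norm_num

lemma four_mul_supportRate_le (hℓ : 10 ^ 6 ≤ ℓ) : 4 * supportRate ℓ ≤ Real.exp (-1) / 1000 := by
  have := (supportRate_le_exp_neg hℓ).trans (exp_neg_le_inv (by norm_num))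
  linarith [Real.exp_neg_one_gt_d9]

lemma coherenceBound_pos (hℓ : 10 ^ 6 ≤ ℓ) : 0 < coherenceBound ℓ := by
  have : 0 < ℓ := by linarith
  rw [coherenceBound]
  positivity

lemma coherenceBound_mul (hℓ : 10 ^ 6 ≤ ℓ) : coherenceBound ℓ * ℓ = 1 / (50000 * ℓ) := by
  have : ℓ ≠ 0 := by linarith
  rw [coherenceBound]
  field_simp

lemma coherenceBound_mul_le (hℓ : 10 ^ 6 ≤ ℓ) : coherenceBound ℓ * ℓ ≤ 1 / 10 ^ 6 := by
  rw [coherenceBound_mul hℓ]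
  exact one_div_le_one_div_of_le (by norm_num) (by linarith)

end Parameters

/-! ### Failure probability of the dual certificate -/

section Failure

lemma exp_neg_le_inv_pow {x c : ℝ} (hx : 0 < x) (j : ℕ) (hc : j * Real.log x ≤ c) :
    Real.exp (-c) ≤ (x ^ j)⁻¹ := by
  rw [← Real.exp_log (pow_pos hx j), ← Real.exp_neg, Real.log_pow]
  exact Real.exp_le_exp.2 (neg_le_neg hc)

lemma eleven_mul_log_le {x : ℝ} (hx : 0 < x) (hℓ : 10 ^ 6 ≤ Real.log x) :
    11 * Real.log x ≤ x := by
  have hquad := Real.quadratic_le_exp_of_nonneg (x := Real.log x) (by linarith)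
  rw [Real.exp_log hx] at hquad
  nlinarith

variable {m n r : Type*} [Fintype m] [Fintype n]

lemma card_mul_card_le_sq (hmn : Fintype.card n ≤ Fintype.card m) :
    (Fintype.card m * Fintype.card n : ℝ) ≤ Fintype.card m ^ 2 := by
  rw [sq]
  exact mul_le_mul_of_nonneg_left (Nat.cast_le.2 hmn) (Nat.cast_nonneg _)

lemma thirteen_mul_le_golfRate_mul_div {ℓ : ℝ} (hℓ : 10 ^ 6 ≤ ℓ) :
    13 * ℓ ≤ golfRate ℓ * Real.exp (-1) ^ 2 / (4 * coherenceBound ℓ) := by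
  have : 0 < ℓ := by linarith
  rw [le_div_iff₀ (by linarith [coherenceBound_pos hℓ])]
  have hexp : 1 / 9 ≤ Real.exp (-1) ^ 2 := by nlinarith [Real.exp_neg_one_gt_d9]
  calc 13 * ℓ * (4 * coherenceBound ℓ) = 52 * (coherenceBound ℓ * ℓ) := by ring
    _ = 52 / 50000 / ℓ := by rw [coherenceBound_mul hℓ]; field_simp
    _ ≤ 60000 * (1 / 9) / ℓ := by gcongr; norm_num
    _ = 60000 / ℓ * (1 / 9) := by ring
    _ ≤ golfRate ℓ * Real.exp (-1) ^ 2 :=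
        mul_le_mul (div_le_golfRate hℓ) hexp (by norm_num) (golfRate_pos hℓ).le

section Bounds

variable [Nonempty m] {ℓ : ℝ}

lemma golfRounds_mul_golfFailure_le (hmn : Fintype.card n ≤ Fintype.card m)
    (hℓ : ℓ = Real.log (Fintype.card m)) (hℓ6 : 10 ^ 6 ≤ ℓ) :
    golfRounds ℓ * golfFailure m n (golfRate ℓ) (Real.exp (-1)) (coherenceBound ℓ)
      ≤ 3 * ((Fintype.card m : ℝ) ^ 10)⁻¹ := by
  have hN : (0 : ℝ) < Fintype.card m := Nat.cast_pos.2 Fintype.card_pos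
  have hℓN : 11 * ℓ ≤ Fintype.card m := hℓ ▸ eleven_mul_log_le hN (hℓ ▸ hℓ6)
  have hentry := exp_neg_le_inv_pow hN 13
    (c := golfRate ℓ * Real.exp (-1) ^ 2 / (4 * coherenceBound ℓ))
    (by rw [← hℓ]; exact_mod_cast thirteen_mul_le_golfRate_mul_div hℓ6)
  have hnorm := exp_neg_le_inv_pow hN 11 (c := 6 * Fintype.card m)
    (by rw [← hℓ]; push_cast; linarith)
  calc golfRounds ℓ * golfFailure m n (golfRate ℓ) (Real.exp (-1)) (coherenceBound ℓ)
      ≤ Fintype.card m * (2 * (Fintype.card m : ℝ) ^ 2 * ((Fintype.card m : ℝ) ^ 13)⁻¹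
          + ((Fintype.card m : ℝ) ^ 11)⁻¹) := by
        refine mul_le_mul (by linarith [golfRounds_le hℓ6]) (add_le_add ?_ hnorm)
          (by rw [golfFailure]; positivity) hN.le
        exact mul_le_mul (mul_le_mul_of_nonneg_left (card_mul_card_le_sq hmn) two_pos.le) hentry
          (Real.exp_pos _).le (by positivity)
    _ = 3 * ((Fintype.card m : ℝ) ^ 10)⁻¹ := by field_simp; norm_num

lemma signFailure_le (hmn : Fintype.card n ≤ Fintype.card m)
    (hℓ : ℓ = Real.log (Fintype.card m)) (hℓ6 : 10 ^ 6 ≤ ℓ) :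
    signFailure m n (coherenceBound ℓ) ≤ 4 * ((Fintype.card m : ℝ) ^ 10)⁻¹ := by
  have hN : (0 : ℝ) < Fintype.card m := Nat.cast_pos.2 Fintype.card_pos
  have hℓN : 11 * ℓ ≤ Fintype.card m := hℓ ▸ eleven_mul_log_le hN (hℓ ▸ hℓ6)
  have hcoh : 12 * ℓ ≤ 1 / (128 * coherenceBound ℓ) := by
    rw [le_div_iff₀ (by linarith [coherenceBound_pos hℓ6])]
    linarith [coherenceBound_mul_le hℓ6]
  have hentry := exp_neg_le_inv_pow hN 12 (c := 1 / (128 * coherenceBound ℓ))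
    (by rw [← hℓ]; exact_mod_cast hcoh)
  have hnorm := exp_neg_le_inv_pow hN 10 (c := Fintype.card m)
    (by rw [← hℓ]; push_cast; linarith)
  calc signFailure m n (coherenceBound ℓ)
      ≤ 2 * ((Fintype.card m : ℝ) ^ 10)⁻¹
          + 2 * (Fintype.card m : ℝ) ^ 2 * ((Fintype.card m : ℝ) ^ 12)⁻¹ := by
        refine add_le_add (mul_le_mul_of_nonneg_left hnorm two_pos.le) ?_
        exact mul_le_mul (mul_le_mul_of_nonneg_left (card_mul_card_le_sq hmn) two_pos.le) hentry
          (Real.exp_pos _).le (by positivity)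
    _ = 4 * ((Fintype.card m : ℝ) ^ 10)⁻¹ := by field_simp; norm_num

lemma prob_exists_lt_compress_le_inv_pow [DecidableEq m] [DecidableEq n]
    (hmn : Fintype.card n ≤ Fintype.card m) (hℓ : ℓ = Real.log (Fintype.card m))
    (hℓ6 : 10 ^ 6 ≤ ℓ) {P : Matrix (m × n) (m × n) ℝ} (hP : IsStarProjection P)
    (hμ : ∀ p, P p p ≤ coherenceBound ℓ) :
    prob (bern (supportRate ℓ)) (fun z => ∃ x, 1 / 1000 * (x ⬝ᵥ x) < x ⬝ᵥ compress P z *ᵥ x)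
      ≤ ((Fintype.card m : ℝ) ^ 10)⁻¹ := by
  have hN : (0 : ℝ) < Fintype.card m := Nat.cast_pos.2 Fintype.card_pos
  have hμ0 := coherenceBound_pos hℓ6
  have hμℓ := coherenceBound_mul_le hℓ6
  set K := ⌈12 * ℓ⌉₊
  have hK : 12 * ℓ ≤ K := Nat.le_ceil _
  have hKμ : (K + 1) * coherenceBound ℓ ≤ Real.exp (-1) / 1000 := by
    have hK' : (K : ℝ) < 12 * ℓ + 1 := Nat.ceil_lt_add_one (by linarith)
    nlinarith [Real.exp_neg_one_gt_d9]
  have htrace : P.trace ≤ (Fintype.card m : ℝ) ^ 2 := by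
    refine le_trans ?_ (card_mul_card_le_sq hmn)
    rw [← Nat.cast_mul, ← Fintype.card_prod, ← nsmul_one]
    exact Finset.sum_le_card_nsmul _ _ _ fun p _ => (hμ p).trans (by nlinarith)
  have hexp := exp_neg_le_inv_pow hN 12 (c := K) (by rw [← hℓ]; exact_mod_cast hK)
  calc prob (bern (supportRate ℓ)) (fun z => ∃ x, 1 / 1000 * (x ⬝ᵥ x) < x ⬝ᵥ compress P z *ᵥ x)
      ≤ P.trace * (Real.exp (-1) / 1000 / (1 / 1000)) ^ K :=
        prob_exists_lt_compress_le hP (supportRate_mem_unitInterval hℓ6) hμ hμ0.le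
          (four_mul_supportRate_le hℓ6) (Nat.ceil_pos.2 (by linarith)) hKμ (by norm_num)
    _ = P.trace * Real.exp (-K) := by
        rw [div_div_div_cancel_right₀ (by norm_num), div_one, ← Real.exp_nat_mul, mul_neg_one]
    _ ≤ (Fintype.card m : ℝ) ^ 2 * ((Fintype.card m : ℝ) ^ 12)⁻¹ :=
        mul_le_mul htrace hexp (Real.exp_pos _).le (by positivity)
    _ = ((Fintype.card m : ℝ) ^ 10)⁻¹ := by field_simp

lemma sqrt_card_mul_exp_neg_one_pow_le (hmn : Fintype.card n ≤ Fintype.card m)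
    (hℓ : ℓ = Real.log (Fintype.card m)) (hℓ6 : 10 ^ 6 ≤ ℓ) :
    √(Fintype.card m * Fintype.card n) * (Real.exp (-1) ^ golfRounds ℓ * ℓ⁻¹) ≤ 1 / 100 := by
  have hN : (0 : ℝ) < Fintype.card m := Nat.cast_pos.2 Fintype.card_pos
  have hsqrt : √(Fintype.card m * Fintype.card n) ≤ Fintype.card m :=
    Real.sqrt_le_iff.2 ⟨hN.le, card_mul_card_le_sq hmn⟩
  have hexp : Real.exp (-1) ^ golfRounds ℓ ≤ (Fintype.card m : ℝ)⁻¹ := by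
    rw [← Real.exp_nat_mul, mul_neg_one, ← pow_one (Fintype.card m : ℝ)]
    refine exp_neg_le_inv_pow hN 1 ?_
    rw [← hℓ, Nat.cast_one]
    linarith [two_mul_le_golfRounds ℓ]
  have hinv : ℓ⁻¹ ≤ 1 / 100 := by
    rw [inv_eq_one_div]
    exact one_div_le_one_div_of_le (by norm_num) (by linarith)
  calc √(Fintype.card m * Fintype.card n) * (Real.exp (-1) ^ golfRounds ℓ * ℓ⁻¹)
      ≤ Fintype.card m * ((Fintype.card m : ℝ)⁻¹ * (1 / 100)) := by gcongr
    _ = 1 / 100 := by rw [mul_inv_cancel_left₀ hN.ne']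

end Bounds

theorem prob_not_dualCert_le_inv_pow [Nonempty m] [DecidableEq m] [DecidableEq n] [Fintype r]
    [DecidableEq r] {ℓ : ℝ} (hmn : Fintype.card n ≤ Fintype.card m)
    (hℓ : ℓ = Real.log (Fintype.card m)) (hℓ6 : 10 ^ 6 ≤ ℓ)
    {U : Matrix m r ℝ} {V : Matrix n r ℝ} (hU : Uᵀ * U = 1) (hV : Vᵀ * V = 1)
    (hμ : ∀ p, tproj U V p p ≤ coherenceBound ℓ)
    (hUV : ∀ p, |unvec.symm (U * Vᵀ) p| ≤ ℓ⁻¹ * (√(Fintype.card m))⁻¹) :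
    prob (sparseSignLaw (supportRate ℓ)) (fun ω => ¬ DualCert U V (√(Fintype.card m))⁻¹ ω.1 ω.2)
      ≤ 9 * ((Fintype.card m : ℝ) ^ 10)⁻¹ := by
  have hrate : 208 * ℓ⁻¹ ≤ golfRate ℓ := by
    refine le_trans ?_ (div_le_golfRate hℓ6)
    rw [← div_eq_mul_inv]
    exact div_le_div_of_nonneg_right (by norm_num) (by linarith)
  have hfail := prob_not_dualCert_le hmn hU hV (coherenceBound_pos hℓ6) hμ (golfRate_pos hℓ6)
    (by linarith [golfRate_le_half hℓ6]) (Real.exp_pos _) (by linarith [Real.exp_neg_one_lt_d9])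
    (inv_pos.2 (by linarith)) hrate (sqrt_card_mul_exp_neg_one_pow_le hmn hℓ hℓ6) hUV
    (supportRate_mul_exp_le hℓ6)
  rw [← supportRate] at hfail
  linarith [golfRounds_mul_golfFailure_le hmn hℓ hℓ6, signFailure_le hmn hℓ hℓ6,
    prob_exists_lt_compress_le_inv_pow hmn hℓ hℓ6 (tproj_isStarProjection hU hV) hμ]

end Failure

/-! ### The random sparsity model -/

section Model

variable {n1 n2 r m : ℕ} {ν ℓ : ℝ} {U : Matrix (Fin n1) (Fin r) ℝ} {V : Matrix (Fin n2) (Fin r) ℝ}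

lemma incoherence_le (hn2 : 0 < n2) (hν : 0 < ν)
    (hr : (r : ℝ) ≤ 1 / 100000 * n2 * ν⁻¹ * (ℓ ^ 2)⁻¹) : ν * r / n2 ≤ (100000 * ℓ ^ 2)⁻¹ := by
  have hn2' : (0 : ℝ) < n2 := Nat.cast_pos.2 hn2
  rw [div_le_iff₀ hn2']
  calc ν * r ≤ ν * (1 / 100000 * n2 * ν⁻¹ * (ℓ ^ 2)⁻¹) := mul_le_mul_of_nonneg_left hr hν.le
    _ = (100000 * ℓ ^ 2)⁻¹ * n2 := by field_simp

lemma tproj_apply_self_le_coherenceBound (hn2 : 0 < n2) (hn : n2 ≤ n1) (hν : 0 < ν)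
    (hUi : ∀ i, ∑ k, U i k ^ 2 ≤ ν * r / n1) (hVj : ∀ j, ∑ k, V j k ^ 2 ≤ ν * r / n2)
    (hinc : ν * r / n2 ≤ (100000 * ℓ ^ 2)⁻¹) (p : Fin n1 × Fin n2) :
    tproj U V p p ≤ coherenceBound ℓ := by
  have hinc1 : ν * r / n1 ≤ (100000 * ℓ ^ 2)⁻¹ :=
    (div_le_div_of_nonneg_left (by positivity) (Nat.cast_pos.2 hn2) (Nat.cast_le.2 hn)).trans hinc
  refine (tproj_apply_self_le (fun i => (hUi i).trans hinc1) (fun j => (hVj j).trans hinc)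
    p).trans_eq ?_
  rw [coherenceBound, mul_inv, one_div, mul_inv]
  ring

lemma abs_mul_transpose_apply_le (hℓ : 0 < ℓ)
    (hUV : ∀ i j, |∑ k, U i k * V j k| ≤ √(ν * r / (n1 * n2)))
    (hinc : ν * r / n2 ≤ (100000 * ℓ ^ 2)⁻¹) (p : Fin n1 × Fin n2) :
    |unvec.symm (U * Vᵀ) p| ≤ ℓ⁻¹ * (√n1)⁻¹ := by
  refine (hUV p.1 p.2).trans (Real.sqrt_le_iff.2 ⟨by positivity, ?_⟩)
  rw [mul_pow, inv_pow, inv_pow, Real.sq_sqrt (Nat.cast_nonneg _), mul_comm (n1 : ℝ), ← div_div,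
    div_eq_mul_inv _ (n1 : ℝ)]
  refine mul_le_mul_of_nonneg_right (hinc.trans ?_) (by positivity)
  exact inv_anti₀ (by positivity) (by nlinarith [sq_nonneg ℓ])

theorem one_sub_le_unifProb_exists_dualCert (hn2 : 0 < n2) (hn : n2 ≤ n1) (hU : Uᵀ * U = 1)
    (hV : Vᵀ * V = 1) (hℓ : 10 ^ 6 ≤ Real.log n1)
    (hμ : ∀ p, tproj U V p p ≤ coherenceBound (Real.log n1))
    (hUV : ∀ p, |unvec.symm (U * Vᵀ) p| ≤ (Real.log n1)⁻¹ * (√n1)⁻¹)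
    (hm : (m : ℝ) ≤ Real.exp (-(4 * 10 ^ 5)) / 2 * n1 * n2) :
    1 - 18 * ((n1 : ℝ) ^ 10)⁻¹ ≤ unifProb fun ω : SampleSpace n1 n2 m =>
      ∃ z, (∀ p ∈ ω.1.1, z p = true) ∧ DualCert U V (√n1)⁻¹ z ω.2 := by
  have hn1 : 0 < n1 := hn2.trans_le hn
  have : Nonempty (Fin n1) := ⟨⟨0, hn1⟩⟩
  have hcard : (Fintype.card (Fin n1 × Fin n2) : ℝ) = n1 * n2 := by simp
  have hfail := prob_not_dualCert_le_inv_pow (m := Fin n1) (n := Fin n2) (by simpa using hn)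
    (by rw [Fintype.card_fin]) hℓ hU hV hμ (by simpa only [Fintype.card_fin] using hUV)
  simp only [Fintype.card_fin] at hfail
  have hrate := exp_neg_le_supportRate hℓ
  have hrate_mul := mul_le_mul_of_nonneg_right hrate (Nat.cast_nonneg (α := ℝ) (n1 * n2))
  rw [Nat.cast_mul] at hrate_mul
  have hten : 10 ≤ Real.exp (-(4 * 10 ^ 5)) * (n1 * n2) := by
    have hexp := Real.add_one_le_exp (-(4 * 10 ^ 5) + Real.log n1)
    rw [Real.exp_add, Real.exp_log (Nat.cast_pos.2 hn1)] at hexp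
    have hn2' : (1 : ℝ) ≤ n2 := Nat.one_le_cast.2 hn2
    rw [← mul_assoc]
    nlinarith
  refine le_trans (by linarith) (one_sub_two_mul_prob_le_unifProb (C := DualCert U V (√n1)⁻¹)
    (supportRate_mem_unitInterval hℓ) ?_ ?_ fun ω z hz hC => ⟨z, hz, hC⟩)
  · calc (m : ℝ) ≤ Real.exp (-(4 * 10 ^ 5)) / 2 * n1 * n2 := hm
      _ = Real.exp (-(4 * 10 ^ 5)) * (n1 * n2) / 2 := by ring
      _ ≤ supportRate (Real.log n1) * Fintype.card (Fin n1 × Fin n2) / 2 := by rw [hcard]; gcongr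
  · rw [hcard]
    linarith

lemma abs_sparseOf {a : Fin n1 × Fin n2 → ℝ} (ha : ∀ p, 0 < a p) (ω : SampleSpace n1 n2 m)
    (p : Fin n1 × Fin n2) : |unvec.symm (sparseOf a ω) p|
      = boolSign (ω.2 p) * unvec.symm (sparseOf a ω) p := by
  simp only [unvec_symm_apply, sparseOf, of_apply, boolSign]
  split_ifs <;> simp [abs_of_pos (ha p)]

lemma sparseOf_apply_of_notMem (a : Fin n1 × Fin n2 → ℝ) (ω : SampleSpace n1 n2 m)
    {p : Fin n1 × Fin n2} (hp : p ∉ ω.1.1) : unvec.symm (sparseOf a ω) p = 0 :=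
  if_neg hp

theorem pairDist_le_of_exists_dualCert {σ : Fin r → ℝ} {a : Fin n1 × Fin n2 → ℝ}
    (hn2 : 0 < n2) (hn1 : 10 ^ 6 ≤ Real.log n1) (hU : Uᵀ * U = 1) (hV : Vᵀ * V = 1)
    (hσ : ∀ k, 0 ≤ σ k) (ha : ∀ p, 0 < a p) {ω : SampleSpace n1 n2 m}
    (hcert : ∃ z, (∀ p ∈ ω.1.1, z p = true) ∧ DualCert U V (√n1)⁻¹ z ω.2) {δ : ℝ}
    {Z0 Lh Sh : Matrix (Fin n1) (Fin n2) ℝ} (hδ : 0 ≤ δ) (hδZ : δ ≤ frob Z0)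
    (hmin : IsStablePCPMin (U * diagonal σ * Vᵀ + sparseOf a ω + Z0) (√n1)⁻¹ δ Lh Sh) :
    pairDist Lh Sh (U * diagonal σ * Vᵀ) (sparseOf a ω) ≤ √(720 * n1 * n2) * frob Z0 := by
  obtain ⟨z, hz, hC⟩ := hcert
  have hn1_large : (10000 : ℝ) ≤ n1 := by
    linarith [Real.log_le_self (Nat.cast_nonneg (α := ℝ) n1)]
  have hsqrt : (100 : ℝ) ≤ √n1 := Real.le_sqrt_of_sq_le (by linarith)
  refine pairDist_le_of_isStablePCPMin hU hV hσ (inv_pos.2 (by linarith)) ?_ ?_ hC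
    (abs_sparseOf ha ω) (fun p hp => sparseOf_apply_of_notMem a ω fun h => ?_) hδ hδZ hmin
  · rw [inv_eq_one_div]
    exact one_div_le_one_div_of_le (by norm_num) hsqrt
  · exact (Nat.cast_le.1 hn1_large).trans (Nat.le_mul_of_pos_right n1 hn2)
  · exact Bool.false_ne_true (hp.symm.trans (hz p h))

lemma one_sub_mul_inv_pow_nonpos {x c : ℝ} (hx : 0 < x) (hlog : Real.log x ≤ 10 ^ 6)
    (hc : Real.exp (10 ^ 7) ≤ c) : 1 - c * (x ^ 10)⁻¹ ≤ 0 := by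
  have hpow : x ^ 10 ≤ Real.exp (10 ^ 7) := by
    rw [← Real.exp_log (pow_pos hx 10), Real.log_pow]
    exact Real.exp_le_exp.2 (by push_cast; linarith)
  rw [sub_nonpos, ← div_eq_mul_inv, one_le_div (pow_pos hx 10)]
  exact hpow.trans hc

end Model

end StablePCP

/-- StablePCP_c(δ) with λ = 1/√n1 recovers (L0, S0) with error
√(720·n1·n2 + 2)·‖Z0‖_F for every δ ≥ 0 and noise Z0 with ‖Z0‖_F ≥ δ,
with probability ≥ 1 − c′·n1⁻¹⁰ over the random support and signs. -/
theorem stablePCP_recovery_large_noise :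
    ∃ ρr' ρs' c' : ℝ, 0 < ρr' ∧ 0 < ρs' ∧ 0 < c' ∧
      ∀ (n1 n2 r m : ℕ) (ν : ℝ), 0 < n2 → n2 ≤ n1 → 0 < ν →
        ∀ (U : Matrix (Fin n1) (Fin r) ℝ) (V : Matrix (Fin n2) (Fin r) ℝ)
          (σ : Fin r → ℝ) (a : Fin n1 × Fin n2 → ℝ),
          Uᵀ * U = 1 → Vᵀ * V = 1 → (∀ k, 0 < σ k) → (∀ p, 0 < a p) →
          (∀ i : Fin n1, (∑ k, U i k ^ 2) ≤ ν * r / n1) →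
          (∀ j : Fin n2, (∑ k, V j k ^ 2) ≤ ν * r / n2) →
          (∀ i j, |∑ k, U i k * V j k| ≤ Real.sqrt (ν * r / (n1 * n2))) →
          (r : ℝ) ≤ ρr' * n2 * ν⁻¹ * ((Real.log n1) ^ 2)⁻¹ →
          (m : ℝ) ≤ ρs' * n1 * n2 →
          1 - c' * ((n1 : ℝ) ^ 10)⁻¹ ≤
            unifProb (fun ω : SampleSpace n1 n2 m =>
              ∀ (δ : ℝ) (Z0 : Matrix (Fin n1) (Fin n2) ℝ), 0 ≤ δ → δ ≤ frob Z0 →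
                ∀ Lh Sh : Matrix (Fin n1) (Fin n2) ℝ,
                  IsStablePCPMin (U * Matrix.diagonal σ * Vᵀ + sparseOf a ω + Z0)
                      (Real.sqrt n1)⁻¹ δ Lh Sh →
                    pairDist Lh Sh (U * Matrix.diagonal σ * Vᵀ) (sparseOf a ω) ≤
                      Real.sqrt (720 * (n1 : ℝ) * n2 + 2) * frob Z0) := by
  refine ⟨1 / 100000, Real.exp (-(4 * 10 ^ 5)) / 2, Real.exp (10 ^ 7) + 18, by norm_num,
    by positivity, by positivity, ?_⟩
  intro n1 n2 r m ν hn2 hn hν U V σ a hU hV hσ ha hUi hVj hUV hr hm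
  rcases le_total (Real.log n1) (10 ^ 6) with hsmall | hlarge
  · exact (StablePCP.one_sub_mul_inv_pow_nonpos (Nat.cast_pos.2 (hn2.trans_le hn)) hsmall
      (by linarith)).trans (StablePCP.unifProb_nonneg _)
  have hinc := StablePCP.incoherence_le hn2 hν hr
  have hμ := StablePCP.tproj_apply_self_le_coherenceBound hn2 hn hν hUi hVj hinc
  have hUV' := StablePCP.abs_mul_transpose_apply_le (by linarith) hUV hinc
  calc 1 - (Real.exp (10 ^ 7) + 18) * ((n1 : ℝ) ^ 10)⁻¹
      ≤ 1 - 18 * ((n1 : ℝ) ^ 10)⁻¹ := by gcongr; linarith [Real.exp_pos (10 ^ 7)]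
    _ ≤ _ := StablePCP.one_sub_le_unifProb_exists_dualCert hn2 hn hU hV hlarge hμ hUV' hm
    _ ≤ _ := StablePCP.unifProb_mono fun ω hcert δ Z0 hδ hδZ Lh Sh hmin =>
        (StablePCP.pairDist_le_of_exists_dualCert hn2 hlarge hU hV (fun k => (hσ k).le) ha hcert
          hδ hδZ hmin).trans (mul_le_mul_of_nonneg_right (Real.sqrt_le_sqrt (by linarith))
            (Real.sqrt_nonneg _))
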